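/- Let f : ℝ → ℝ be a smooth function such that f' is surjective and nowhere flat. For every A ∈ SL(2,ℝ) and every α > 0 for which the first row of A satisfies (A₁₁, A₁₂) = r·(cos α, sin α) for some r > 0, the set L = { u : u is a continuous 2π-periodic function ℝ → ℝ, u is not constant, Φ_{f'∘u}(2π) = A and θ_{f'∘u}(2π) = α }, equipped with the topology induced by the sup norm on continuous 2π-periodic functions, is nonempty and contractible. -/

import Mathlib

open Real Set Matrix

/-- A smooth function is nowhere flat if some derivative of order `r' ≤ r` (for a
uniform `r`) is nonzero at every point. -/
def NowhereFlat (g : ℝ → ℝ) : Prop :=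
  ∃ r : ℕ, 0 < r ∧ ∀ x : ℝ, ∃ r' : ℕ, 0 < r' ∧ r' ≤ r ∧ iteratedDeriv r' g x ≠ 0

/-- `Φ` is the fundamental matrix of the potential `q`: `Φ(0) = I` and
`Φ' = [[0,1],[q,0]]·Φ`. -/
def IsFundMatrix (q : ℝ → ℝ) (Φ : ℝ → Matrix (Fin 2) (Fin 2) ℝ) : Prop :=
  Φ 0 = 1 ∧
    ∀ t : ℝ, ∀ i j, HasDerivAt (fun s => Φ s i j) ((!![0, 1; q t, 0] * Φ t) i j) t

/-- `θ` is the continuous argument lift on `[0,2π]` of the first row of `Φ`. -/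
def IsArgLift (Φ : ℝ → Matrix (Fin 2) (Fin 2) ℝ) (θ : ℝ → ℝ) : Prop :=
  ContinuousOn θ (Icc 0 (2 * π)) ∧ θ 0 = 0 ∧
    ∀ t ∈ Icc (0:ℝ) (2 * π),
      Φ t 0 0 = Real.sqrt ((Φ t 0 0) ^ 2 + (Φ t 0 1) ^ 2) * Real.cos (θ t) ∧
      Φ t 0 1 = Real.sqrt ((Φ t 0 0) ^ 2 + (Φ t 0 1) ^ 2) * Real.sin (θ t)

/-- The level set of the nonlinear monodromy map `μ_f` over the element of `G₀` encoded
by `(A, α)`, inside the space of (bounded) continuous `2π`-periodic real functions with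
the sup norm, intersected with the nonconstant functions. -/
def levelSet (f : ℝ → ℝ) (A : Matrix (Fin 2) (Fin 2) ℝ) (α : ℝ) :
    Set (BoundedContinuousFunction ℝ ℝ) :=
  {u | Function.Periodic ⇑u (2 * π) ∧ (¬ ∃ c : ℝ, ⇑u = fun _ => c) ∧
    ∃ Φ : ℝ → Matrix (Fin 2) (Fin 2) ℝ, ∃ θ : ℝ → ℝ,
      IsFundMatrix (fun t => deriv f (u t)) Φ ∧ IsArgLift Φ θ ∧
      Φ (2 * π) = A ∧ θ (2 * π) = α}

namespace Mono
open Filter Topology MeasureTheory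

noncomputable section

/-- Picard series terms -/
def Yn (q : ℝ → ℝ) (c : ℝ × ℝ) : ℕ → ℝ → ℝ × ℝ
  | 0, _ => c
  | n+1, t => ∫ τ in (0:ℝ)..t, ((Yn q c n τ).2, q τ * (Yn q c n τ).1)

def sol (q : ℝ → ℝ) (c : ℝ × ℝ) (t : ℝ) : ℝ × ℝ := ∑' n, Yn q c n t

lemma Yn_cont {X : Type*} [TopologicalSpace X] [FirstCountableTopology X] (q : X → ℝ → ℝ)
    (hq : Continuous (Function.uncurry q)) (c : ℝ × ℝ) (n : ℕ) :
    Continuous (fun z : X × ℝ => Yn (q z.1) c n z.2) := by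
  induction n with
  | zero => simp only [Yn]; exact continuous_const
  | succ n ih =>
    simp only [Yn]
    have hq' : Continuous fun z : X × ℝ => q z.1 z.2 := hq
    have key : Continuous (Function.uncurry
        (fun (z : X × ℝ) (τ : ℝ) => ((Yn (q z.1) c n τ).2, q z.1 τ * (Yn (q z.1) c n τ).1))) := by
      have h1 : Continuous fun w : (X × ℝ) × ℝ => Yn (q w.1.1) c n w.2 :=
        ih.comp (f := fun w : (X × ℝ) × ℝ => (w.1.1, w.2)) (by fun_prop)
      have h2 : Continuous fun w : (X × ℝ) × ℝ => q w.1.1 w.2 :=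
        hq'.comp (f := fun w : (X × ℝ) × ℝ => (w.1.1, w.2)) (by fun_prop)
      exact h1.snd.prodMk (h2.mul h1.fst)
    exact intervalIntegral.continuous_parametric_intervalIntegral_of_continuous key continuous_snd

lemma Yn_cont1 {q : ℝ → ℝ} (hq : Continuous q) (c : ℝ × ℝ) (n : ℕ) :
    Continuous (Yn q c n) := by
  have := Yn_cont (X := Unit) (fun _ => q) (hq.comp continuous_snd) c n
  exact this.comp (f := fun t : ℝ => ((), t)) (by fun_prop)

lemma Yn_bound {q : ℝ → ℝ} (hq : Continuous q) (c : ℝ × ℝ) {K M : ℝ} (hK : 1 ≤ K)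
    (hM : ∀ t, |t| ≤ M → |q t| ≤ K) (n : ℕ) :
    ∀ t, |t| ≤ M → ‖Yn q c n t‖ ≤ ‖c‖ * (K ^ n * |t| ^ n / n.factorial) := by
  induction n with
  | zero => intro t _; simp [Yn]
  | succ n ih =>
    intro t ht
    simp only [Yn]
    have hcY := Yn_cont1 hq c n
    have hc : Continuous fun τ => ((Yn q c n τ).2, q τ * (Yn q c n τ).1) := by fun_prop
    have hsub : ∀ τ ∈ uIoc (0:ℝ) t, |τ| ≤ M := by
      intro τ hτ
      refine le_trans ?_ ht
      rcases le_total 0 t with h | h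
      · rw [uIoc_of_le h] at hτ
        rw [abs_of_pos hτ.1, abs_of_nonneg h]; exact hτ.2
      · rw [uIoc_of_ge h] at hτ
        rw [abs_of_nonpos hτ.2, abs_of_nonpos h]; linarith [hτ.1]
    calc ‖∫ τ in (0:ℝ)..t, ((Yn q c n τ).2, q τ * (Yn q c n τ).1)‖
        ≤ ∫ τ in uIoc 0 t, ‖((Yn q c n τ).2, q τ * (Yn q c n τ).1)‖ :=
          intervalIntegral.norm_integral_le_integral_norm_uIoc
      _ ≤ ∫ τ in uIoc 0 t, K * (‖c‖ * (K ^ n / n.factorial)) * |τ - 0| ^ n := by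
          apply setIntegral_mono_on
          · have := hc.norm.intervalIntegrable (μ := volume) 0 t
            exact intervalIntegrable_iff.1 this
          · have : Continuous fun τ : ℝ => K * (‖c‖ * (K ^ n / n.factorial)) * |τ - 0| ^ n := by
              fun_prop
            exact intervalIntegrable_iff.1 (this.intervalIntegrable (μ := volume) 0 t)
          · exact measurableSet_uIoc
          · intro τ hτ
            have h1 := ih τ (hsub τ hτ)
            have h2 := hM τ (hsub τ hτ)
            have e1 : ‖(Yn q c n τ).2‖ ≤ ‖Yn q c n τ‖ := norm_snd_le _
            have e2 : ‖(Yn q c n τ).1‖ ≤ ‖Yn q c n τ‖ := norm_fst_le _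
            have e3 : ‖((Yn q c n τ).2, q τ * (Yn q c n τ).1)‖ ≤ K * ‖Yn q c n τ‖ := by
              rw [Prod.norm_def]
              apply max_le
              · refine e1.trans ?_
                nlinarith [norm_nonneg (Yn q c n τ)]
              · rw [norm_mul]
                exact mul_le_mul h2 e2 (norm_nonneg _) (by linarith)
            refine e3.trans ?_
            rw [sub_zero]
            calc K * ‖Yn q c n τ‖ ≤ K * (‖c‖ * (K ^ n * |τ| ^ n / n.factorial)) := by gcongr
              _ = _ := by ring
      _ = ‖c‖ * (K ^ (n+1) * |t| ^ (n+1) / (n+1).factorial) := by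
          rw [integral_const_mul, integral_pow_abs_sub_uIoc, Nat.factorial_succ, sub_zero]
          push_cast
          field_simp
          ring

lemma q_locbound {X : Type*} [TopologicalSpace X] (q : X → ℝ → ℝ)
    (hq : Continuous (Function.uncurry q)) (x0 : X) (M : ℝ) :
    ∃ K, 1 ≤ K ∧ ∀ᶠ x in 𝓝 x0, ∀ t, |t| ≤ M → |q x t| ≤ K := by
  have hcomp : IsCompact (Icc (-M) M) := isCompact_Icc
  obtain ⟨K, hK⟩ := (hcomp.image (f := fun t => |q x0 t|)
    ((hq.comp (f := fun t : ℝ => (x0, t)) (by fun_prop)).abs)).bddAbove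
  refine ⟨max 1 (K+1), le_max_left _ _, ?_⟩
  have : ∀ t ∈ Icc (-M) M, ∀ᶠ z : X × ℝ in 𝓝 x0 ×ˢ 𝓝 t, |q z.1 z.2| < K + 1 := by
    intro t ht
    rw [← nhds_prod_eq]
    have hlt : |q x0 t| < K + 1 := lt_of_le_of_lt (hK ⟨t, ht, rfl⟩) (by linarith)
    exact hq.abs.continuousAt.eventually_lt (continuousAt_const (x := (x0,t))) hlt
  have h2 := hcomp.eventually_forall_of_forall_eventually (x₀ := x0)
    (P := fun x t => |q x t| < K + 1) (by intro t ht; rw [nhds_prod_eq]; exact this t ht)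
  filter_upwards [h2] with x hx t ht
  exact (hx t (abs_le.1 ht)).le.trans (le_max_right _ _)

lemma q_bound {q : ℝ → ℝ} (hq : Continuous q) (M : ℝ) :
    ∃ K, 1 ≤ K ∧ ∀ t, |t| ≤ M → |q t| ≤ K := by
  obtain ⟨K, h1, h2⟩ := q_locbound (X := Unit) (fun _ => q) (hq.comp continuous_snd) () M
  exact ⟨K, h1, h2.self_of_nhds⟩

lemma summ_aux (C K M : ℝ) : Summable fun n : ℕ => C * (K ^ n * M ^ n / n.factorial) := by
  have := (Real.summable_pow_div_factorial (K * M)).mul_left C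
  simpa [mul_pow] using this

lemma Yn_bound' {q : ℝ → ℝ} (hq : Continuous q) (c : ℝ × ℝ) {K M : ℝ} (hK : 1 ≤ K)
    (hM : ∀ t, |t| ≤ M → |q t| ≤ K) (n : ℕ) (t) (ht : |t| ≤ M) :
    ‖Yn q c n t‖ ≤ ‖c‖ * (K ^ n * M ^ n / n.factorial) := by
  refine (Yn_bound hq c hK hM n t ht).trans ?_
  gcongr

lemma sol_cont {X : Type*} [TopologicalSpace X] [FirstCountableTopology X] (q : X → ℝ → ℝ)
    (hq : Continuous (Function.uncurry q)) (c : ℝ × ℝ) :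
    Continuous (fun z : X × ℝ => sol (q z.1) c z.2) := by
  rw [continuous_iff_continuousAt]
  rintro ⟨x0, t0⟩
  obtain ⟨K, hK1, hK⟩ := q_locbound q hq x0 (|t0| + 1)
  have hset : {z : X × ℝ | (∀ t, |t| ≤ |t0| + 1 → |q z.1 t| ≤ K) ∧ |z.2| ≤ |t0| + 1} ∈ 𝓝 (x0, t0) := by
    rw [nhds_prod_eq]
    have h2 : ∀ᶠ t in 𝓝 t0, |t| ≤ |t0| + 1 := by
      have : ∀ᶠ t in 𝓝 t0, |t| < |t0| + 1 :=
        continuous_abs.continuousAt.eventually_lt continuousAt_const (by linarith)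
      exact this.mono fun _ h => h.le
    exact hK.prod_mk h2
  have hcont : ContinuousOn (fun z : X × ℝ => ∑' n, Yn (q z.1) c n z.2)
      {z : X × ℝ | (∀ t, |t| ≤ |t0| + 1 → |q z.1 t| ≤ K) ∧ |z.2| ≤ |t0| + 1} := by
    refine continuousOn_tsum (fun n => (Yn_cont q hq c n).continuousOn)
      (summ_aux ‖c‖ K (|t0|+1)) ?_
    rintro n ⟨x, t⟩ ⟨h1, h2⟩
    exact Yn_bound' (hq.comp (f := fun t : ℝ => (x, t)) (by fun_prop)) c hK1 h1 n t h2
  exact hcont.continuousAt hset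

lemma sol_cont1 {q : ℝ → ℝ} (hq : Continuous q) (c : ℝ × ℝ) : Continuous (sol q c) := by
  have := sol_cont (X := Unit) (fun _ => q) (hq.comp continuous_snd) c
  exact this.comp (f := fun t : ℝ => ((), t)) (by fun_prop)

lemma sol_zero (q : ℝ → ℝ) (c : ℝ × ℝ) : sol q c 0 = c := by
  unfold sol
  rw [tsum_eq_single 0]
  · rfl
  · intro n hn
    obtain ⟨m, rfl⟩ := Nat.exists_eq_succ_of_ne_zero hn
    simp [Yn]

lemma sol_deriv {q : ℝ → ℝ} (hq : Continuous q) (c : ℝ × ℝ) (t : ℝ) :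
    HasDerivAt (sol q c) ((sol q c t).2, q t * (sol q c t).1) t := by
  set M := |t| + 1 with hMdef
  have hM : 0 < M := by positivity
  obtain ⟨K, hK1, hK⟩ := q_bound hq M
  have hb := fun n t ht => Yn_bound' hq c hK1 hK n t ht
  have hsum : ∀ t, |t| ≤ M → Summable fun n => Yn q c n t := fun t ht =>
    Summable.of_norm_bounded (summ_aux ‖c‖ K M) (fun n => hb n t ht)
  have hder : ∀ n s, HasDerivAt (Yn q c (n+1)) ((Yn q c n s).2, q s * (Yn q c n s).1) s := by
    intro n s
    have hcY := Yn_cont1 hq c n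
    have hc : Continuous fun τ => ((Yn q c n τ).2, q τ * (Yn q c n τ).1) := by fun_prop
    exact hc.integral_hasStrictDerivAt 0 s |>.hasDerivAt
  have habs : ∀ s, s ∈ Ioo (-M) M → |s| ≤ M := fun s hs => abs_le.2 ⟨hs.1.le, hs.2.le⟩
  have hnb : ∀ n s, s ∈ Ioo (-M) M → ‖((Yn q c n s).2, q s * (Yn q c n s).1)‖ ≤
      K * (‖c‖ * (K ^ n * M ^ n / n.factorial)) := by
    intro n s hs
    have h1 := hb n s (habs s hs)
    have h2 := hK s (habs s hs)
    have e1 : ‖(Yn q c n s).2‖ ≤ ‖Yn q c n s‖ := norm_snd_le _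
    have e2 : ‖(Yn q c n s).1‖ ≤ ‖Yn q c n s‖ := norm_fst_le _
    have : ‖((Yn q c n s).2, q s * (Yn q c n s).1)‖ ≤ K * ‖Yn q c n s‖ := by
      rw [Prod.norm_def]
      apply max_le
      · refine e1.trans ?_
        nlinarith [norm_nonneg (Yn q c n s)]
      · rw [norm_mul]
        exact mul_le_mul h2 e2 (norm_nonneg _) (by linarith)
    refine this.trans ?_
    gcongr
  have ht : t ∈ Ioo (-M) M := by
    constructor <;> rw [hMdef] <;> [linarith [neg_abs_le t]; linarith [le_abs_self t]]
  have main := hasDerivAt_tsum_of_isPreconnected ((summ_aux ‖c‖ K M).mul_left K)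
    isOpen_Ioo isPreconnected_Ioo (fun n s _ => hder n s) hnb (y₀ := t) ht
    ((summable_nat_add_iff 1).2 (hsum t (habs t ht))) ht
  have hloc : sol q c =ᶠ[𝓝 t] fun s => c + ∑' n, Yn q c (n+1) s := by
    filter_upwards [isOpen_Ioo.mem_nhds ht] with s hs
    unfold sol
    rw [(hsum s (habs s hs)).tsum_eq_zero_add]; rfl
  have h3 := (main.const_add c).congr_of_eventuallyEq hloc
  have hs := hsum t (habs t ht)
  have s1 : HasSum (fun n => (Yn q c n t).1) (sol q c t).1 := hs.hasSum.map (AddMonoidHom.fst ℝ ℝ) continuous_fst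
  have s2 : HasSum (fun n => (Yn q c n t).2) (sol q c t).2 := hs.hasSum.map (AddMonoidHom.snd ℝ ℝ) continuous_snd
  exact h3.congr_deriv (s2.prodMk (s1.mul_left (q t))).tsum_eq

end
end Mono

namespace Mono
open Filter Topology MeasureTheory

noncomputable section

def IsSol (q y y' : ℝ → ℝ) : Prop :=
  ∀ t, HasDerivAt y (y' t) t ∧ HasDerivAt y' (q t * y t) t

def v1 (q : ℝ → ℝ) (t : ℝ) : ℝ := (sol q (1,0) t).1
def d1 (q : ℝ → ℝ) (t : ℝ) : ℝ := (sol q (1,0) t).2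
def v2 (q : ℝ → ℝ) (t : ℝ) : ℝ := (sol q (0,1) t).1
def d2 (q : ℝ → ℝ) (t : ℝ) : ℝ := (sol q (0,1) t).2

lemma sol_isSol {q : ℝ → ℝ} (hq : Continuous q) (c : ℝ × ℝ) :
    IsSol q (fun t => (sol q c t).1) (fun t => (sol q c t).2) := by
  intro t
  have h := sol_deriv hq c t
  exact ⟨h.fst, h.snd⟩

lemma isSol1 {q : ℝ → ℝ} (hq : Continuous q) : IsSol q (v1 q) (d1 q) := sol_isSol hq _
lemma isSol2 {q : ℝ → ℝ} (hq : Continuous q) : IsSol q (v2 q) (d2 q) := sol_isSol hq _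
@[simp] lemma v1_zero (q : ℝ → ℝ) : v1 q 0 = 1 := by simp [v1, sol_zero]
@[simp] lemma d1_zero (q : ℝ → ℝ) : d1 q 0 = 0 := by simp [d1, sol_zero]
@[simp] lemma v2_zero (q : ℝ → ℝ) : v2 q 0 = 0 := by simp [v2, sol_zero]
@[simp] lemma d2_zero (q : ℝ → ℝ) : d2 q 0 = 1 := by simp [d2, sol_zero]

section param
variable {X : Type*} [TopologicalSpace X] [FirstCountableTopology X] {q : X → ℝ → ℝ}
lemma v1_cont (hq : Continuous (Function.uncurry q)) :
    Continuous (fun z : X × ℝ => v1 (q z.1) z.2) := (sol_cont q hq _).fst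
lemma v2_cont (hq : Continuous (Function.uncurry q)) :
    Continuous (fun z : X × ℝ => v2 (q z.1) z.2) := (sol_cont q hq _).fst
lemma d1_cont (hq : Continuous (Function.uncurry q)) :
    Continuous (fun z : X × ℝ => d1 (q z.1) z.2) := (sol_cont q hq _).snd
lemma d2_cont (hq : Continuous (Function.uncurry q)) :
    Continuous (fun z : X × ℝ => d2 (q z.1) z.2) := (sol_cont q hq _).snd
end param

lemma IsSol.cont {q y y' : ℝ → ℝ} (h : IsSol q y y') : Continuous y :=
  continuous_iff_continuousAt.2 fun t => (h t).1.continuousAt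
lemma IsSol.cont' {q y y' : ℝ → ℝ} (h : IsSol q y y') : Continuous y' :=
  continuous_iff_continuousAt.2 fun t => (h t).2.continuousAt

lemma wronsk {q Q y y' z z' : ℝ → ℝ} (hz : IsSol q z z') (hy : IsSol Q y y') (t : ℝ) :
    HasDerivAt (fun t => z t * y' t - z' t * y t) ((Q t - q t) * (z t * y t)) t := by
  have := ((hz t).1.mul (hy t).2).sub ((hz t).2.mul (hy t).1)
  refine this.congr_deriv ?_
  ring

lemma const_of_deriv {f : ℝ → ℝ} (h : ∀ t, HasDerivAt f 0 t) (t : ℝ) : f t = f 0 :=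
  is_const_of_deriv_eq_zero (fun t => (h t).differentiableAt) (fun t => (h t).deriv) t 0

lemma wronsk_const {q y y' z z' : ℝ → ℝ} (hz : IsSol q z z') (hy : IsSol q y y') (t : ℝ) :
    z t * y' t - z' t * y t = z 0 * y' 0 - z' 0 * y 0 :=
  const_of_deriv (f := fun t => z t * y' t - z' t * y t)
    (fun t => (wronsk hz hy t).congr_deriv (by ring)) t

lemma det_one {q : ℝ → ℝ} (hq : Continuous q) (t : ℝ) :
    v1 q t * d2 q t - d1 q t * v2 q t = 1 := by
  rw [wronsk_const (isSol1 hq) (isSol2 hq) t]; simp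

lemma sol_unique {q y y' : ℝ → ℝ} (hq : Continuous q) (hy : IsSol q y y') (t : ℝ) :
    y t = y 0 * v1 q t + y' 0 * v2 q t ∧ y' t = y 0 * d1 q t + y' 0 * d2 q t := by
  have a := wronsk_const (isSol1 hq) hy t
  have b := wronsk_const (isSol2 hq) hy t
  have c := det_one hq t
  simp only [v1_zero, d1_zero, v2_zero, d2_zero] at a b
  constructor
  · linear_combination (-y t) * c + v2 q t * a - v1 q t * b
  · linear_combination (-y' t) * c + d2 q t * a - d1 q t * b

lemma wronsk_int {q Q y y' z z' : ℝ → ℝ} (hq : Continuous q) (hQ : Continuous Q)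
    (hz : IsSol q z z') (hy : IsSol Q y y') (T : ℝ) :
    ∫ t in (0:ℝ)..T, (Q t - q t) * (z t * y t) =
      (z T * y' T - z' T * y T) - (z 0 * y' 0 - z' 0 * y 0) := by
  refine intervalIntegral.integral_eq_sub_of_hasDerivAt
    (f := fun t => z t * y' t - z' t * y t) (fun t _ => wronsk hz hy t) ?_
  have := hz.cont; have := hy.cont
  exact Continuous.intervalIntegrable (by fun_prop) _ _

lemma gron (T K C : ℝ) : ∃ M, 0 ≤ M ∧ ∀ (Q q y y' z z' : ℝ → ℝ), Continuous Q → Continuous q →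
    IsSol Q y y' → IsSol q z z' → y 0 = z 0 → y' 0 = z' 0 →
    (∀ t ∈ Icc 0 T, |Q t| ≤ K) → (∀ t ∈ Icc 0 T, |z t| ≤ C ∧ |z' t| ≤ C) →
    ∀ ε, (∀ t ∈ Icc 0 T, |∫ τ in (0:ℝ)..t, (Q τ - q τ)| ≤ ε) →
    ∀ t ∈ Icc 0 T, |y t - z t| ≤ M * ε ∧ |y' t - z' t| ≤ M * ε := by
  set k := max 1 K with hk
  have hk1 : 1 ≤ k := le_max_left _ _
  refine ⟨|C| * (1 / k * (exp (k * |T|) - 1) + 1), ?_, ?_⟩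
  · have : 1 ≤ exp (k * |T|) := Real.one_le_exp (by positivity)
    have : 0 ≤ 1 / k * (exp (k * |T|) - 1) := mul_nonneg (by positivity) (by linarith)
    positivity
  intro Q q y y' z z' hQ hq hy hz h0 h0' hK hC ε hP t ht
  have hT : 0 ≤ T := ht.1.trans ht.2
  have hε : 0 ≤ ε := (abs_nonneg _).trans (hP 0 ⟨le_rfl, hT⟩)
  have hC0 : 0 ≤ C := (abs_nonneg _).trans (hC 0 ⟨le_rfl, hT⟩).1
  set P : ℝ → ℝ := fun t => ∫ τ in (0:ℝ)..t, (Q τ - q τ) with hPdef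
  have hPd : ∀ t, HasDerivAt P (Q t - q t) t := fun t =>
    ((hQ.sub hq).integral_hasStrictDerivAt 0 t).hasDerivAt
  set D : ℝ → ℝ × ℝ := fun t => (y t - z t, y' t - z' t - P t * z t) with hD
  have hDd : ∀ t, HasDerivAt D (y' t - z' t, Q t * (y t - z t) - P t * z' t) t := by
    intro t
    refine HasDerivAt.prodMk ((hy t).1.sub (hz t).1) ?_
    refine (((hy t).2.sub (hz t).2).sub ((hPd t).mul (hz t).1)).congr_deriv ?_
    ring
  have hG := norm_le_gronwallBound_of_norm_deriv_right_le (f := D)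
    (f' := fun t => (y' t - z' t, Q t * (y t - z t) - P t * z' t)) (δ := 0) (K := k) (ε := ε * C)
    (a := 0) (b := T) (fun t _ => (hDd t).continuousAt.continuousWithinAt)
    (fun t _ => (hDd t).hasDerivWithinAt) (by simp [hD, hPdef, h0, h0']) ?_ t ht
  · have hb : gronwallBound 0 k (ε * C) (t - 0) ≤ |C| * (1 / k * (exp (k * |T|) - 1)) * ε := by
      rw [gronwallBound_of_K_ne_0 (by linarith), abs_of_nonneg hC0, abs_of_nonneg hT]
      have : exp (k * (t - 0)) ≤ exp (k * T) := by
        apply Real.exp_le_exp.2; rw [sub_zero]; exact mul_le_mul_of_nonneg_left ht.2 (by linarith)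
      calc _ = ε * C / k * (exp (k * (t - 0)) - 1) := by ring
        _ ≤ ε * C / k * (exp (k * T) - 1) := by gcongr
        _ = _ := by ring
    have hG' := hG.trans hb
    have g1 : |y t - z t| ≤ _ := (norm_fst_le (D t)).trans hG'
    have g2 : |y' t - z' t - P t * z t| ≤ _ := (norm_snd_le (D t)).trans hG'
    have g3 : |P t * z t| ≤ ε * |C| := by
      rw [abs_mul, abs_of_nonneg hC0]; exact mul_le_mul (hP t ht) (hC t ht).1 (abs_nonneg _) hε
    have g4 : |y' t - z' t| ≤ |y' t - z' t - P t * z t| + |P t * z t| := by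
      simpa using abs_add_le (y' t - z' t - P t * z t) (P t * z t)
    constructor
    · nlinarith [mul_nonneg (abs_nonneg C) hε]
    · nlinarith
  · intro s hs
    have hs' : s ∈ Icc 0 T := ⟨hs.1, hs.2.le⟩
    have e1 : |y s - z s| ≤ ‖D s‖ := norm_fst_le (D s)
    have e2 : |y' s - z' s - P s * z s| ≤ ‖D s‖ := norm_snd_le (D s)
    have g3 : |P s * z s| ≤ ε * C := by
      rw [abs_mul]; exact mul_le_mul (hP s hs') (hC s hs').1 (abs_nonneg _) hε
    have g3' : |P s * z' s| ≤ ε * C := by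
      rw [abs_mul]; exact mul_le_mul (hP s hs') (hC s hs').2 (abs_nonneg _) hε
    have g4 : |y' s - z' s| ≤ |y' s - z' s - P s * z s| + |P s * z s| := by
      simpa using abs_add_le (y' s - z' s - P s * z s) (P s * z s)
    have hn := norm_nonneg (D s)
    rw [Prod.norm_def]
    apply max_le
    · simp only [Real.norm_eq_abs]; nlinarith
    · simp only [Real.norm_eq_abs]
      refine (abs_sub _ _).trans ?_
      have : |Q s * (y s - z s)| ≤ k * ‖D s‖ := by
        rw [abs_mul]
        exact mul_le_mul ((hK s hs').trans (le_max_right _ _)) e1 (abs_nonneg _) (by linarith)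
      linarith

lemma ibp {ζ k k' : ℝ → ℝ} (hζ : Continuous ζ) (hk' : Continuous k')
    (hk : ∀ t, HasDerivAt k (k' t) t) {T ε C : ℝ} (hT : 0 ≤ T)
    (h1 : ∀ t ∈ Icc 0 T, |∫ τ in (0:ℝ)..t, ζ τ| ≤ ε) (h2 : ∀ t ∈ Icc 0 T, |k t| ≤ C ∧ |k' t| ≤ C) :
    |∫ t in (0:ℝ)..T, ζ t * k t| ≤ ε * C * (1 + T) := by
  set Z : ℝ → ℝ := fun t => ∫ τ in (0:ℝ)..t, ζ τ with hZ
  have hZd : ∀ t, HasDerivAt Z (ζ t) t := fun t =>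
    (hζ.integral_hasStrictDerivAt 0 t).hasDerivAt
  have hZc : Continuous Z := continuous_iff_continuousAt.2 fun t => (hZd t).continuousAt
  have hε : 0 ≤ ε := (abs_nonneg _).trans (h1 0 ⟨le_rfl, hT⟩)
  have hparts := intervalIntegral.integral_deriv_mul_eq_sub (a := 0) (b := T)
    (fun t _ => hZd t) (fun t _ => hk t)
    (hζ.intervalIntegrable _ _) (hk'.intervalIntegrable _ _)
  have hkc : Continuous k := continuous_iff_continuousAt.2 fun t => (hk t).continuousAt
  rw [intervalIntegral.integral_add
    (Continuous.intervalIntegrable (u := fun t => ζ t * k t) (by fun_prop) _ _)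
    (Continuous.intervalIntegrable (u := fun t => Z t * k' t) (by fun_prop) _ _)] at hparts
  have hZ0 : Z 0 = 0 := by simp [hZ]
  have e1 : ∫ t in (0:ℝ)..T, ζ t * k t = Z T * k T - ∫ t in (0:ℝ)..T, Z t * k' t := by
    rw [hZ0] at hparts; linarith
  have e2 : ‖∫ t in (0:ℝ)..T, Z t * k' t‖ ≤ ε * C * |T - 0| := by
    apply intervalIntegral.norm_integral_le_of_norm_le_const
    intro t ht
    rw [uIoc_of_le hT] at ht
    have ht' : t ∈ Icc 0 T := ⟨ht.1.le, ht.2⟩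
    rw [norm_mul]
    exact mul_le_mul (h1 t ht') (h2 t ht').2 (abs_nonneg _) hε
  have hTT : T ∈ Icc 0 T := ⟨hT, le_rfl⟩
  have e3 : |Z T * k T| ≤ ε * C := by
    rw [abs_mul]; exact mul_le_mul (h1 T hTT) (h2 T hTT).1 (abs_nonneg _) hε
  rw [e1]
  refine (abs_sub _ _).trans ?_
  rw [Real.norm_eq_abs, sub_zero, abs_of_nonneg hT] at e2
  linarith

end
end Mono

namespace Mono
open Filter Topology MeasureTheory

noncomputable section

def RR (q : ℝ → ℝ) (t : ℝ) : ℝ := v1 q t ^ 2 + v2 q t ^ 2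
def th (q : ℝ → ℝ) (t : ℝ) : ℝ := ∫ τ in (0:ℝ)..t, 1 / RR q τ

lemma RR_pos {q : ℝ → ℝ} (hq : Continuous q) (t : ℝ) : 0 < RR q t := by
  have h := det_one hq t
  unfold RR
  by_contra hc
  have h1 : v1 q t = 0 := by nlinarith [sq_nonneg (v1 q t), sq_nonneg (v2 q t)]
  have h2 : v2 q t = 0 := by nlinarith [sq_nonneg (v1 q t), sq_nonneg (v2 q t)]
  rw [h1, h2] at h; simp at h

def SS (q : ℝ → ℝ) (t : ℝ) : ℝ := 2 * (v1 q t * d1 q t + v2 q t * d2 q t)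

lemma RR_deriv {q : ℝ → ℝ} (hq : Continuous q) (t : ℝ) : HasDerivAt (RR q) (SS q t) t := by
  have := ((isSol1 hq t).1.pow 2).add ((isSol2 hq t).1.pow 2)
  refine this.congr_deriv ?_
  simp [SS]; ring

lemma SS_deriv {q : ℝ → ℝ} (hq : Continuous q) (t : ℝ) :
    HasDerivAt (SS q) (2 * (d1 q t ^ 2 + d2 q t ^ 2) + 2 * (q t * RR q t)) t := by
  have := (((isSol1 hq t).1.mul (isSol1 hq t).2).add
    ((isSol2 hq t).1.mul (isSol2 hq t).2)).const_mul 2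
  refine this.congr_deriv ?_
  simp [RR]; ring

lemma RR_cont {q : ℝ → ℝ} (hq : Continuous q) : Continuous (RR q) :=
  continuous_iff_continuousAt.2 fun t => (RR_deriv hq t).continuousAt

lemma th_deriv {q : ℝ → ℝ} (hq : Continuous q) (t : ℝ) : HasDerivAt (th q) (1 / RR q t) t := by
  have h : Continuous fun t => 1 / RR q t :=
    continuous_const.div (RR_cont hq) fun t => (RR_pos hq t).ne'
  exact (h.integral_hasStrictDerivAt 0 t).hasDerivAt

lemma th_cont {q : ℝ → ℝ} (hq : Continuous q) : Continuous (th q) :=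
  continuous_iff_continuousAt.2 fun t => (th_deriv hq t).continuousAt

lemma th_zero (q : ℝ → ℝ) : th q 0 = 0 := by simp [th]

lemma polar {q : ℝ → ℝ} (hq : Continuous q) (t : ℝ) :
    v1 q t = √(RR q t) * cos (th q t) ∧ v2 q t = √(RR q t) * sin (th q t) := by
  have hR : ∀ t, 0 < √(RR q t) := fun t => Real.sqrt_pos.2 (RR_pos hq t)
  have hc : ∀ t, HasDerivAt (fun t => (v1 q t * cos (th q t) + v2 q t * sin (th q t)) / √(RR q t)) 0 t := by
    intro t
    have a1 := (isSol1 hq t).1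
    have a2 := (isSol2 hq t).1
    have ac := (th_deriv hq t).cos
    have as := (th_deriv hq t).sin
    have ar := (RR_deriv hq t).sqrt (RR_pos hq t).ne'
    refine (((a1.mul ac).add (a2.mul as)).div ar (hR t).ne').congr_deriv ?_
    have hs := Real.sq_sqrt (RR_pos hq t).le
    have hdet := det_one hq t
    have hp := hR t
    have hp2 := RR_pos hq t
    rw [div_eq_zero_iff]; left
    simp only [Pi.add_apply, Pi.mul_apply]
    generalize √(RR q t) = r at *
    rw [← hs]
    have hr : r ^ 2 = v1 q t ^ 2 + v2 q t ^ 2 := hs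
    field_simp
    unfold SS
    generalize cos (th q t) = C
    generalize sin (th q t) = S
    generalize v1 q t = a at *
    generalize v2 q t = b at *
    generalize d1 q t = c at *
    generalize d2 q t = d at *
    rw [hr]
    linear_combination 2 * (a * S - b * C) * hdet
  have hd : ∀ t, HasDerivAt (fun t => (-(v1 q t * sin (th q t)) + v2 q t * cos (th q t)) / √(RR q t)) 0 t := by
    intro t
    have a1 := (isSol1 hq t).1
    have a2 := (isSol2 hq t).1
    have ac := (th_deriv hq t).cos
    have as := (th_deriv hq t).sin
    have ar := (RR_deriv hq t).sqrt (RR_pos hq t).ne'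
    refine (((a1.mul as).neg.add (a2.mul ac)).div ar (hR t).ne').congr_deriv ?_
    have hs := Real.sq_sqrt (RR_pos hq t).le
    have hdet := det_one hq t
    have hp := hR t
    have hp2 := RR_pos hq t
    rw [div_eq_zero_iff]; left
    simp only [Pi.add_apply, Pi.mul_apply, Pi.neg_apply]
    generalize √(RR q t) = r at *
    rw [← hs]
    have hr : r ^ 2 = v1 q t ^ 2 + v2 q t ^ 2 := hs
    field_simp
    unfold SS
    generalize cos (th q t) = C
    generalize sin (th q t) = S
    generalize v1 q t = a at *
    generalize v2 q t = b at *
    generalize d1 q t = c at *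
    generalize d2 q t = d at *
    rw [hr]
    linear_combination 2 * (a * C + b * S) * hdet
  have h1 := const_of_deriv hc t
  have h2 := const_of_deriv hd t
  have hp := hR t
  simp [th_zero, RR] at h1 h2
  rw [div_eq_one_iff_eq (by simpa [RR] using hp.ne')] at h1
  have h2' : -(v1 q t * sin (th q t)) + v2 q t * cos (th q t) = 0 := by
    rcases h2 with h2 | h2
    · exact h2
    · exact absurd h2 (by simpa [RR] using hp.ne')
  have hsc := Real.sin_sq_add_cos_sq (th q t)
  have h1' : v1 q t * cos (th q t) + v2 q t * sin (th q t) = √(RR q t) := h1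
  constructor
  · rw [← h1']; linear_combination (-v1 q t) * hsc - sin (th q t) * h2'
  · rw [← h1']; linear_combination (-v2 q t) * hsc + cos (th q t) * h2'

lemma lift_unique {T : ℝ} {a b : ℝ → ℝ} (ha : ContinuousOn a (Icc 0 T))
    (hb : ContinuousOn b (Icc 0 T)) (h0 : a 0 = b 0) (hT : 0 ≤ T)
    (hc : ∀ t ∈ Icc 0 T, cos (a t) = cos (b t)) (hs : ∀ t ∈ Icc 0 T, sin (a t) = sin (b t)) :
    a T = b T := by
  by_contra hne
  have hdc : ContinuousOn (fun t => a t - b t) (Icc 0 T) := ha.sub hb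
  have hcos : ∀ t ∈ Icc 0 T, cos (a t - b t) = 1 := by
    intro t ht
    rw [Real.cos_sub, hc t ht, hs t ht]; nlinarith [Real.sin_sq_add_cos_sq (b t)]
  have hconn : IsPreconnected ((fun t => a t - b t) '' Icc 0 T) :=
    isPreconnected_Icc.image _ hdc
  have m0 : (0:ℝ) ∈ (fun t => a t - b t) '' Icc 0 T := ⟨0, ⟨le_rfl, hT⟩, by simp [h0]⟩
  have mT : a T - b T ∈ (fun t => a t - b t) '' Icc 0 T := ⟨T, ⟨hT, le_rfl⟩, rfl⟩
  have hpos : 0 < |a T - b T| := abs_pos.2 (sub_ne_zero.2 hne)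
  obtain ⟨x, hx, hx1, hx2⟩ : ∃ x ∈ (fun t => a t - b t) '' Icc 0 T, 0 < |x| ∧ |x| < 2 * π := by
    set m := min |a T - b T| π with hm
    have hmpos : 0 < m := lt_min hpos Real.pi_pos
    have hmpi : m < 2 * π := (min_le_right _ _).trans_lt (by linarith [Real.pi_pos])
    have hm' : m ≤ |a T - b T| := min_le_left _ _
    rcases le_total 0 (a T - b T) with h | h
    · refine ⟨m, hconn.ordConnected.out m0 mT ⟨hmpos.le, ?_⟩, ?_, ?_⟩
      · rwa [abs_of_nonneg h] at hm'
      · rwa [abs_of_pos hmpos]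
      · rwa [abs_of_pos hmpos]
    · refine ⟨-m, hconn.ordConnected.out mT m0 ⟨?_, by linarith⟩, ?_, ?_⟩
      · rw [abs_of_nonpos h] at hm'; linarith
      · rwa [abs_neg, abs_of_pos hmpos]
      · rwa [abs_neg, abs_of_pos hmpos]
  obtain ⟨t, ht, rfl⟩ := hx
  have := hcos t ht
  rw [abs_lt] at hx2
  rw [Real.cos_eq_one_iff_of_lt_of_lt (by linarith [hx2.1]) hx2.2] at this
  simp [this] at hx1

def MonoEq (q : ℝ → ℝ) (A : Matrix (Fin 2) (Fin 2) ℝ) : Prop :=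
  v1 q (2*π) = A 0 0 ∧ v2 q (2*π) = A 0 1 ∧ d1 q (2*π) = A 1 0 ∧ d2 q (2*π) = A 1 1

lemma mem_level_iff {f : ℝ → ℝ} (hg : Continuous (deriv f)) {A : Matrix (Fin 2) (Fin 2) ℝ} {α : ℝ}
    (u : BoundedContinuousFunction ℝ ℝ) :
    u ∈ levelSet f A α ↔ Function.Periodic ⇑u (2 * π) ∧ (¬ ∃ c : ℝ, ⇑u = fun _ => c) ∧
      MonoEq (fun t => deriv f (u t)) A ∧ th (fun t => deriv f (u t)) (2*π) = α := by
  have hq : Continuous fun t => deriv f (u t) := hg.comp u.continuous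
  set q := fun t => deriv f (u t) with hqdef
  have hpi : (0:ℝ) ≤ 2 * π := by positivity
  unfold levelSet
  simp only [mem_ofPred_eq]
  refine and_congr_right fun _ => and_congr_right fun _ => ?_
  constructor
  · rintro ⟨Φ, θ, ⟨hΦ0, hΦ⟩, ⟨hθc, hθ0, hθ⟩, hA, hα⟩
    have s1 : IsSol q (fun t => Φ t 0 0) (fun t => Φ t 1 0) := fun t =>
      ⟨by simpa [Matrix.mul_apply, Fin.sum_univ_two] using hΦ t 0 0,
       by simpa [Matrix.mul_apply, Fin.sum_univ_two] using hΦ t 1 0⟩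
    have s2 : IsSol q (fun t => Φ t 0 1) (fun t => Φ t 1 1) := fun t =>
      ⟨by simpa [Matrix.mul_apply, Fin.sum_univ_two] using hΦ t 0 1,
       by simpa [Matrix.mul_apply, Fin.sum_univ_two] using hΦ t 1 1⟩
    have e1 := fun t => sol_unique hq s1 t
    have e2 := fun t => sol_unique hq s2 t
    simp [hΦ0] at e1 e2
    refine ⟨⟨?_, ?_, ?_, ?_⟩, ?_⟩
    · rw [← (e1 _).1, hA]
    · rw [← (e2 _).1, hA]
    · rw [← (e1 _).2, hA]
    · rw [← (e2 _).2, hA]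
    · rw [← hα]
      have key : ∀ t ∈ Icc 0 (2*π), cos (th q t) = cos (θ t) ∧ sin (th q t) = sin (θ t) := by
        intro t ht
        have h := hθ t ht
        rw [(e1 t).1, (e2 t).1] at h
        have hp := polar hq t
        have hR : 0 < √(RR q t) := Real.sqrt_pos.2 (RR_pos hq t)
        constructor
        · exact mul_left_cancel₀ hR.ne' (hp.1.symm.trans h.1)
        · exact mul_left_cancel₀ hR.ne' (hp.2.symm.trans h.2)
      exact lift_unique (th_cont hq).continuousOn hθc (by rw [th_zero, hθ0]) hpi
        (fun t ht => (key t ht).1) (fun t ht => (key t ht).2)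
  · rintro ⟨⟨h1, h2, h3, h4⟩, hα⟩
    refine ⟨fun t => !![v1 q t, v2 q t; d1 q t, d2 q t], th q, ⟨?_, ?_⟩,
      ⟨(th_cont hq).continuousOn, th_zero q, ?_⟩, ?_, hα⟩
    · simp [Matrix.one_fin_two]
    · intro t i j
      have a1 := isSol1 hq t
      have a2 := isSol2 hq t
      fin_cases i <;> fin_cases j <;>
        simp [Matrix.mul_apply, Fin.sum_univ_two, a1.1, a2.1]
      · exact a1.2
      · exact a2.2
    · intro t _
      exact polar hq t
    · ext i j
      fin_cases i <;> fin_cases j <;> simp [h1, h2, h3, h4]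

end
end Mono

namespace Mono
open Filter Topology MeasureTheory

noncomputable section

/-- the potential associated with `φ`, `φ'`, `φ''` -/
def Qf (a b c : ℝ) : ℝ := -a ^ 2 + 3 / 4 * (b / a) ^ 2 - 1 / 2 * (c / a)

structure IsPhi (A : Matrix (Fin 2) (Fin 2) ℝ) (α : ℝ) (φ φ' φ'' : ℝ → ℝ) : Prop where
  pos : ∀ t, 0 < φ t
  h1 : ∀ t, HasDerivAt φ (φ' t) t
  h2 : ∀ t, HasDerivAt φ' (φ'' t) t
  c2 : Continuous φ''
  z0 : φ 0 = 1
  z1 : φ' 0 = 0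
  e0 : φ (2*π) = 1 / (A 0 0 ^ 2 + A 0 1 ^ 2)
  e1 : φ' (2*π) = - (2 * (A 0 0 * A 1 0 + A 0 1 * A 1 1)) / (A 0 0 ^ 2 + A 0 1 ^ 2) ^ 2
  int : ∫ t in (0:ℝ)..(2*π), φ t = α

lemma IsPhi.cc {A : Matrix (Fin 2) (Fin 2) ℝ} {α : ℝ} {φ φ' φ'' : ℝ → ℝ}
    (h : IsPhi A α φ φ' φ'') : Continuous φ ∧ Continuous φ' :=
  ⟨continuous_iff_continuousAt.2 fun t => (h.h1 t).continuousAt,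
   continuous_iff_continuousAt.2 fun t => (h.h2 t).continuousAt⟩

lemma IsPhi.qcont {A : Matrix (Fin 2) (Fin 2) ℝ} {α : ℝ} {φ φ' φ'' : ℝ → ℝ}
    (h : IsPhi A α φ φ' φ'') : Continuous (fun t => Qf (φ t) (φ' t) (φ'' t)) := by
  have := h.cc.1; have := h.cc.2; have := h.c2
  have hp := fun t => (h.pos t).ne'
  unfold Qf
  fun_prop (disch := assumption)

lemma phi_path {A : Matrix (Fin 2) (Fin 2) ℝ} (hA : A.det = 1) {α : ℝ}
    (hrow : ∃ r : ℝ, 0 < r ∧ A 0 0 = r * Real.cos α ∧ A 0 1 = r * Real.sin α)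
    {φ φ' φ'' : ℝ → ℝ} (h : IsPhi A α φ φ' φ'') :
    MonoEq (fun t => Qf (φ t) (φ' t) (φ'' t)) A ∧
      th (fun t => Qf (φ t) (φ' t) (φ'' t)) (2*π) = α := by
  have hq := h.qcont
  set q := fun t => Qf (φ t) (φ' t) (φ'' t) with hqdef
  set θ : ℝ → ℝ := fun t => ∫ τ in (0:ℝ)..t, φ τ with hθ
  have hθd : ∀ t, HasDerivAt θ (φ t) t := fun t =>
    (h.cc.1.integral_hasStrictDerivAt 0 t).hasDerivAt
  have hθ0 : θ 0 = 0 := by simp [hθ]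
  set y1 := fun t => cos (θ t) / √(φ t) with hy1
  set y2 := fun t => sin (θ t) / √(φ t) with hy2
  set e1 := fun t => -(1/2) * (φ' t / φ t) * y1 t - φ t * y2 t with he1
  set e2 := fun t => -(1/2) * (φ' t / φ t) * y2 t + φ t * y1 t with he2
  have k1 : ∀ t, HasDerivAt y1 (e1 t) t := by
    intro t
    have hs := Real.sqrt_pos.2 (h.pos t)
    refine ((hθd t).cos.div ((h.h1 t).sqrt (h.pos t).ne') hs.ne').congr_deriv ?_
    have hsq := Real.sq_sqrt (h.pos t).le
    simp only [he1, hy1, hy2]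
    generalize √(φ t) = r at *
    rw [← hsq]; field_simp; ring
  have k2 : ∀ t, HasDerivAt y2 (e2 t) t := by
    intro t
    have hs := Real.sqrt_pos.2 (h.pos t)
    refine ((hθd t).sin.div ((h.h1 t).sqrt (h.pos t).ne') hs.ne').congr_deriv ?_
    have hsq := Real.sq_sqrt (h.pos t).le
    simp only [he2, hy1, hy2]
    generalize √(φ t) = r at *
    rw [← hsq]; field_simp; ring
  have s1 : IsSol q y1 e1 := by
    intro t
    refine ⟨k1 t, ?_⟩
    have hp := (h.pos t).ne'
    refine (((((h.h2 t).div (h.h1 t) hp).const_mul (-(1/2))).mul (k1 t)).sub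
      ((h.h1 t).mul (k2 t))).congr_deriv ?_
    simp only [he1, he2, hqdef, Qf, Pi.div_apply]
    field_simp; ring
  have s2 : IsSol q y2 e2 := by
    intro t
    refine ⟨k2 t, ?_⟩
    have hp := (h.pos t).ne'
    refine (((((h.h2 t).div (h.h1 t) hp).const_mul (-(1/2))).mul (k2 t)).add
      ((h.h1 t).mul (k1 t))).congr_deriv ?_
    simp only [he1, he2, hqdef, Qf, Pi.div_apply]
    field_simp; ring
  have u1 := fun t => sol_unique hq s1 t
  have u2 := fun t => sol_unique hq s2 t
  have i1 : y1 0 = 1 := by simp [hy1, hθ0, h.z0]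
  have i2 : y2 0 = 0 := by simp [hy2, hθ0]
  have i3 : e1 0 = 0 := by simp [he1, i2, h.z1]
  have i4 : e2 0 = 1 := by simp [he2, i1, h.z1, h.z0]
  simp only [i1, i2, i3, i4, one_mul, zero_mul, add_zero, zero_add] at u1 u2
  obtain ⟨r, hr, hr0, hr1⟩ := hrow
  have hRA : A 0 0 ^ 2 + A 0 1 ^ 2 = r ^ 2 := by
    rw [hr0, hr1]; linear_combination r ^ 2 * Real.sin_sq_add_cos_sq α
  have hθT : θ (2*π) = α := h.int
  have hφT : φ (2*π) = 1 / r ^ 2 := by rw [h.e0, hRA]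
  have hsT : √(φ (2*π)) = 1 / r := by
    rw [hφT, one_div, Real.sqrt_inv, Real.sqrt_sq hr.le, one_div]
  have f1 : y1 (2*π) = A 0 0 := by
    simp only [hy1]; rw [hθT, hsT, hr0]; field_simp
  have f2 : y2 (2*π) = A 0 1 := by
    simp only [hy2]; rw [hθT, hsT, hr1]; field_simp
  have hdet : A 0 0 * A 1 1 - A 0 1 * A 1 0 = 1 := by rw [← hA, Matrix.det_fin_two]
  have hpR : A 0 0 ^ 2 + A 0 1 ^ 2 ≠ 0 := by rw [hRA]; positivity
  refine ⟨⟨?_, ?_, ?_, ?_⟩, ?_⟩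
  · rw [← (u1 _).1, f1]
  · rw [← (u2 _).1, f2]
  · rw [← (u1 _).2]
    simp only [he1]
    rw [f1, f2, h.e0, h.e1]
    field_simp
    linear_combination A 0 1 * hdet
  · rw [← (u2 _).2]
    simp only [he2]
    rw [f1, f2, h.e0, h.e1]
    field_simp
    linear_combination - A 0 0 * hdet
  · rw [← hθT]
    simp only [th, hθ]
    congr 1
    funext t
    rw [RR, ← (u1 t).1, ← (u2 t).1]
    simp only [hy1, hy2]
    rw [div_pow, div_pow, ← add_div, Real.cos_sq_add_sin_sq, Real.sq_sqrt (h.pos t).le]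
    simp

def f0 (q : ℝ → ℝ) (t : ℝ) : ℝ := 1 / RR q t
def f1 (q : ℝ → ℝ) (t : ℝ) : ℝ := - SS q t / RR q t ^ 2
def f2 (q : ℝ → ℝ) (t : ℝ) : ℝ :=
  - (2 * (d1 q t ^ 2 + d2 q t ^ 2) + 2 * (q t * RR q t)) / RR q t ^ 2 + 2 * SS q t ^ 2 / RR q t ^ 3

lemma f_isPhi {A : Matrix (Fin 2) (Fin 2) ℝ} {α : ℝ} {q : ℝ → ℝ} (hq : Continuous q)
    (h1 : MonoEq q A) (h2 : th q (2*π) = α) : IsPhi A α (f0 q) (f1 q) (f2 q) where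
  pos t := by have := RR_pos hq t; unfold f0; positivity
  h1 t := by
    have hp := (RR_pos hq t).ne'
    refine ((hasDerivAt_const t (1:ℝ)).div (RR_deriv hq t) hp).congr_deriv ?_
    simp [f1]
  h2 t := by
    have hp := (RR_pos hq t).ne'
    refine ((SS_deriv hq t).neg.div ((RR_deriv hq t).pow 2) (pow_ne_zero 2 hp)).congr_deriv ?_
    simp only [f2, Pi.neg_apply, Pi.pow_apply]; field_simp; push_cast; ring
  c2 := by
    have a1 := (isSol1 hq).cont
    have a2 := (isSol2 hq).cont
    have a3 := (isSol1 hq).cont'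
    have a4 := (isSol2 hq).cont'
    have a5 := RR_cont hq
    have hp := fun t => (RR_pos hq t).ne'
    have hp2 := fun t => pow_ne_zero 2 (hp t)
    have hp3 := fun t => pow_ne_zero 3 (hp t)
    unfold f2 SS
    fun_prop (disch := assumption)
  z0 := by simp [f0, RR]
  z1 := by simp [f1, SS]
  e0 := by simp only [f0, RR, h1.1, h1.2.1]
  e1 := by simp only [f1, RR, SS, h1.1, h1.2.1, h1.2.2.1, h1.2.2.2]
  int := h2

lemma f_Qf {q : ℝ → ℝ} (hq : Continuous q) (t : ℝ) : Qf (f0 q t) (f1 q t) (f2 q t) = q t := by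
  have hp := (RR_pos hq t)
  have hdet := det_one hq t
  unfold Qf f0 f1 f2 SS
  field_simp
  unfold RR
  linear_combination 4 * (v1 q t * d2 q t - d1 q t * v2 q t + 1) * hdet

lemma IsPhi.mix {A : Matrix (Fin 2) (Fin 2) ℝ} {α : ℝ} {φ φ' φ'' ψ ψ' ψ'' : ℝ → ℝ}
    (h : IsPhi A α φ φ' φ'') (k : IsPhi A α ψ ψ' ψ'') {σ : ℝ} (h0 : 0 ≤ σ) (h1 : σ ≤ 1) :
    IsPhi A α (fun t => (1-σ) * φ t + σ * ψ t) (fun t => (1-σ) * φ' t + σ * ψ' t)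
      (fun t => (1-σ) * φ'' t + σ * ψ'' t) where
  pos t := by
    have a := h.pos t
    have b := k.pos t
    rcases eq_or_lt_of_le h0 with h | h
    · simpa [← h] using a
    · have : 0 ≤ 1 - σ := by linarith
      positivity
  h1 t := ((h.h1 t).const_mul _).add ((k.h1 t).const_mul _)
  h2 t := ((h.h2 t).const_mul _).add ((k.h2 t).const_mul _)
  c2 := by have := h.c2; have := k.c2; fun_prop
  z0 := by simp [h.z0, k.z0]
  z1 := by simp [h.z1, k.z1]
  e0 := by simp only [h.e0, k.e0]; ring
  e1 := by simp only [h.e1, k.e1]; ring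
  int := by
    have a := h.cc.1
    have b := k.cc.1
    rw [intervalIntegral.integral_add (Continuous.intervalIntegrable (by fun_prop) _ _)
      (Continuous.intervalIntegrable (by fun_prop) _ _), intervalIntegral.integral_const_mul,
      intervalIntegral.integral_const_mul, h.int, k.int]; ring

lemma exists_phi {A : Matrix (Fin 2) (Fin 2) ℝ} {α : ℝ} (hα : 0 < α)
    (hrow : ∃ r : ℝ, 0 < r ∧ A 0 0 = r * Real.cos α ∧ A 0 1 = r * Real.sin α) :
    ∃ φ φ' φ'' : ℝ → ℝ, IsPhi A α φ φ' φ'' := by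
  obtain ⟨r, hr, hr0, hr1⟩ := hrow
  have hRA : A 0 0 ^ 2 + A 0 1 ^ 2 = r ^ 2 := by
    rw [hr0, hr1]; linear_combination r ^ 2 * Real.sin_sq_add_cos_sq α
  have hpR : 0 < A 0 0 ^ 2 + A 0 1 ^ 2 := by rw [hRA]; positivity
  set b := 1 / (A 0 0 ^ 2 + A 0 1 ^ 2) with hb
  set c := - (2 * (A 0 0 * A 1 0 + A 0 1 * A 1 1)) / (A 0 0 ^ 2 + A 0 1 ^ 2) ^ 2 with hc
  have hbpos : 0 < b := by positivity
  set T := 2 * π with hT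
  have hTpos : 0 < T := by positivity
  set a0 := Real.log b / T ^ 2 with ha0
  set a1 := (c / b - 2 * T * a0) / T ^ 2 with ha1
  set l : ℝ → ℝ → ℝ := fun κ t => t ^ 2 * (a0 + a1 * (t - T)) + κ * (t ^ 2 * (T - t) ^ 2) with hl
  set l' : ℝ → ℝ → ℝ := fun κ t => 2 * t * (a0 + a1 * (t - T)) + t ^ 2 * a1
    + κ * (2 * t * (T - t) ^ 2 - t ^ 2 * (2 * (T - t))) with hl'
  set l'' : ℝ → ℝ → ℝ := fun κ t => 2 * (a0 + a1 * (t - T)) + 4 * t * a1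
    + κ * (2 * (T - t) ^ 2 - 8 * t * (T - t) + 2 * t ^ 2) with hl''
  have hld : ∀ κ t, HasDerivAt (l κ) (l' κ t) t := by
    intro κ t
    have hi := hasDerivAt_id' t
    refine (((hi.pow 2).mul (((hi.sub_const T).const_mul a1).const_add a0)).add
      (((hi.pow 2).mul ((hi.const_sub T).pow 2)).const_mul κ)).congr_deriv ?_
    simp only [hl', Pi.pow_apply]; push_cast; ring
  have hld' : ∀ κ t, HasDerivAt (l' κ) (l'' κ t) t := by
    intro κ t
    have hi := hasDerivAt_id' t
    refine ((((hi.const_mul 2).mul (((hi.sub_const T).const_mul a1).const_add a0)).add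
      ((hi.pow 2).mul_const a1)).add
      ((((hi.const_mul 2).mul ((hi.const_sub T).pow 2)).sub
        ((hi.pow 2).mul ((hi.const_sub T).const_mul 2))).const_mul κ)).congr_deriv ?_
    simp [hl'']; ring
  set I : ℝ → ℝ := fun κ => ∫ t in (0:ℝ)..T, exp (l κ t) with hI
  have hIc : Continuous I := by
    apply intervalIntegral.continuous_parametric_intervalIntegral_of_continuous'
    simp only [hl, Function.uncurry_def]; fun_prop
  have hlc : ∀ κ, Continuous (l κ) := fun κ => by simp only [hl]; fun_prop
  -- large
  have hbig : ∃ κ, α ≤ I κ := by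
    set w := ∫ t in (0:ℝ)..T, t ^ 2 * (T - t) ^ 2 with hw
    have hwpos : 0 < w := by
      apply intervalIntegral.intervalIntegral_pos_of_pos_on
      · exact Continuous.intervalIntegrable (by fun_prop) _ _
      · intro t ht
        have := ht.1
        have : 0 < T - t := by linarith [ht.2]
        positivity
      · exact hTpos
    set c0 := ∫ t in (0:ℝ)..T, (1 + l 0 t) with hc0
    refine ⟨(α - c0) / w, ?_⟩
    have h1 : c0 + (α - c0) / w * w ≤ I ((α - c0) / w) := by
      rw [hc0, hw, ← intervalIntegral.integral_const_mul, ← intervalIntegral.integral_add]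
      · apply intervalIntegral.integral_mono_on hTpos.le
        · have := hlc 0
          exact Continuous.intervalIntegrable (by fun_prop) _ _
        · have := hlc ((α - c0) / w)
          exact Continuous.intervalIntegrable (by fun_prop) _ _
        · intro t _
          refine le_trans (le_of_eq ?_) (Real.add_one_le_exp _)
          simp only [hl]; ring
      · have := hlc 0
        exact Continuous.intervalIntegrable (by fun_prop) _ _
      · exact Continuous.intervalIntegrable (by fun_prop) _ _
    rw [div_mul_cancel₀ _ hwpos.ne'] at h1
    linarith
  have hsmall : ∃ κ, I κ ≤ α := by
    have hlim : Tendsto (fun n : ℕ => I (-(n:ℝ))) atTop (𝓝 (∫ t in (0:ℝ)..T, (0:ℝ))) := by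
      apply intervalIntegral.tendsto_integral_filter_of_dominated_convergence
        (fun t => exp (l 0 t))
      · refine Eventually.of_forall fun n => ?_
        have := hlc (-(n:ℝ))
        exact Continuous.aestronglyMeasurable (by fun_prop)
      · refine Eventually.of_forall fun n => Eventually.of_forall fun t _ => ?_
        rw [Real.norm_eq_abs, abs_of_pos (Real.exp_pos _)]
        apply Real.exp_le_exp.2
        simp only [hl]
        have : 0 ≤ (n:ℝ) * (t ^ 2 * (T - t) ^ 2) := by positivity
        linarith
      · have := hlc 0
        exact Continuous.intervalIntegrable (by fun_prop) _ _
      · have : ∀ᵐ t : ℝ ∂volume, t ≠ T := by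
          simp [ae_iff]
        filter_upwards [this] with t htT ht
        rw [uIoc_of_le hTpos.le] at ht
        have hw : 0 < t ^ 2 * (T - t) ^ 2 := by
          have := ht.1
          have : 0 < T - t := by
            have := lt_of_le_of_ne ht.2 htT
            linarith
          positivity
        apply Real.tendsto_exp_atBot.comp
        simp only [hl]
        apply tendsto_atBot_add_const_left
        simp only [neg_mul]
        apply tendsto_neg_atTop_atBot.comp
        exact tendsto_natCast_atTop_atTop.atTop_mul_const hw
    simp only [intervalIntegral.integral_zero] at hlim
    obtain ⟨n, hn⟩ := (hlim.eventually (gt_mem_nhds hα)).exists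
    exact ⟨_, hn.le⟩
  obtain ⟨κ1, h1⟩ := hbig
  obtain ⟨κ2, h2⟩ := hsmall
  obtain ⟨κ, hκ⟩ := mem_range_of_exists_le_of_exists_ge hIc ⟨κ2, h2⟩ ⟨κ1, h1⟩
  have lT : l κ T = Real.log b := by simp only [hl, ha0]; field_simp; ring
  have l'T : l' κ T = c / b := by simp only [hl', ha1]; field_simp; ring
  refine ⟨fun t => exp (l κ t), fun t => exp (l κ t) * l' κ t,
    fun t => exp (l κ t) * l' κ t * l' κ t + exp (l κ t) * l'' κ t, ?_⟩
  constructor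
  · intro t; exact Real.exp_pos _
  · intro t; exact (hld κ t).exp
  · intro t; exact (hld κ t).exp.mul (hld' κ t)
  · have := hlc κ
    have : Continuous (l' κ) := by simp only [hl']; fun_prop
    have : Continuous (l'' κ) := by simp only [hl'']; fun_prop
    fun_prop
  · simp [hl]
  · simp [hl']
  · rw [lT, Real.exp_log hbpos]
  · rw [lT, Real.exp_log hbpos, l'T, mul_div_cancel₀ _ hbpos.ne']
  · exact hκ

end
end Mono

namespace Mono
open Filter Topology MeasureTheory

noncomputable section

lemma root_cont {Z : Type*} [TopologicalSpace Z] (F : Z → ℝ → ℝ)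
    (hF : ∀ r, Continuous fun z => F z r) (hm : ∀ z, StrictMono (F z)) (he : ∀ z, ∃ r, F z r = 0) :
    ∃ k : Z → ℝ, Continuous k ∧ ∀ z, F z (k z) = 0 := by
  choose k hk using he
  refine ⟨k, ?_, hk⟩
  have lt1 : ∀ z c, k z < c ↔ 0 < F z c := fun z c => by rw [← hk z, (hm z).lt_iff_lt]
  have lt2 : ∀ z c, c < k z ↔ F z c < 0 := fun z c => by
    conv_rhs => rw [← hk z]
    rw [(hm z).lt_iff_lt]
  rw [continuous_iff_continuousAt]
  intro z
  refine tendsto_order.2 ⟨fun c hc => ?_, fun c hc => ?_⟩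
  · have := (hF c).continuousAt.eventually_lt (continuousAt_const (x := z)) ((lt2 z c).1 hc)
    filter_upwards [this] with z' h using (lt2 z' c).2 h
  · have := (continuousAt_const (x := z)).eventually_lt (hF c).continuousAt ((lt1 z c).1 hc)
    filter_upwards [this] with z' h using (lt1 z' c).2 h

def cl (x : ℝ) : ℝ := max 0 (min 1 x)
lemma cl_cont : Continuous cl := by unfold cl; fun_prop
lemma cl_nonneg (x : ℝ) : 0 ≤ cl x := le_max_left _ _
lemma cl_le (x : ℝ) : cl x ≤ 1 := max_le zero_le_one (min_le_left _ _)
lemma cl_of_mem {x : ℝ} (h0 : 0 ≤ x) (h1 : x ≤ 1) : cl x = x := by simp [cl, h0, h1]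
lemma cl_of_le {x : ℝ} (h0 : x ≤ 0) : cl x = 0 := by
  unfold cl; rw [max_eq_left]; exact (min_le_right _ _).trans h0
lemma cl_of_ge {x : ℝ} (h0 : 1 ≤ x) : cl x = 1 := by simp [cl, h0]

lemma exists_R (g : ℝ → ℝ) (hs : Function.Surjective g) (R0 : ℝ) :
    ∃ R : C(ℝ, ℝ), ∀ l, R0 < R l ∧ (∃ x ∈ Ioo (-(R l)) (R l), l < g x) ∧
      ∃ x ∈ Ioo (-(R l)) (R l), g x < l := by
  apply exists_continuous_forall_mem_convex_of_local_const (t := fun l : ℝ => {R : ℝ | R0 < R ∧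
    (∃ x ∈ Ioo (-R) R, l < g x) ∧ ∃ x ∈ Ioo (-R) R, g x < l})
  · intro l
    apply OrdConnected.convex
    refine ⟨fun a ha b hb c hc => ?_⟩
    obtain ⟨h1, ⟨x, hx, hx'⟩, ⟨y, hy, hy'⟩⟩ := ha
    have := hc.1
    exact ⟨by linarith, ⟨x, ⟨by linarith [hx.1], by linarith [hx.2]⟩, hx'⟩,
      ⟨y, ⟨by linarith [hy.1], by linarith [hy.2]⟩, hy'⟩⟩
  · intro l
    obtain ⟨x, hx⟩ := hs (l + 1)
    obtain ⟨y, hy⟩ := hs (l - 1)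
    refine ⟨max (R0 + 1) (max (|x| + 1) (|y| + 1)), ?_⟩
    set R := max (R0 + 1) (max (|x| + 1) (|y| + 1)) with hR
    have r0 : R0 + 1 ≤ R := le_max_left _ _
    have r1 : |x| + 1 ≤ R := (le_max_left _ _).trans (le_max_right _ _)
    have r2 : |y| + 1 ≤ R := (le_max_right _ _).trans (le_max_right _ _)
    filter_upwards [Ioo_mem_nhds (show l - 1 < l by linarith) (show l < l + 1 by linarith)] with l' hl'
    refine ⟨by linarith, ⟨x, abs_lt.1 (by linarith), by rw [hx]; exact hl'.2⟩,
      ⟨y, abs_lt.1 (by linarith), by rw [hy]; exact hl'.1⟩⟩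

lemma exp_aux (y k : ℝ) (hk : 0 ≤ k) : y + k * (max y 0) ^ 2 ≤ y * exp (k * y) := by
  rcases le_total 0 y with h | h
  · rw [max_eq_left h]
    nlinarith [Real.add_one_le_exp (k * y)]
  · rw [max_eq_right h]
    have : exp (k * y) ≤ 1 := Real.exp_le_one_iff.2 (mul_nonpos_of_nonneg_of_nonpos hk h)
    nlinarith

lemma J_strict {y : ℝ → ℝ} (hy : Continuous y) {a b : ℝ} (hab : a < b)
    (h1 : ∃ x ∈ Icc a b, 0 < y x) :
    StrictMono fun k : ℝ => ∫ z in a..b, y z * exp (k * y z) := by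
  intro k k' hkk
  apply intervalIntegral.integral_lt_integral_of_continuousOn_of_le_of_exists_lt hab
  · fun_prop
  · fun_prop
  · intro z _
    rcases le_total 0 (y z) with h | h
    · gcongr
    · apply mul_le_mul_of_nonpos_left _ h
      apply Real.exp_le_exp.2
      nlinarith
  · obtain ⟨x, hx, hx'⟩ := h1
    refine ⟨x, hx, ?_⟩
    apply mul_lt_mul_of_pos_left _ hx'
    apply Real.exp_lt_exp.2
    nlinarith

lemma J_big {y : ℝ → ℝ} (hy : Continuous y) {a b : ℝ} (hab : a < b)
    (h1 : ∃ x ∈ Icc a b, 0 < y x) : ∃ k : ℝ, 0 ≤ ∫ z in a..b, y z * exp (k * y z) := by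
  have hw : 0 < ∫ z in a..b, (max (y z) 0) ^ 2 := by
    apply intervalIntegral.integral_pos hab
    · fun_prop
    · intro z _; positivity
    · obtain ⟨x, hx, hx'⟩ := h1
      exact ⟨x, hx, by rw [max_eq_left hx'.le]; positivity⟩
  set w := ∫ z in a..b, (max (y z) 0) ^ 2
  set c := ∫ z in a..b, y z
  have hk : 0 ≤ |c| / w := by positivity
  refine ⟨|c| / w, ?_⟩
  have : c + |c| / w * w ≤ ∫ z in a..b, y z * exp (|c| / w * y z) := by
    rw [← intervalIntegral.integral_const_mul, ← intervalIntegral.integral_add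
      (hy.intervalIntegrable _ _) (Continuous.intervalIntegrable (by fun_prop) _ _)]
    apply intervalIntegral.integral_mono_on hab.le
    · exact Continuous.intervalIntegrable (by fun_prop) _ _
    · exact Continuous.intervalIntegrable (by fun_prop) _ _
    · intro z _; exact exp_aux _ _ hk
  rw [div_mul_cancel₀ _ hw.ne'] at this
  linarith [neg_abs_le c]

lemma J_root {y : ℝ → ℝ} (hy : Continuous y) {a b : ℝ} (hab : a < b)
    (h1 : ∃ x ∈ Icc a b, 0 < y x) (h2 : ∃ x ∈ Icc a b, y x < 0) :
    ∃ k : ℝ, ∫ z in a..b, y z * exp (k * y z) = 0 := by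
  have hc : Continuous fun k : ℝ => ∫ z in a..b, y z * exp (k * y z) := by
    apply intervalIntegral.continuous_parametric_intervalIntegral_of_continuous'
    simp only [Function.uncurry_def]; fun_prop
  obtain ⟨k, hk⟩ := J_big hy hab h1
  obtain ⟨k', hk'⟩ := J_big hy.neg hab (by simpa using h2)
  have hk'' : ∫ z in a..b, y z * exp (-k' * y z) ≤ 0 := by
    have : ∫ z in a..b, (-y) z * exp (k' * (-y) z) = - ∫ z in a..b, y z * exp (-k' * y z) := by
      rw [← intervalIntegral.integral_neg]
      congr 1; funext z; simp
    linarith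
  exact mem_range_of_exists_le_of_exists_ge hc ⟨_, hk''⟩ ⟨_, hk⟩

lemma exists_X (g gp : ℝ → ℝ) (hg : Continuous g) (hs : Function.Surjective g)
    (hgp : Continuous gp) (hx : ∃ x, gp x ≠ 0) :
    ∃ X : ℝ → ℝ → ℝ, Continuous (Function.uncurry X) ∧ (∀ l, ∫ w in (0:ℝ)..1, g (X l w) = l) ∧
      ∀ l, X l 0 < -1 ∧ 1 < X l 1 ∧ 0 < ∫ w in (0:ℝ)..1, gp (X l w) ^ 2 := by
  obtain ⟨x0, hx0⟩ := hx
  obtain ⟨R, hR⟩ := exists_R g hs (max 1 |x0|)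
  have hR1 : ∀ l, 1 < R l := fun l => (le_max_left _ _).trans_lt (hR l).1
  have hRx : ∀ l, |x0| < R l := fun l => (le_max_right _ _).trans_lt (hR l).1
  have hRR : ∀ l, -(R l) < R l := fun l => by linarith [hR1 l]
  have hRc : Continuous R := R.continuous
  -- exponent
  obtain ⟨k, hkc, hk⟩ := root_cont
    (fun (l : ℝ) (k : ℝ) => ∫ z in (-(R l))..(R l), (g z - l) * exp (k * (g z - l)))
    (by
      intro k
      have : (fun l : ℝ => ∫ z in (-(R l))..(R l), (g z - l) * exp (k * (g z - l))) = fun l =>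
          (∫ z in (0:ℝ)..(R l), (g z - l) * exp (k * (g z - l))) -
          ∫ z in (0:ℝ)..(-(R l)), (g z - l) * exp (k * (g z - l)) := by
        funext l
        rw [intervalIntegral.integral_interval_sub_left] <;>
          exact Continuous.intervalIntegrable (by fun_prop) _ _
      rw [this]
      apply Continuous.sub <;>
      · apply intervalIntegral.continuous_parametric_intervalIntegral_of_continuous
        · simp only [Function.uncurry_def]; fun_prop
        · fun_prop)
    (by
      intro l
      apply J_strict (y := fun z => g z - l) (by fun_prop) (hRR l)
      obtain ⟨x, hx, hx'⟩ := (hR l).2.1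
      exact ⟨x, Ioo_subset_Icc_self hx, by simpa using hx'⟩)
    (by
      intro l
      apply J_root (y := fun z => g z - l) (by fun_prop) (hRR l)
      · obtain ⟨x, hx, hx'⟩ := (hR l).2.1
        exact ⟨x, Ioo_subset_Icc_self hx, by simpa using hx'⟩
      · obtain ⟨x, hx, hx'⟩ := (hR l).2.2
        exact ⟨x, Ioo_subset_Icc_self hx, by simpa using hx'⟩)
  set ρ : ℝ → ℝ → ℝ := fun l z => exp (k l * (g z - l)) with hρ
  have hρc : Continuous (Function.uncurry ρ) := by
    simp only [hρ, Function.uncurry_def]; fun_prop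
  have hρl : ∀ l, Continuous (ρ l) := fun l => by simp only [hρ]; fun_prop
  have hρp : ∀ l z, 0 < ρ l z := fun l z => Real.exp_pos _
  set P : ℝ → ℝ → ℝ := fun l z => ∫ s in (0:ℝ)..z, ρ l s with hP
  have hPd : ∀ l z, HasDerivAt (P l) (ρ l z) z := fun l z =>
    ((hρl l).integral_hasStrictDerivAt 0 z).hasDerivAt
  have hPm : ∀ l, StrictMono (P l) := fun l =>
    strictMono_of_deriv_pos fun z => by rw [(hPd l z).deriv]; exact hρp l z
  have hPc : ∀ b : ℝ → ℝ, Continuous b → Continuous fun l => P l (b l) := by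
    intro b hb
    exact intervalIntegral.continuous_parametric_intervalIntegral_of_continuous hρc hb
  set m : ℝ → ℝ := fun l => P l (R l) - P l (-(R l)) with hm
  have hmp : ∀ l, 0 < m l := fun l => sub_pos.2 (hPm l (hRR l))
  have hmc : Continuous m := (hPc _ hRc).sub (hPc _ hRc.neg)
  obtain ⟨X, hXc, hX⟩ := root_cont
    (fun (lw : ℝ × ℝ) (z : ℝ) => P lw.1 z - P lw.1 (-(R lw.1)) - cl lw.2 * m lw.1)
    (by
      intro z
      have h1 := (hPc (fun _ => z) continuous_const).comp (continuous_fst (X := ℝ) (Y := ℝ))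
      have h2 := (hPc _ hRc.neg).comp (continuous_fst (X := ℝ) (Y := ℝ))
      have h3 := hmc.comp (continuous_fst (X := ℝ) (Y := ℝ))
      exact (h1.sub h2).sub ((cl_cont.comp continuous_snd).mul h3))
    (by
      intro lw z z' hz
      have := hPm lw.1 hz
      simp only; linarith)
    (by
      rintro ⟨l, w⟩
      have hc : ContinuousOn (P l) (Icc (-(R l)) (R l)) := fun z _ =>
        (hPd l z).continuousAt.continuousWithinAt
      have hmem : P l (-(R l)) + cl w * m l ∈ Icc (P l (-(R l))) (P l (R l)) := by
        have a := cl_nonneg w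
        have b := cl_le w
        have c := hmp l
        constructor
        · nlinarith
        · have : cl w * m l ≤ m l := by nlinarith
          simp only [hm] at this ⊢; linarith
      obtain ⟨z, _, hz⟩ := intermediate_value_Icc (hRR l).le hc hmem
      refine ⟨z, ?_⟩
      simp only [hz]; ring)
  set H : ℝ → ℝ → ℝ := fun l z => (P l z - P l (-(R l))) / m l with hH
  have hHd : ∀ l z, HasDerivAt (H l) (ρ l z / m l) z := fun l z =>
    ((hPd l z).sub_const _).div_const _
  have hH0 : ∀ l, H l (-(R l)) = 0 := fun l => by simp [hH]
  have hH1 : ∀ l, H l (R l) = 1 := fun l => by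
    simp only [hH]; exact div_self (hmp l).ne'
  have hXH : ∀ l z, z ∈ Icc (-(R l)) (R l) → X (l, H l z) = z := by
    intro l z hz
    apply (hPm l).injective
    have h := hX (l, H l z)
    have c0 : cl (H l z) = H l z := by
      apply cl_of_mem
      · apply div_nonneg _ (hmp l).le
        exact sub_nonneg.2 ((hPm l).monotone hz.1)
      · rw [div_le_one (hmp l)]
        exact sub_le_sub_right ((hPm l).monotone hz.2) _
    simp only [c0] at h
    simp only [hH] at h ⊢
    rw [div_mul_cancel₀ _ (hmp l).ne'] at h
    linarith
  have hint : ∀ l (F : ℝ → ℝ), Continuous F →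
      ∫ w in (0:ℝ)..1, F (X (l, w)) = (∫ z in (-(R l))..(R l), F z * ρ l z) / m l := by
    intro l F hF
    have hXl : Continuous fun w => F (X (l, w)) := by fun_prop
    have := intervalIntegral.integral_comp_mul_deriv (a := -(R l)) (b := R l)
      (f := H l) (f' := fun z => ρ l z / m l) (g := fun w => F (X (l, w)))
      (fun z _ => hHd l z) ((hρl l).div_const _).continuousOn hXl
    rw [hH0, hH1] at this
    rw [← this, ← intervalIntegral.integral_div]
    apply intervalIntegral.integral_congr
    intro z hz
    rw [uIcc_of_le (hRR l).le] at hz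
    simp only [Function.comp, hXH l z hz]
    ring
  refine ⟨fun l w => X (l, w), hXc, ?_, ?_⟩
  · intro l
    rw [hint l g hg, div_eq_iff (hmp l).ne']
    have h1 : m l = ∫ z in (-(R l))..(R l), ρ l z :=
      intervalIntegral.integral_interval_sub_left ((hρl l).intervalIntegrable _ _)
        ((hρl l).intervalIntegrable _ _)
    have h2 := hk l
    have h3 : ∫ z in (-(R l))..(R l), (g z - l) * exp (k l * (g z - l)) =
        (∫ z in (-(R l))..(R l), g z * ρ l z) - ∫ z in (-(R l))..(R l), l * ρ l z := by
      rw [← intervalIntegral.integral_sub]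
      · congr 1; funext z; simp only [hρ]; ring
      · have := hρl l; exact Continuous.intervalIntegrable (by fun_prop) _ _
      · have := hρl l; exact Continuous.intervalIntegrable (by fun_prop) _ _
    rw [intervalIntegral.integral_const_mul, ← h1] at h3
    linarith
  · intro l
    have e0 := hXH l (-(R l)) ⟨le_rfl, (hRR l).le⟩
    have e1 := hXH l (R l) ⟨(hRR l).le, le_rfl⟩
    rw [hH0] at e0
    rw [hH1] at e1
    refine ⟨by simp only [e0]; linarith [hR1 l], by simp only [e1]; exact hR1 l, ?_⟩
    rw [hint l (fun x => gp x ^ 2) (by fun_prop)]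
    apply div_pos _ (hmp l)
    apply intervalIntegral.integral_pos (hRR l)
    · have := hρl l; fun_prop
    · intro z _; have := hρp l z; positivity
    · refine ⟨x0, Ioo_subset_Icc_self (abs_lt.1 (hRx l)), ?_⟩
      have := hρp l x0; positivity

end
end Mono

namespace Mono
open Filter Topology MeasureTheory

noncomputable section

lemma int_le {T B : ℝ} (hT : 0 ≤ T) {f : ℝ → ℝ} (h : ∀ t ∈ Icc 0 T, |f t| ≤ B) :
    |∫ t in (0:ℝ)..T, f t| ≤ B * T := by
  have := intervalIntegral.norm_integral_le_of_norm_le_const (a := 0) (b := T) (f := f) (C := B)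
    (fun t ht => by rw [uIoc_of_le hT] at ht; exact h t ⟨ht.1.le, ht.2⟩)
  simpa [abs_of_nonneg hT] using this

lemma abs_scalar (T K : ℝ) (hT : 0 ≤ T) (hK : 0 ≤ K) : ∃ C, 0 ≤ C ∧
    ∀ (q Q Q' z z' y y' v v' w w' : ℝ → ℝ) (ξ ζ : Fin 3 → ℝ → ℝ) (Δ : Fin 3 → ℝ) (ε : ℝ),
    Continuous q → Continuous Q → Continuous Q' → (∀ l, Continuous (ξ l)) →
    (∀ l, Continuous (ζ l)) → IsSol q z z' → IsSol q y y' → IsSol Q v v' → IsSol Q' w w' →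
    v 0 = y 0 → v' 0 = y' 0 → w 0 = y 0 → w' 0 = y' 0 →
    (∀ t ∈ Icc 0 T, |Q t| ≤ K ∧ |Q' t| ≤ K ∧ |z t| ≤ K ∧ |z' t| ≤ K ∧ |y t| ≤ K ∧ |y' t| ≤ K ∧
      ∀ l, |ξ l t| ≤ K) → 0 ≤ ε → ε ≤ 1 →
    (∀ t ∈ Icc 0 T, |∫ τ in (0:ℝ)..t, (Q τ - q τ)| ≤ ε) →
    (∀ t ∈ Icc 0 T, |∫ τ in (0:ℝ)..t, (Q' τ - q τ)| ≤ ε) →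
    (∀ l, ∀ t ∈ Icc 0 T, |∫ τ in (0:ℝ)..t, (ξ l τ - ζ l τ)| ≤ ε) →
    (∀ t ∈ Icc 0 T, |Q t - Q' t - ∑ l, Δ l * ξ l t| ≤ ε * ‖Δ‖) →
    |∫ t in (0:ℝ)..T, (Q t - q t) * (z t * v t)| ≤ C * ε ∧
    |(∫ t in (0:ℝ)..T, (Q t - q t) * (z t * v t)) - (∫ t in (0:ℝ)..T, (Q' t - q t) * (z t * w t))
      - ∑ l, Δ l * ∫ t in (0:ℝ)..T, ζ l t * (z t * y t)| ≤ C * ε * ‖Δ‖ ∧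
    ∀ t ∈ Icc 0 T, |v t - y t| ≤ C * ε ∧ |v' t - y' t| ≤ C * ε := by
  obtain ⟨M1, hM1, H1⟩ := gron T K K
  set B := K + M1 with hB
  have hB0 : 0 ≤ B := by positivity
  obtain ⟨M2, hM2, H2⟩ := gron T K B
  set N := M2 * (T * (3 * K + 1)) with hN
  have hN0 : 0 ≤ N := by positivity
  have p1 : 0 ≤ K * B * T := by positivity
  have p2 : 0 ≤ K * (K * M1) * T := by positivity
  have p3 : 0 ≤ 2 * K ^ 2 * (1 + T) := by positivity
  have p4 : 0 ≤ 2 * K * N * (1 + T) := by positivity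
  have p5 : 0 ≤ 2 * K * B * (1 + T) := by positivity
  refine ⟨M1 + 2 * K * B * (1 + T) + (K * B * T + 3 * (K * (K * M1) * T + 2 * K ^ 2 * (1 + T))
    + 2 * K * N * (1 + T)), by positivity, ?_⟩
  set C := M1 + 2 * K * B * (1 + T) + (K * B * T + 3 * (K * (K * M1) * T + 2 * K ^ 2 * (1 + T))
    + 2 * K * N * (1 + T)) with hC
  intro q Q Q' z z' y y' v v' w w' ξ ζ Δ ε hq hQ hQ' hξ hζ sz sy sv sw v0 v0' w0 w0' hb hε hε1
    hPQ hPQ' hPξ hΔ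
  have vy := H1 Q q v v' y y' hQ hq sv sy v0 v0' (fun t ht => (hb t ht).1)
    (fun t ht => ⟨(hb t ht).2.2.2.2.1, (hb t ht).2.2.2.2.2.1⟩) ε hPQ
  have wy := H1 Q' q w w' y y' hQ' hq sw sy w0 w0' (fun t ht => (hb t ht).2.1)
    (fun t ht => ⟨(hb t ht).2.2.2.2.1, (hb t ht).2.2.2.2.2.1⟩) ε hPQ'
  have tri : ∀ a b c d : ℝ, |a - b| ≤ c → |b| ≤ d → |a| ≤ d + c := by
    intro a b c d h1 h2
    rw [abs_le] at *; constructor <;> linarith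
  have hM1ε : M1 * ε ≤ M1 := by nlinarith
  have bv : ∀ t ∈ Icc 0 T, |v t| ≤ B ∧ |v' t| ≤ B := fun t ht =>
    ⟨tri _ _ _ _ ((vy t ht).1.trans hM1ε) (hb t ht).2.2.2.2.1,
     tri _ _ _ _ ((vy t ht).2.trans hM1ε) (hb t ht).2.2.2.2.2.1⟩
  have bw : ∀ t ∈ Icc 0 T, |w t| ≤ B ∧ |w' t| ≤ B := fun t ht =>
    ⟨tri _ _ _ _ ((wy t ht).1.trans hM1ε) (hb t ht).2.2.2.2.1,
     tri _ _ _ _ ((wy t ht).2.trans hM1ε) (hb t ht).2.2.2.2.2.1⟩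
  have nΔ := norm_nonneg Δ
  have hsum : ∀ t ∈ Icc 0 T, |∑ l, Δ l * ξ l t| ≤ 3 * K * ‖Δ‖ := by
    intro t ht
    calc |∑ l, Δ l * ξ l t| ≤ ∑ l, |Δ l * ξ l t| := Finset.abs_sum_le_sum_abs _ _
      _ ≤ ∑ l : Fin 3, ‖Δ‖ * K := by
        apply Finset.sum_le_sum; intro l _
        rw [abs_mul]
        exact mul_le_mul (norm_le_pi_norm Δ l) ((hb t ht).2.2.2.2.2.2 l) (abs_nonneg _) nΔ
      _ = 3 * K * ‖Δ‖ := by simp; ring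
  have hQQ : ∀ t ∈ Icc 0 T, |Q t - Q' t| ≤ (3 * K + 1) * ‖Δ‖ := by
    intro t ht
    have h1 := hΔ t ht
    have h2 := hsum t ht
    have h3 : ε * ‖Δ‖ ≤ ‖Δ‖ := by nlinarith
    have := tri _ _ _ _ (h1.trans h3) h2
    linarith
  have hPP : ∀ t ∈ Icc 0 T, |∫ τ in (0:ℝ)..t, (Q τ - Q' τ)| ≤ T * (3 * K + 1) * ‖Δ‖ := by
    intro t ht
    have := int_le ht.1 (f := fun τ => Q τ - Q' τ) (B := (3 * K + 1) * ‖Δ‖)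
      (fun τ hτ => hQQ τ ⟨hτ.1, hτ.2.trans ht.2⟩)
    refine this.trans ?_
    have hh : 0 ≤ (3 * K + 1) * ‖Δ‖ := by positivity
    nlinarith [ht.2]
  have vw := H2 Q Q' v v' w w' hQ hQ' sv sw (by rw [v0, w0]) (by rw [v0', w0'])
    (fun t ht => (hb t ht).1) bw _ hPP
  have cz := sz.cont
  have cy := sy.cont
  have cv := sv.cont
  have cw := sw.cont
  have cz' := sz.cont'
  have cy' := sy.cont'
  have cv' := sv.cont'
  have cw' := sw.cont'
  have prod : ∀ a b c d : ℝ, |a| ≤ c → |b| ≤ d → |a * b| ≤ c * d := fun a b c d h1 h2 => by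
    rw [abs_mul]; exact mul_le_mul h1 h2 (abs_nonneg _) ((abs_nonneg _).trans h1)
  refine ⟨?_, ?_, ?_⟩
  · have := ibp (ζ := fun t => Q t - q t) (k := fun t => z t * v t)
      (k' := fun t => z' t * v t + z t * v' t) (hQ.sub hq) (by fun_prop)
      (fun t => (sz t).1.mul (sv t).1) (C := 2 * K * B) hT hPQ (by
        intro t ht
        have a := prod _ _ _ _ (hb t ht).2.2.1 (bv t ht).1
        have b := prod _ _ _ _ (hb t ht).2.2.2.1 (bv t ht).1
        have c := prod _ _ _ _ (hb t ht).2.2.1 (bv t ht).2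
        have kb : 0 ≤ K * B := by positivity
        exact ⟨by linarith, (abs_add_le _ _).trans (by linarith)⟩)
    refine this.trans ?_
    nlinarith
  · have I1 : |∫ t in (0:ℝ)..T, (Q t - Q' t - ∑ l, Δ l * ξ l t) * (z t * v t)|
        ≤ ε * ‖Δ‖ * (K * B) * T := int_le hT fun t ht =>
      prod _ _ _ _ (hΔ t ht) (prod _ _ _ _ (hb t ht).2.2.1 (bv t ht).1)
    have I2 : ∀ l, |∫ t in (0:ℝ)..T, ξ l t * (z t * (v t - y t))| ≤ K * (K * (M1 * ε)) * T :=
      fun l => int_le hT fun t ht => prod _ _ _ _ ((hb t ht).2.2.2.2.2.2 l)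
        (prod _ _ _ _ (hb t ht).2.2.1 (vy t ht).1)
    have I3 : ∀ l, |∫ t in (0:ℝ)..T, (ξ l t - ζ l t) * (z t * y t)| ≤
        ε * (2 * K ^ 2) * (1 + T) := by
      intro l
      refine ibp (k := fun t => z t * y t) (k' := fun t => z' t * y t + z t * y' t)
        ((hξ l).sub (hζ l)) (by fun_prop) (fun t => (sz t).1.mul (sy t).1) hT (hPξ l) ?_
      intro t ht
      have a := prod _ _ _ _ (hb t ht).2.2.1 (hb t ht).2.2.2.2.1
      have b := prod _ _ _ _ (hb t ht).2.2.2.1 (hb t ht).2.2.2.2.1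
      have c := prod _ _ _ _ (hb t ht).2.2.1 (hb t ht).2.2.2.2.2.1
      have kb : 0 ≤ K * K := by positivity
      exact ⟨by linarith, (abs_add_le _ _).trans (by linarith)⟩
    have I4 : |∫ t in (0:ℝ)..T, (Q' t - q t) * (z t * (v t - w t))| ≤
        ε * (2 * K * (N * ‖Δ‖)) * (1 + T) := by
      refine ibp (k := fun t => z t * (v t - w t))
        (k' := fun t => z' t * (v t - w t) + z t * (v' t - w' t))
        (hQ'.sub hq) (by fun_prop) (fun t => (sz t).1.mul ((sv t).1.sub (sw t).1)) hT hPQ' ?_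
      intro t ht
      have e1 : |v t - w t| ≤ N * ‖Δ‖ := (vw t ht).1.trans (le_of_eq (by rw [hN]; ring))
      have e2 : |v' t - w' t| ≤ N * ‖Δ‖ := (vw t ht).2.trans (le_of_eq (by rw [hN]; ring))
      have a := prod _ _ _ _ (hb t ht).2.2.1 e1
      have b := prod _ _ _ _ (hb t ht).2.2.2.1 e1
      have c := prod _ _ _ _ (hb t ht).2.2.1 e2
      have kb : 0 ≤ K * (N * ‖Δ‖) := by positivity
      exact ⟨by linarith, (abs_add_le _ _).trans (by linarith)⟩
    have key : (∫ t in (0:ℝ)..T, (Q t - q t) * (z t * v t))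
        - (∫ t in (0:ℝ)..T, (Q' t - q t) * (z t * w t))
        - ∑ l, Δ l * ∫ t in (0:ℝ)..T, ζ l t * (z t * y t)
        = (∫ t in (0:ℝ)..T, (Q t - Q' t - ∑ l, Δ l * ξ l t) * (z t * v t))
        + (∑ l, Δ l * ((∫ t in (0:ℝ)..T, ξ l t * (z t * (v t - y t)))
          + ∫ t in (0:ℝ)..T, (ξ l t - ζ l t) * (z t * y t)))
        + ∫ t in (0:ℝ)..T, (Q' t - q t) * (z t * (v t - w t)) := by
      have hξ0 := hξ 0
      have hξ1 := hξ 1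
      have hξ2 := hξ 2
      have hζ0 := hζ 0
      have hζ1 := hζ 1
      have hζ2 := hζ 2
      simp only [Fin.sum_univ_three, mul_add, ← intervalIntegral.integral_const_mul]
      repeat rw [← intervalIntegral.integral_add]
      repeat rw [← intervalIntegral.integral_sub]
      · congr 1; funext t; ring
      all_goals exact Continuous.intervalIntegrable (by fun_prop) _ _
    rw [key]
    have J2 : |∑ l, Δ l * ((∫ t in (0:ℝ)..T, ξ l t * (z t * (v t - y t)))
          + ∫ t in (0:ℝ)..T, (ξ l t - ζ l t) * (z t * y t))| ≤
        ∑ l : Fin 3, ‖Δ‖ * (K * (K * (M1 * ε)) * T + ε * (2 * K ^ 2) * (1 + T)) := by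
      refine (Finset.abs_sum_le_sum_abs _ _).trans (Finset.sum_le_sum fun l _ => ?_)
      exact prod _ _ _ _ (norm_le_pi_norm Δ l) ((abs_add_le _ _).trans (add_le_add (I2 l) (I3 l)))
    simp only [Finset.sum_const, Finset.card_univ, Fintype.card_fin, nsmul_eq_mul] at J2
    refine (abs_add_le _ _).trans ((add_le_add ((abs_add_le _ _).trans (add_le_add I1 J2)) I4).trans ?_)
    have : 0 ≤ (M1 + 2 * K * B * (1 + T)) * ε * ‖Δ‖ := by positivity
    rw [hC]; push_cast
    nlinarith
  · intro t ht
    have : M1 * ε ≤ C * ε := by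
      apply mul_le_mul_of_nonneg_right _ hε
      rw [hC]; nlinarith
    exact ⟨(vy t ht).1.trans this, (vy t ht).2.trans this⟩

end
end Mono

namespace Mono
open Filter Topology MeasureTheory

noncomputable section

def FF (A : Matrix (Fin 2) (Fin 2) ℝ) (Q : ℝ → ℝ) : Fin 3 → ℝ :=
  ![A 0 0 * d1 Q (2*π) - A 1 0 * v1 Q (2*π), A 0 1 * d1 Q (2*π) - A 1 1 * v1 Q (2*π) + 1,
    A 0 1 * d2 Q (2*π) - A 1 1 * v2 Q (2*π)]

def PP (q : ℝ → ℝ) (k : Fin 3) (t : ℝ) : ℝ :=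
  ![v1 q t * v1 q t, v2 q t * v1 q t, v2 q t * v2 q t] k

lemma FF_eq {A : Matrix (Fin 2) (Fin 2) ℝ} {q Q : ℝ → ℝ} (hq : Continuous q) (hQ : Continuous Q)
    (h : MonoEq q A) : FF A Q = ![∫ t in (0:ℝ)..(2*π), (Q t - q t) * (v1 q t * v1 Q t),
      ∫ t in (0:ℝ)..(2*π), (Q t - q t) * (v2 q t * v1 Q t),
      ∫ t in (0:ℝ)..(2*π), (Q t - q t) * (v2 q t * v2 Q t)] := by
  rw [wronsk_int hq hQ (isSol1 hq) (isSol1 hQ), wronsk_int hq hQ (isSol2 hq) (isSol1 hQ),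
    wronsk_int hq hQ (isSol2 hq) (isSol2 hQ)]
  obtain ⟨h1, h2, h3, h4⟩ := h
  ext k
  fin_cases k <;> simp [FF, h1, h2, h3, h4]

lemma FF_zero {A : Matrix (Fin 2) (Fin 2) ℝ} (hA : A.det = 1) {Q : ℝ → ℝ} (hQ : Continuous Q)
    (h : FF A Q = 0) : MonoEq Q A := by
  have h0 : A 0 0 * d1 Q (2*π) - A 1 0 * v1 Q (2*π) = 0 := congrFun h 0
  have h1 : A 0 1 * d1 Q (2*π) - A 1 1 * v1 Q (2*π) + 1 = 0 := congrFun h 1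
  have h2 : A 0 1 * d2 Q (2*π) - A 1 1 * v2 Q (2*π) = 0 := congrFun h 2
  have hdet : A 0 0 * A 1 1 - A 0 1 * A 1 0 = 1 := by rw [← hA, Matrix.det_fin_two]
  have hw := det_one hQ (2*π)
  set v := v1 Q (2*π)
  set w := v2 Q (2*π)
  set d := d1 Q (2*π)
  set e := d2 Q (2*π)
  have e1 : v = A 0 0 := by linear_combination (-v) * hdet + A 0 1 * h0 - A 0 0 * h1
  have e2 : d = A 1 0 := by linear_combination (-d) * hdet + A 1 1 * h0 - A 1 0 * h1
  have e3 : w = A 0 1 := by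
    rw [e1, e2] at hw
    linear_combination (-w) * hdet - A 0 0 * h2 + A 0 1 * hw
  have e4 : e = A 1 1 := by
    rw [e1, e2] at hw
    linear_combination (-e) * hdet - A 1 0 * h2 + A 1 1 * hw
  exact ⟨e1, e3, e2, e4⟩

lemma RR_low {q : ℝ → ℝ} (hq : Continuous q) {t B : ℝ} (h1 : |d1 q t| ≤ B) (h2 : |d2 q t| ≤ B) :
    1 ≤ RR q t * (2 * B ^ 2) := by
  have hd := det_one hq t
  have a := sq_le_sq' (by linarith [neg_abs_le (d1 q t)]) ((le_abs_self _).trans h1)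
  have b := sq_le_sq' (by linarith [neg_abs_le (d2 q t)]) ((le_abs_self _).trans h2)
  have c : (v1 q t * d2 q t - d1 q t * v2 q t) ^ 2 ≤ RR q t * (d1 q t ^ 2 + d2 q t ^ 2) := by
    unfold RR; nlinarith [sq_nonneg (v1 q t * d1 q t + v2 q t * d2 q t)]
  rw [hd] at c
  have := RR_pos hq t
  nlinarith

lemma abs_main (K : ℝ) (hK : 0 ≤ K) : ∃ C, 0 ≤ C ∧
    ∀ (A : Matrix (Fin 2) (Fin 2) ℝ) (q Q Q' : ℝ → ℝ) (ξ ζ : Fin 3 → ℝ → ℝ) (Δ : Fin 3 → ℝ) (ε : ℝ),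
    Continuous q → Continuous Q → Continuous Q' → (∀ l, Continuous (ξ l)) →
    (∀ l, Continuous (ζ l)) → MonoEq q A →
    (∀ t ∈ Icc 0 (2*π), |Q t| ≤ K ∧ |Q' t| ≤ K ∧ |v1 q t| ≤ K ∧ |d1 q t| ≤ K ∧ |v2 q t| ≤ K ∧
      |d2 q t| ≤ K ∧ ∀ l, |ξ l t| ≤ K) → 0 ≤ ε → ε ≤ 1 →
    (∀ t ∈ Icc 0 (2*π), |∫ τ in (0:ℝ)..t, (Q τ - q τ)| ≤ ε) →
    (∀ t ∈ Icc 0 (2*π), |∫ τ in (0:ℝ)..t, (Q' τ - q τ)| ≤ ε) →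
    (∀ l, ∀ t ∈ Icc 0 (2*π), |∫ τ in (0:ℝ)..t, (ξ l τ - ζ l τ)| ≤ ε) →
    (∀ t ∈ Icc 0 (2*π), |Q t - Q' t - ∑ l, Δ l * ξ l t| ≤ ε * ‖Δ‖) →
    (∀ k l, ∫ t in (0:ℝ)..(2*π), ζ l t * PP q k t = if k = l then 1 else 0) →
    ‖FF A Q‖ ≤ C * ε ∧ ‖FF A Q - FF A Q' - Δ‖ ≤ C * ε * ‖Δ‖ ∧
      |th Q (2*π) - th q (2*π)| ≤ C * ε := by
  have hT : (0:ℝ) ≤ 2 * π := by positivity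
  obtain ⟨C, hC, H⟩ := abs_scalar (2*π) K hT hK
  set B := K + C with hB
  have hB0 : 0 ≤ B := by positivity
  have hC2 : 0 ≤ 4 * B * C * (2 * B ^ 2) ^ 2 * (2 * π) := by positivity
  refine ⟨C + 4 * B * C * (2 * B ^ 2) ^ 2 * (2 * π), by positivity, ?_⟩
  intro A q Q Q' ξ ζ Δ ε hq hQ hQ' hξ hζ hA hb hε hε1 hPQ hPQ' hPξ hΔ hζP
  have nΔ := norm_nonneg Δ
  have H11 := H q Q Q' _ _ _ _ _ _ _ _ ξ ζ Δ ε hq hQ hQ' hξ hζ (isSol1 hq) (isSol1 hq) (isSol1 hQ)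
    (isSol1 hQ') (by simp) (by simp) (by simp) (by simp)
    (fun t ht => by obtain ⟨a, b, c, d, e, f, g⟩ := hb t ht; exact ⟨a, b, c, d, c, d, g⟩) hε hε1 hPQ hPQ' hPξ hΔ
  have H21 := H q Q Q' _ _ _ _ _ _ _ _ ξ ζ Δ ε hq hQ hQ' hξ hζ (isSol2 hq) (isSol1 hq) (isSol1 hQ)
    (isSol1 hQ') (by simp) (by simp) (by simp) (by simp)
    (fun t ht => by obtain ⟨a, b, c, d, e, f, g⟩ := hb t ht; exact ⟨a, b, e, f, c, d, g⟩) hε hε1 hPQ hPQ' hPξ hΔ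
  have H22 := H q Q Q' _ _ _ _ _ _ _ _ ξ ζ Δ ε hq hQ hQ' hξ hζ (isSol2 hq) (isSol2 hq) (isSol2 hQ)
    (isSol2 hQ') (by simp) (by simp) (by simp) (by simp)
    (fun t ht => by obtain ⟨a, b, c, d, e, f, g⟩ := hb t ht; exact ⟨a, b, e, f, e, f, g⟩) hε hε1 hPQ hPQ' hPξ hΔ
  have s1 : ∀ k, ∑ l, Δ l * ∫ t in (0:ℝ)..(2*π), ζ l t * PP q k t = Δ k := by
    intro k; simp [hζP]
  have s11 : ∑ l, Δ l * ∫ t in (0:ℝ)..(2*π), ζ l t * (v1 q t * v1 q t) = Δ 0 := s1 0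
  have s21 : ∑ l, Δ l * ∫ t in (0:ℝ)..(2*π), ζ l t * (v2 q t * v1 q t) = Δ 1 := s1 1
  have s22 : ∑ l, Δ l * ∫ t in (0:ℝ)..(2*π), ζ l t * (v2 q t * v2 q t) = Δ 2 := s1 2
  rw [s11] at H11
  rw [s21] at H21
  rw [s22] at H22
  have hCε : C * ε ≤ (C + 4 * B * C * (2 * B ^ 2) ^ 2 * (2 * π)) * ε :=
    mul_le_mul_of_nonneg_right (by linarith) hε
  refine ⟨?_, ?_, ?_⟩
  · refine le_trans ?_ hCε
    rw [FF_eq hq hQ hA, pi_norm_le_iff_of_nonneg (by positivity)]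
    intro k
    fin_cases k
    · exact H11.1
    · exact H21.1
    · exact H22.1
  · refine le_trans ?_ (mul_le_mul_of_nonneg_right hCε nΔ)
    rw [FF_eq hq hQ hA, FF_eq hq hQ' hA, pi_norm_le_iff_of_nonneg (by positivity)]
    intro k
    fin_cases k
    · exact H11.2.1
    · exact H21.2.1
    · exact H22.2.1
  · have hCle : C * ε ≤ C := by nlinarith
    have tri : ∀ a b : ℝ, |a - b| ≤ C * ε → |b| ≤ K → |a| ≤ B := by
      intro a b h1 h2
      rw [abs_le] at *; constructor <;> linarith
    have hR : ∀ t ∈ Icc 0 (2*π), |1 / RR Q t - 1 / RR q t| ≤ 4 * B * C * (2 * B ^ 2) ^ 2 * ε := by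
      intro t ht
      obtain ⟨a, b, c, d, e, f, g⟩ := hb t ht
      have x1 := H11.2.2 t ht
      have x2 := H22.2.2 t ht
      have y1 := tri _ _ x1.1 c
      have y2 := tri _ _ x1.2 d
      have y3 := tri _ _ x2.1 e
      have y4 := tri _ _ x2.2 f
      have hKB : K ≤ B := by linarith
      have l1 := RR_low hQ y2 y4
      have l2 := RR_low hq (d.trans hKB) (f.trans hKB)
      have p1 := RR_pos hQ t
      have p2 := RR_pos hq t
      have hdiff : |RR q t - RR Q t| ≤ 4 * B * C * ε := by
        have sq : ∀ a b : ℝ, |a - b| ≤ C * ε → |a| ≤ B → |b| ≤ B → |b ^ 2 - a ^ 2| ≤ C * ε * (2 * B) := by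
          intro a b h1 h2 h3
          rw [show b ^ 2 - a ^ 2 = (b - a) * (b + a) by ring, abs_mul]
          rw [abs_sub_comm] at h1
          exact mul_le_mul h1 ((abs_add_le _ _).trans (by linarith)) (abs_nonneg _)
            ((abs_nonneg _).trans h1)
        have z1 := sq _ _ x1.1 y1 (c.trans hKB)
        have z2 := sq _ _ x2.1 y3 (e.trans hKB)
        unfold RR
        rw [show v1 q t ^ 2 + v2 q t ^ 2 - (v1 Q t ^ 2 + v2 Q t ^ 2) =
          (v1 q t ^ 2 - v1 Q t ^ 2) + (v2 q t ^ 2 - v2 Q t ^ 2) by ring]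
        exact (abs_add_le _ _).trans (by linarith)
      have e1 : 1 / RR Q t - 1 / RR q t = (RR q t - RR Q t) * (1 / RR Q t) * (1 / RR q t) := by
        field_simp
      have i1 : 1 / RR Q t ≤ 2 * B ^ 2 := by rw [div_le_iff₀ p1]; linarith
      have i2 : 1 / RR q t ≤ 2 * B ^ 2 := by rw [div_le_iff₀ p2]; linarith
      rw [e1, abs_mul, abs_mul, abs_of_pos (one_div_pos.2 p1), abs_of_pos (one_div_pos.2 p2)]
      calc |RR q t - RR Q t| * (1 / RR Q t) * (1 / RR q t) ≤
          4 * B * C * ε * (2 * B ^ 2) * (2 * B ^ 2) := by gcongr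
        _ = _ := by ring
    have c1 : Continuous fun t => 1 / RR Q t :=
      continuous_const.div (RR_cont hQ) fun t => (RR_pos hQ t).ne'
    have c2 : Continuous fun t => 1 / RR q t :=
      continuous_const.div (RR_cont hq) fun t => (RR_pos hq t).ne'
    unfold th
    rw [← intervalIntegral.integral_sub (c1.intervalIntegrable _ _) (c2.intervalIntegrable _ _)]
    refine (int_le hT hR).trans ?_
    nlinarith [mul_nonneg hC hε]

end
end Mono

namespace Mono
open Filter Topology MeasureTheory
noncomputable section

def tri (x : ℝ) : ℝ := arccos (cos (2 * π * x)) / π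

theorem tri_cont : Continuous tri := by
  unfold tri
  exact (continuous_arccos.comp (by fun_prop)).div_const _

theorem tri_per (x : ℝ) : tri (x + 1) = tri x := by
  unfold tri
  rw [show 2 * π * (x + 1) = 2 * π * x + 2 * π by ring, cos_add_two_pi]

theorem tri_left {x : ℝ} (h0 : 0 ≤ x) (h1 : x ≤ 1 / 2) : tri x = 2 * x := by
  unfold tri
  have := pi_pos
  rw [arccos_cos (by positivity) (by nlinarith)]
  field_simp

theorem tri_right {x : ℝ} (h0 : 1 / 2 ≤ x) (h1 : x ≤ 1) : tri x = 2 - 2 * x := by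
  unfold tri
  have := pi_pos
  rw [show cos (2 * π * x) = cos (2 * π - 2 * π * x) by rw [cos_two_pi_sub],
    arccos_cos (by nlinarith) (by nlinarith)]
  field_simp

theorem tri_int (k : ℝ → ℝ) (hk : Continuous k) :
    ∫ x in (0:ℝ)..1, k (tri x) = ∫ w in (0:ℝ)..1, k w := by
  have hc : Continuous fun x => k (tri x) := hk.comp tri_cont
  rw [← intervalIntegral.integral_add_adjacent_intervals (b := 1/2)
    (hc.intervalIntegrable _ _) (hc.intervalIntegrable _ _)]
  have e1 : ∫ x in (0:ℝ)..(1/2), k (tri x) = ∫ x in (0:ℝ)..(1/2), k (2 * x) := by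
    apply intervalIntegral.integral_congr
    intro x hx
    rw [uIcc_of_le (by norm_num)] at hx
    simp only [tri_left hx.1 hx.2]
  have e2 : ∫ x in (1/2:ℝ)..1, k (tri x) = ∫ x in (1/2:ℝ)..1, k (2 - 2 * x) := by
    apply intervalIntegral.integral_congr
    intro x hx
    rw [uIcc_of_le (by norm_num)] at hx
    simp only [tri_right hx.1 hx.2]
  rw [e1, e2, intervalIntegral.integral_comp_mul_left k (by norm_num),
    intervalIntegral.integral_comp_sub_mul k (by norm_num)]
  norm_num
  ring

theorem exists_W (g gp : ℝ → ℝ) (hg : Continuous g) (hs : Function.Surjective g)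
    (hgp : Continuous gp) (hx : ∃ x, gp x ≠ 0) :
    ∃ W : ℝ → ℝ → ℝ, Continuous (Function.uncurry W) ∧ (∀ l x, W l (x + 1) = W l x) ∧
      (∀ l, ∫ x in (0:ℝ)..1, g (W l x) = l) ∧
      ∀ l, W l 0 < -1 ∧ 1 < W l (1/2) ∧ 0 < ∫ x in (0:ℝ)..1, gp (W l x) ^ 2 := by
  obtain ⟨X, hX, h1, h2⟩ := exists_X g gp hg hs hgp hx
  have hXl : ∀ l, Continuous (X l) := fun l => hX.comp (by fun_prop : Continuous fun w : ℝ => (l, w))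
  refine ⟨fun l x => X l (tri x), ?_, ?_, ?_, ?_⟩
  · exact hX.comp (continuous_fst.prodMk (tri_cont.comp continuous_snd))
  · intro l x; simp only [tri_per]
  · intro l
    rw [tri_int (fun w => g (X l w)) (hg.comp (hXl l)), h1]
  · intro l
    have := h2 l
    refine ⟨?_, ?_, ?_⟩
    · simp only [tri_left le_rfl (by norm_num : (0:ℝ) ≤ 1/2)]; simpa using this.1
    · simp only [tri_left (by norm_num : (0:ℝ) ≤ 1/2) le_rfl]; norm_num; exact this.2.1
    · rw [tri_int (fun w => gp (X l w) ^ 2) ((hgp.comp (hXl l)).pow 2)]; exact this.2.2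

/-- integral over one period at scale s -/
theorem per_int (k : ℝ → ℝ) (hk : ∀ x, k (x + 1) = k x) (h0 : ∫ x in (0:ℝ)..1, k x = 0)
    {s : ℝ} (hs : 0 < s) (t : ℝ) : ∫ x in t..(t + s), k (x / s) = 0 := by
  rw [intervalIntegral.integral_comp_div k hs.ne']
  have : (t + s) / s = t / s + 1 := by field_simp
  rw [this, Function.Periodic.intervalIntegral_add_eq (f := k) (T := 1) hk (t / s) 0]
  simp [h0]

theorem step_sum (D : ℝ → ℝ) (hD : Continuous D) {s e C : ℝ} (hs : 0 < s) (t0 : ℝ)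
    (T : ℝ) (hC : ∀ t ∈ Icc t0 T, |D t| ≤ C) (hC0 : 0 ≤ C)
    (he : ∀ t ∈ Icc t0 T, |∫ x in t..(t + s), D x| ≤ s * e) (n : ℕ) :
    ∀ t1 ∈ Icc t0 T, ∀ t2 ∈ Icc t1 T, t2 ≤ t1 + n * s →
      |∫ x in t1..t2, D x| ≤ (t2 - t1) * e + s * C := by
  have he0 : 0 ≤ e ∨ T < t0 := by
    by_cases h : t0 ≤ T
    · left
      have := (abs_nonneg _).trans (he t0 ⟨le_rfl, h⟩)
      by_contra hn; push Not at hn; nlinarith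
    · right; linarith
  induction n with
  | zero =>
    intro t1 h1 t2 h2 h
    have : t2 = t1 := by simp at h; linarith [h2.1]
    subst this; simp; positivity
  | succ n ih =>
    intro t1 h1 t2 h2 h
    have he0 : 0 ≤ e := by
      rcases he0 with h | h
      · exact h
      · linarith [h1.1, h1.2]
    by_cases hh : t2 ≤ t1 + s
    · have hb : ‖∫ x in t1..t2, D x‖ ≤ C * |t2 - t1| := by
        apply intervalIntegral.norm_integral_le_of_norm_le_const
        intro x hx
        rw [uIoc_of_le h2.1] at hx
        exact hC x ⟨by linarith [h1.1, hx.1], by linarith [hx.2, h2.2]⟩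
      rw [abs_of_nonneg (by linarith [h2.1]), Real.norm_eq_abs] at hb
      nlinarith [h2.1]
    · push Not at hh
      have := ih (t1 + s) ⟨by linarith [h1.1], by linarith [h2.2]⟩ t2 ⟨hh.le, h2.2⟩
        (by push_cast at h; linarith)
      rw [← intervalIntegral.integral_add_adjacent_intervals (b := t1 + s)
        (hD.intervalIntegrable _ _) (hD.intervalIntegrable _ _)]
      have h3 := he t1 h1
      have h4 := abs_add_le (∫ x in t1..(t1 + s), D x) (∫ x in (t1 + s)..t2, D x)
      nlinarith

theorem averaging {Y : Type*} [TopologicalSpace Y] (k : Y → ℝ → ℝ → ℝ)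
    (hk : Continuous fun z : Y × ℝ × ℝ => k z.1 z.2.1 z.2.2)
    (hper : ∀ y t x, k y t (x + 1) = k y t x) (h0 : ∀ y t, ∫ x in (0:ℝ)..1, k y t x = 0)
    {T : ℝ} (hT : 0 ≤ T) (y0 : Y) {ε : ℝ} (hε : 0 < ε) :
    ∃ r > 0, ∀ᶠ y in 𝓝 y0, ∀ s, 0 < s → s ≤ r → ∀ t1 ∈ Icc 0 T, ∀ t2 ∈ Icc t1 T,
      |∫ t in t1..t2, k y t (t / s)| ≤ ε := by
  have hsub : ∀ y t x, k y t x = k y t (Int.fract x) := by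
    intro y t x
    have hp : Function.Periodic (k y t) 1 := hper y t
    conv_lhs => rw [← Int.fract_add_floor x]
    have := hp.int_mul ⌊x⌋ (Int.fract x)
    simpa using this
  set e := ε / (2 * (T + 1)) with he
  have hepos : 0 < e := by positivity
  have hcomp : IsCompact (Icc (0:ℝ) (T+1) ×ˢ Icc (0:ℝ) 1) := isCompact_Icc.prod isCompact_Icc
  -- boundedness
  obtain ⟨C, hC0, hC⟩ : ∃ C, 0 ≤ C ∧ ∀ᶠ y in 𝓝 y0, ∀ z ∈ Icc (0:ℝ) (T+1) ×ˢ Icc (0:ℝ) 1,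
      |k y z.1 z.2| < C := by
    obtain ⟨C, hC⟩ := hcomp.exists_bound_of_continuousOn
      (f := fun z : ℝ × ℝ => k y0 z.1 z.2) (by
        apply Continuous.continuousOn
        exact hk.comp (by fun_prop : Continuous fun z : ℝ × ℝ => (y0, z)))
    refine ⟨|C| + 1, by positivity, ?_⟩
    apply hcomp.eventually_forall_of_forall_eventually
    intro z hz
    have h1 : |k y0 z.1 z.2| < |C| + 1 := by
      have := hC z hz; rw [Real.norm_eq_abs] at this; linarith [le_abs_self C]
    have hcc : Continuous fun w : Y × ℝ × ℝ => |k w.1 w.2.1 w.2.2| := hk.abs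
    exact hcc.continuousAt.eventually (gt_mem_nhds h1)
  have hU : ∀ᶠ x : Y × ℝ in 𝓝 (y0, 0), ∀ z ∈ Icc (0:ℝ) (T+1) ×ˢ Icc (0:ℝ) 1,
      |k x.1 (z.1 + x.2) z.2 - k x.1 z.1 z.2| < e := by
    apply hcomp.eventually_forall_of_forall_eventually
    intro z hz
    have hcc : Continuous fun w : (Y × ℝ) × ℝ × ℝ =>
        |k w.1.1 (w.2.1 + w.1.2) w.2.2 - k w.1.1 w.2.1 w.2.2| := by
      apply Continuous.abs
      apply Continuous.sub
      · exact hk.comp (by fun_prop : Continuous fun w : (Y × ℝ) × ℝ × ℝ =>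
          (w.1.1, w.2.1 + w.1.2, w.2.2))
      · exact hk.comp (by fun_prop : Continuous fun w : (Y × ℝ) × ℝ × ℝ =>
          (w.1.1, w.2.1, w.2.2))
    exact hcc.continuousAt.eventually (gt_mem_nhds (by simpa using hepos))
  rw [nhds_prod_eq] at hU
  obtain ⟨pa, hpa, pb, hpb, hab⟩ := Filter.eventually_prod_iff.1 hU
  obtain ⟨r, hr, hrb⟩ := Metric.eventually_nhds_iff.1 hpb
  refine ⟨min (min (r/2) 1) (ε / (2 * (C + 1))), by positivity, ?_⟩
  filter_upwards [hC, hpa] with y hyC hya s hs hsr t1 ht1 t2 ht2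
  have hs1 : s ≤ 1 := hsr.trans ((min_le_left _ _).trans (min_le_right _ _))
  have hs2 : s < r := by
    have := hsr.trans ((min_le_left _ _).trans (min_le_left _ _)); linarith
  have hs3 : s * (2 * (C + 1)) ≤ ε := (le_div_iff₀ (by positivity)).1 (hsr.trans (min_le_right _ _))
  have hD : Continuous fun t => k y t (t / s) :=
    hk.comp (by fun_prop : Continuous fun t : ℝ => (y, t, t / s))
  have hb : ∀ t ∈ Icc (0:ℝ) T, |k y t (t / s)| ≤ C := by
    intro t ht
    rw [hsub]
    exact (hyC (t, Int.fract (t/s)) ⟨⟨ht.1, by linarith [ht.2]⟩, (Int.fract_nonneg _),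
      (Int.fract_lt_one _).le⟩).le
  have hst : ∀ t ∈ Icc (0:ℝ) T, |∫ x in t..(t + s), k y x (x / s)| ≤ s * e := by
    intro t ht
    have hc2 : Continuous fun x => k y t (x / s) :=
      hk.comp (by fun_prop : Continuous fun x : ℝ => (y, t, x / s))
    have hz : ∫ x in t..(t + s), k y x (x / s) =
        ∫ x in t..(t + s), (k y x (x / s) - k y t (x / s)) := by
      rw [intervalIntegral.integral_sub (hD.intervalIntegrable _ _) (hc2.intervalIntegrable _ _),
        per_int (k y t) (hper y t) (h0 y t) hs t, sub_zero]
    rw [hz]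
    have hb : ‖∫ x in t..(t + s), (k y x (x / s) - k y t (x / s))‖ ≤ e * |t + s - t| := by
      apply intervalIntegral.norm_integral_le_of_norm_le_const
      intro x hx
      rw [uIoc_of_le (by linarith)] at hx
      rw [hsub y x, hsub y t, Real.norm_eq_abs]
      have hd : pb (x - t) := by
        apply hrb
        rw [Real.dist_eq, sub_zero, abs_of_nonneg (by linarith [hx.1])]
        linarith [hx.2]
      have := hab hya hd (t, Int.fract (x/s)) ⟨⟨ht.1, by linarith [ht.2]⟩, (Int.fract_nonneg _),
        (Int.fract_lt_one _).le⟩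
      simp only [add_sub_cancel] at this
      exact this.le
    rw [Real.norm_eq_abs, add_sub_cancel_left, abs_of_pos hs] at hb
    linarith
  obtain ⟨n, hn⟩ := exists_nat_gt ((t2 - t1) / s)
  have hn' : t2 ≤ t1 + n * s := by
    rw [div_lt_iff₀ hs] at hn; linarith
  have := step_sum (fun t => k y t (t / s)) hD hs 0 T hb hC0 hst n t1 ht1 t2 ht2 hn'
  have h5 : (t2 - t1) * e ≤ ε / 2 := by
    have : (T + 1) * e = ε / 2 := by rw [he]; field_simp
    nlinarith [ht1.1, ht2.2, ht2.1]
  nlinarith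

theorem int_le2 {f : ℝ → ℝ} {a b C L : ℝ} (hab : a ≤ b) (hL : b - a ≤ L) (hC : 0 ≤ C)
    (h : ∀ t ∈ Ioc a b, |f t| ≤ C) : |∫ t in a..b, f t| ≤ C * L := by
  have hb : ‖∫ x in a..b, f x‖ ≤ C * |b - a| := by
    apply intervalIntegral.norm_integral_le_of_norm_le_const
    intro x hx
    rw [uIoc_of_le hab] at hx
    exact h x hx
  rw [Real.norm_eq_abs, abs_of_nonneg (sub_nonneg.2 hab)] at hb
  nlinarith

/-- Layer splitting. -/
theorem layer {D E : ℝ → ℝ} (hD : Continuous D) {T C e s' P : ℝ} (hC : 0 ≤ C)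
    (hs : 0 ≤ s') (hDC : ∀ t ∈ Icc 0 T, |D t| ≤ C) 
    (hE : ∀ t1 ∈ Icc 0 T, ∀ t2 ∈ Icc t1 T, |∫ t in t1..t2, E t| ≤ e)
    (hDE : ∀ t ∈ Icc 0 T, s' ≤ t → t ≤ P - s' → D t = E t)
    (hD0 : ∀ t ∈ Icc 0 T, P + s' ≤ t → D t = 0) :
    ∀ t ∈ Icc 0 T, |∫ x in (0:ℝ)..t, D x| ≤ C * (3 * s') + e := by
  intro t ht
  set a1 := min s' t
  set a2 := max a1 (min (P - s') t)
  set a3 := max a2 (min (P + s') t)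
  have ha1 : 0 ≤ a1 := le_min hs ht.1
  have ha1' : a1 ≤ s' := min_le_left _ _
  have ha1t : a1 ≤ t := min_le_right _ _
  have ha12 : a1 ≤ a2 := le_max_left _ _
  have ha2t : a2 ≤ t := max_le ha1t (min_le_right _ _)
  have ha23 : a2 ≤ a3 := le_max_left _ _
  have ha3t : a3 ≤ t := max_le ha2t (min_le_right _ _)
  have hi : ∀ a b, IntervalIntegrable D volume a b := fun a b => hD.intervalIntegrable _ _
  have hsplit : ∫ x in (0:ℝ)..t, D x = (∫ x in (0:ℝ)..a1, D x) + (∫ x in a1..a2, D x)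
      + (∫ x in a2..a3, D x) + ∫ x in a3..t, D x := by
    rw [intervalIntegral.integral_add_adjacent_intervals (hi _ _) (hi _ _),
      intervalIntegral.integral_add_adjacent_intervals (hi _ _) (hi _ _),
      intervalIntegral.integral_add_adjacent_intervals (hi _ _) (hi _ _)]
  have i1 : |∫ x in (0:ℝ)..a1, D x| ≤ C * s' :=
    int_le2 ha1 (by linarith) hC fun x hx => hDC x ⟨hx.1.le, by linarith [hx.2, ht.2]⟩
  have i2 : |∫ x in a1..a2, D x| ≤ e := by
    have : ∫ x in a1..a2, D x = ∫ x in a1..a2, E x := by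
      apply intervalIntegral.integral_congr_ae
      refine Filter.Eventually.of_forall fun x hx => ?_
      rw [uIoc_of_le ha12] at hx
      have hx2 : x ≤ min (P - s') t := by
        rcases le_max_iff.1 hx.2 with h | h
        · exact absurd h (not_le.2 hx.1)
        · exact h
      have hxt : x ≤ t := hx2.trans (min_le_right _ _)
      have hs't : s' ≤ x := by
        rcases min_lt_iff.1 hx.1 with h | h
        · exact h.le
        · linarith
      exact hDE x ⟨by linarith, by linarith [ht.2]⟩ hs't (hx2.trans (min_le_left _ _))
    rw [this]
    exact hE a1 ⟨ha1, by linarith [ht.2]⟩ a2 ⟨ha12, by linarith [ht.2]⟩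
  have i3 : |∫ x in a2..a3, D x| ≤ C * (2 * s') := by
    apply int_le2 ha23 _ hC fun x hx => hDC x ⟨by linarith [hx.1], by linarith [hx.2, ht.2]⟩
    have : a3 ≤ a2 + 2 * s' := by
      apply max_le (by linarith)
      have h1 : min (P - s') t ≤ a2 := le_max_right _ _
      rcases min_choice (P - s') t with h | h
      · rw [h] at h1
        exact (min_le_left _ _).trans (by linarith)
      · rw [h] at h1
        exact (min_le_right _ _).trans (by linarith)
    linarith
  have i4 : ∫ x in a3..t, D x = 0 := by
    have : ∫ x in a3..t, D x = ∫ x in a3..t, (0:ℝ) := by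
      apply intervalIntegral.integral_congr_ae
      refine Filter.Eventually.of_forall fun x hx => ?_
      rw [uIoc_of_le ha3t] at hx
      have h1 : min (P + s') t < x := lt_of_le_of_lt (le_max_right _ _) hx.1
      have h2 : P + s' ≤ x := by
        rcases min_lt_iff.1 h1 with h | h
        · exact h.le
        · linarith [hx.2]
      exact hD0 x ⟨by linarith [hx.1], by linarith [hx.2, ht.2]⟩ h2
    rw [this]; simp
  rw [hsplit, i4, add_zero]
  have h5 := abs_add_le ((∫ x in (0:ℝ)..a1, D x) + (∫ x in a1..a2, D x)) (∫ x in a2..a3, D x)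
  have h6 := abs_add_le (∫ x in (0:ℝ)..a1, D x) (∫ x in a1..a2, D x)
  linarith

end
end Mono

namespace Mono
open Filter Topology MeasureTheory
noncomputable section

structure IsW (g gp : ℝ → ℝ) (W : ℝ → ℝ → ℝ) : Prop where
  hg : Continuous g
  hgp : Continuous gp
  hd : ∀ x, HasDerivAt g (gp x) x
  cont : Continuous (Function.uncurry W)
  per : ∀ l x, W l (x + 1) = W l x
  avg : ∀ l, ∫ x in (0:ℝ)..1, g (W l x) = l
  lo : ∀ l, W l 0 < -1
  hi : ∀ l, 1 < W l (1/2)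
  pos : ∀ l, 0 < ∫ x in (0:ℝ)..1, gp (W l x) ^ 2

structure Dat (Y : Type*) [TopologicalSpace Y] (g gp : ℝ → ℝ) (A : Matrix (Fin 2) (Fin 2) ℝ)
    (α : ℝ) where
  p : Y → ℝ
  h : Y → ℝ → ℝ
  q : Y → ℝ → ℝ
  η : Y → ℝ → ℝ
  G : Fin 3 → Y → ℝ → ℝ
  p_cont : Continuous p
  h_cont : Continuous (Function.uncurry h)
  q_cont : Continuous (Function.uncurry q)
  η_cont : Continuous (Function.uncurry η)
  G_cont : ∀ l, Continuous (Function.uncurry (G l))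
  p_nonneg : ∀ y, 0 ≤ p y
  p_le : ∀ y, p y ≤ 1
  h_per : ∀ y, h y (2 * π) = h y 0
  G_zero : ∀ l y, G l y 0 = 0
  G_end : ∀ l y, G l y (2 * π) = 0
  q_eq : ∀ y, p y < 1 → ∀ t ∈ Icc 0 (2 * π), q y t = g (h y t)
  η_eq : ∀ y, p y < 1 → ∀ t ∈ Icc 0 (2 * π), η y t = gp (h y t) ^ 2
  nc : ∀ y, p y = 0 → ∃ t1 ∈ Ioo 0 (2 * π), ∃ t2 ∈ Ioo 0 (2 * π), h y t1 ≠ h y t2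
  mono : ∀ y, MonoEq (q y) A
  th_eq : ∀ y, th (q y) (2 * π) = α
  dual : ∀ y k l, ∫ t in (0:ℝ)..(2 * π), (η y t * G l y t) * PP (q y) k t = if k = l then 1 else 0

def NN (gp : ℝ → ℝ) (W : ℝ → ℝ → ℝ) (l : ℝ) : ℝ := ∫ x in (0:ℝ)..1, gp (W l x) ^ 2

def mm (p t : ℝ) : ℝ := min t (p * (2 * π) - t)

theorem NN_cont {g gp : ℝ → ℝ} {W : ℝ → ℝ → ℝ} (hW : IsW g gp W) : Continuous (NN gp W) := by
  unfold NN
  apply intervalIntegral.continuous_parametric_intervalIntegral_of_continuous'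
  exact (hW.hgp.comp hW.cont).pow 2

theorem NN_pos {g gp : ℝ → ℝ} {W : ℝ → ℝ → ℝ} (hW : IsW g gp W) (l : ℝ) : 0 < NN gp W l := hW.pos l

section
variable {Y : Type*} [TopologicalSpace Y] {g gp : ℝ → ℝ} {A : Matrix (Fin 2) (Fin 2) ℝ} {α : ℝ}

def X0 (W : ℝ → ℝ → ℝ) (D : Dat Y g gp A α) (y : Y) (s t : ℝ) : ℝ :=
  (1 - cl (mm (D.p y) t / s)) * D.h y t + cl (mm (D.p y) t / s) * W (D.q y t) (t / s)

def VV (W : ℝ → ℝ → ℝ) (D : Dat Y g gp A α) (l : Fin 3) (y : Y) (s t : ℝ) : ℝ :=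
  cl (-(mm (D.p y) t / s)) * (gp (D.h y t) * D.G l y t) +
  cl (mm (D.p y) t / s - 1) *
    (gp (W (D.q y t) (t / s)) / NN gp W (D.q y t) * (D.η y t * D.G l y t))

def Xi (W : ℝ → ℝ → ℝ) (D : Dat Y g gp A α) (y : Y) (s : ℝ) (a : Fin 3 → ℝ) (t : ℝ) : ℝ :=
  X0 W D y s t + ∑ l, a l * VV W D l y s t

variable {W : ℝ → ℝ → ℝ} (hW : IsW g gp W) (D : Dat Y g gp A α)
include hW

theorem X0_jc {X : Type*} [TopologicalSpace X] {ys : X → Y} {s t : X → ℝ} (hy : Continuous ys)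
    (hs : Continuous s) (ht : Continuous t) (h0 : ∀ x, s x ≠ 0) :
    Continuous fun x => X0 W D (ys x) (s x) (t x) := by
  unfold X0 mm
  have hp := D.p_cont.comp hy
  have hh : Continuous fun x => D.h (ys x) (t x) := D.h_cont.comp (hy.prodMk ht)
  have hq : Continuous fun x => D.q (ys x) (t x) := D.q_cont.comp (hy.prodMk ht)
  have hw : Continuous fun x => W (D.q (ys x) (t x)) (t x / s x) :=
    hW.cont.comp (hq.prodMk (ht.div hs h0))
  have hm : Continuous fun x => cl (min (t x) (D.p (ys x) * (2 * π) - t x) / s x) :=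
    cl_cont.comp ((ht.min ((hp.mul continuous_const).sub ht)).div hs h0)
  exact ((continuous_const.sub hm).mul hh).add (hm.mul hw)

theorem VV_jc (l : Fin 3) {X : Type*} [TopologicalSpace X] {ys : X → Y} {s t : X → ℝ}
    (hy : Continuous ys)
    (hs : Continuous s) (ht : Continuous t) (h0 : ∀ x, s x ≠ 0) :
    Continuous fun x => VV W D l (ys x) (s x) (t x) := by
  unfold VV mm
  have hp := D.p_cont.comp hy
  have hh : Continuous fun x => D.h (ys x) (t x) := D.h_cont.comp (hy.prodMk ht)
  have hη : Continuous fun x => D.η (ys x) (t x) := D.η_cont.comp (hy.prodMk ht)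
  have hG : Continuous fun x => D.G l (ys x) (t x) := (D.G_cont l).comp (hy.prodMk ht)
  have hq : Continuous fun x => D.q (ys x) (t x) := D.q_cont.comp (hy.prodMk ht)
  have hw : Continuous fun x => W (D.q (ys x) (t x)) (t x / s x) :=
    hW.cont.comp (hq.prodMk (ht.div hs h0))
  have hm : Continuous fun x => (min (t x) (D.p (ys x) * (2 * π) - t x) / s x) :=
    ((ht.min ((hp.mul continuous_const).sub ht)).div hs h0)
  have hN : Continuous fun x => NN gp W (D.q (ys x) (t x)) := (NN_cont hW).comp hq
  exact ((cl_cont.comp hm.neg).mul ((hW.hgp.comp hh).mul hG)).add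
    ((cl_cont.comp (hm.sub continuous_const)).mul
      (((hW.hgp.comp hw).div hN fun x => (NN_pos hW _).ne').mul (hη.mul hG)))

theorem Xi_jc {X : Type*} [TopologicalSpace X] {ys : X → Y} {s t : X → ℝ} {a : X → Fin 3 → ℝ}
    (hy : Continuous ys) (ha : Continuous a)
    (hs : Continuous s) (ht : Continuous t) (h0 : ∀ x, s x ≠ 0) :
    Continuous fun x => Xi W D (ys x) (s x) (a x) (t x) := by
  unfold Xi
  refine (X0_jc hW D hy hs ht h0).add (continuous_finsetSum _ fun l _ => ?_)
  exact ((continuous_apply l).comp ha).mul (VV_jc hW D l hy hs ht h0)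

omit hW in
theorem locb3 (k : Y → ℝ → ℝ → ℝ)
    (hk : Continuous fun z : Y × ℝ × ℝ => k z.1 z.2.1 z.2.2)
    (hper : ∀ y t x, k y t (x + 1) = k y t x) (T : ℝ) (y0 : Y) :
    ∃ C, 0 ≤ C ∧ ∀ᶠ y in 𝓝 y0, ∀ t ∈ Icc 0 T, ∀ x, |k y t x| ≤ C := by
  have hcomp : IsCompact (Icc (0:ℝ) T ×ˢ Icc (0:ℝ) 1) := isCompact_Icc.prod isCompact_Icc
  obtain ⟨C, hC0, hC⟩ : ∃ C, 0 ≤ C ∧ ∀ᶠ y in 𝓝 y0, ∀ z ∈ Icc (0:ℝ) T ×ˢ Icc (0:ℝ) 1,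
      |k y z.1 z.2| < C := by
    obtain ⟨C, hC⟩ := hcomp.exists_bound_of_continuousOn
      (f := fun z : ℝ × ℝ => k y0 z.1 z.2) (by
        apply Continuous.continuousOn
        exact hk.comp (by fun_prop : Continuous fun z : ℝ × ℝ => (y0, z)))
    refine ⟨|C| + 1, by positivity, ?_⟩
    apply hcomp.eventually_forall_of_forall_eventually
    intro z hz
    have h1 : |k y0 z.1 z.2| < |C| + 1 := by
      have := hC z hz; rw [Real.norm_eq_abs] at this; linarith [le_abs_self C]
    have hcc : Continuous fun w : Y × ℝ × ℝ => |k w.1 w.2.1 w.2.2| := hk.abs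
    exact hcc.continuousAt.eventually (gt_mem_nhds h1)
  refine ⟨C, hC0, hC.mono fun y hy t ht x => ?_⟩
  have hp : Function.Periodic (k y t) 1 := hper y t
  have : k y t x = k y t (Int.fract x) := by
    conv_lhs => rw [← Int.fract_add_floor x]
    have := hp.int_mul ⌊x⌋ (Int.fract x)
    simpa using this
  rw [this]
  exact (hy (t, Int.fract x) ⟨ht, Int.fract_nonneg _, (Int.fract_lt_one _).le⟩).le

omit hW in
theorem locb2 (F : Y → ℝ → ℝ) (hF : Continuous (Function.uncurry F)) (T : ℝ) (y0 : Y) :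
    ∃ C, 0 ≤ C ∧ ∀ᶠ y in 𝓝 y0, ∀ t ∈ Icc 0 T, |F y t| ≤ C := by
  obtain ⟨C, h1, h2⟩ := locb3 (fun y t _ => F y t)
    (hF.comp (by fun_prop : Continuous fun z : Y × ℝ × ℝ => (z.1, z.2.1))) (fun _ _ _ => rfl) T y0
  exact ⟨C, h1, h2.mono fun y hy t ht => hy t ht 0⟩

omit [TopologicalSpace Y] in
theorem mv (K : ℝ) {ε : ℝ} (hε : 0 < ε) : ∃ δ > 0, ∀ x e1 e2, |x| ≤ K → |e1| ≤ δ → |e2| ≤ δ →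
    |g (x + e1) - g (x + e2) - gp x * (e1 - e2)| ≤ ε * |e1 - e2| := by
  have huc : UniformContinuousOn gp (Icc (-(K+1)) (K+1)) :=
    isCompact_Icc.uniformContinuousOn_of_continuous hW.hgp.continuousOn
  obtain ⟨d, hd, hd2⟩ := Metric.uniformContinuousOn_iff.1 huc ε hε
  refine ⟨min (d/2) 1, by positivity, ?_⟩
  intro x e1 e2 hx h1 h2
  have hδ1 : min (d/2) 1 ≤ 1 := min_le_right _ _
  have hδ2 : min (d/2) 1 ≤ d/2 := min_le_left _ _
  set δ := min (d/2) 1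
  have hx' := abs_le.1 hx
  have h1' := abs_le.1 h1
  have h2' := abs_le.1 h2
  have := Convex.norm_image_sub_le_of_norm_hasDerivWithin_le (f := fun z => g (x + z) - gp x * z)
    (f' := fun z => gp (x + z) - gp x) (C := ε) (s := Icc (-δ) δ) (x := e2) (y := e1)
    (fun z _ => ?_) (fun z hz => ?_) (convex_Icc _ _) h2' h1'
  · simp only [Real.norm_eq_abs] at this
    convert this using 2
    ring
  · apply HasDerivAt.hasDerivWithinAt
    have e := (hW.hd (x + z)).comp z ((hasDerivAt_id z).const_add x)
    have e2 := e.sub ((hasDerivAt_id z).const_mul (gp x))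
    simp only [mul_one] at e2
    exact e2
  · have hz1 : |z| ≤ δ := abs_le.2 hz
    have := hd2 (x + z) ⟨by linarith [hz.1], by linarith [hz.2]⟩ x ⟨by linarith, by linarith⟩
      (by rw [Real.dist_eq, add_sub_cancel_left]; linarith)
    rw [Real.dist_eq] at this
    exact this.le

omit [TopologicalSpace Y] hW in
theorem sum_bd (a : Fin 3 → ℝ) (v : Fin 3 → ℝ) {K : ℝ} (hv : ∀ l, |v l| ≤ K) :
    |∑ l, a l * v l| ≤ 3 * K * ‖a‖ := by
  have h : ∀ l, |a l * v l| ≤ K * ‖a‖ := fun l => by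
    rw [abs_mul]
    have := norm_le_pi_norm a l
    rw [Real.norm_eq_abs] at this
    have h2 := hv l
    have := mul_le_mul this h2 (abs_nonneg _) (norm_nonneg _)
    linarith
  refine (Finset.abs_sum_le_sum_abs _ _).trans ?_
  refine (Finset.sum_le_sum fun l _ => h l).trans ?_
  simp; linarith

/-- local bounds -/
theorem bounds (y0 : Y) : ∃ K, 1 ≤ K ∧ ∀ᶠ y in 𝓝 y0, ∀ s, ∀ t ∈ Icc 0 (2 * π),
    |X0 W D y s t| ≤ K ∧ (∀ l, |VV W D l y s t| ≤ K) ∧ |D.q y t| ≤ K ∧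
      ∀ l, |D.η y t * D.G l y t| ≤ K := by
  obtain ⟨Kh, hKh, eh⟩ := locb2 D.h D.h_cont (2*π) y0
  obtain ⟨Kq, hKq, eq⟩ := locb2 D.q D.q_cont (2*π) y0
  have hqc : Continuous fun z : Y × ℝ × ℝ => D.q z.1 z.2.1 :=
    D.q_cont.comp (by fun_prop : Continuous fun z : Y × ℝ × ℝ => (z.1, z.2.1))
  have hwc : Continuous fun z : Y × ℝ × ℝ => W (D.q z.1 z.2.1) z.2.2 :=
    hW.cont.comp (hqc.prodMk (by fun_prop))
  obtain ⟨Kw, hKw, ew⟩ := locb3 (fun y t x => W (D.q y t) x) hwc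
    (fun y t x => hW.per _ x) (2*π) y0
  obtain ⟨KB, hKB, eB⟩ := locb3 (fun y t x => gp (W (D.q y t) x) / NN gp W (D.q y t))
    ((hW.hgp.comp hwc).div ((NN_cont hW).comp hqc) fun x => (NN_pos hW _).ne')
    (fun y t x => by simp only [hW.per]) (2*π) y0
  have c1 : ∀ l, Continuous (Function.uncurry fun y t => gp (D.h y t) * D.G l y t) := fun l =>
    (hW.hgp.comp D.h_cont).mul (D.G_cont l)
  have c2 : ∀ l, Continuous (Function.uncurry fun y t => D.η y t * D.G l y t) := fun l =>
    D.η_cont.mul (D.G_cont l)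
  choose K1 hK1 e1 using fun l => locb2 _ (c1 l) (2*π) y0
  choose K2 hK2 e2 using fun l => locb2 _ (c2 l) (2*π) y0
  have hs1 : ∀ l, K1 l ≤ ∑ l, K1 l := fun l =>
    Finset.single_le_sum (fun i _ => hK1 i) (Finset.mem_univ l)
  have hs2 : ∀ l, K2 l ≤ ∑ l, K2 l := fun l =>
    Finset.single_le_sum (fun i _ => hK2 i) (Finset.mem_univ l)
  have hS1 : 0 ≤ ∑ l, K1 l := Finset.sum_nonneg fun i _ => hK1 i
  have hS2 : 0 ≤ ∑ l, K2 l := Finset.sum_nonneg fun i _ => hK2 i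
  set S1 := ∑ l, K1 l
  set S2 := ∑ l, K2 l
  have hBS : 0 ≤ KB * S2 := by positivity
  refine ⟨1 + Kh + Kw + Kq + S1 + S2 + KB * S2, by linarith, ?_⟩
  filter_upwards [eh, eq, ew, eB, eventually_all.2 e1, eventually_all.2 e2]
    with y yh yq yw yB y1 y2 s t ht
  refine ⟨?_, fun l => ?_, by linarith [yq t ht], fun l => by linarith [y2 l t ht, hs2 l]⟩
  · unfold X0
    have hc0 := cl_nonneg (mm (D.p y) t / s)
    have hc1 := cl_le (mm (D.p y) t / s)
    set c := cl (mm (D.p y) t / s)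
    have a1 := yh t ht
    have a2 := yw t ht (t / s)
    refine (abs_add_le _ _).trans ?_
    rw [abs_mul, abs_mul, abs_of_nonneg hc0, abs_of_nonneg (by linarith : 0 ≤ 1 - c)]
    have := abs_nonneg (D.h y t)
    have := abs_nonneg (W (D.q y t) (t / s))
    nlinarith
  · unfold VV
    have hc0 := cl_nonneg (-(mm (D.p y) t / s))
    have hc1 := cl_le (-(mm (D.p y) t / s))
    have hd0 := cl_nonneg (mm (D.p y) t / s - 1)
    have hd1 := cl_le (mm (D.p y) t / s - 1)
    set c := cl (-(mm (D.p y) t / s))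
    set d := cl (mm (D.p y) t / s - 1)
    have a1 := y1 l t ht
    have a2 := mul_le_mul (yB t ht (t / s)) ((y2 l t ht).trans (hs2 l)) (abs_nonneg _) hKB
    rw [← abs_mul] at a2
    refine (abs_add_le _ _).trans ?_
    rw [abs_mul c, abs_mul d, abs_of_nonneg hc0, abs_of_nonneg hd0]
    have b1 : c * |gp (D.h y t) * D.G l y t| ≤ S1 := by
      have := abs_nonneg (gp (D.h y t) * D.G l y t); nlinarith [hs1 l]
    have b2 := mul_le_mul hd1 a2 (abs_nonneg _) zero_le_one
    linarith

end
end
end Mono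

namespace Mono
open Filter Topology MeasureTheory
noncomputable section

theorem kA {m s : ℝ} (hs : 0 < s) (h : 2 * s ≤ m) :
    cl (m / s) = 1 ∧ cl (m / s - 1) = 1 ∧ cl (-(m / s)) = 0 := by
  have : 2 ≤ m / s := (le_div_iff₀ hs).2 h
  exact ⟨cl_of_ge (by linarith), cl_of_ge (by linarith), cl_of_le (by linarith)⟩

theorem kB {m s : ℝ} (hs : 0 < s) (h : m ≤ -(2 * s)) :
    cl (m / s) = 0 ∧ cl (m / s - 1) = 0 ∧ cl (-(m / s)) = 1 := by
  have : m / s ≤ -2 := (div_le_iff₀ hs).2 (by linarith)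
  exact ⟨cl_of_le (by linarith), cl_of_le (by linarith), cl_of_ge (by linarith)⟩

theorem kC {m s : ℝ} (hs : 0 < s) (h : m ≤ 0) :
    cl (m / s) = 0 ∧ cl (m / s - 1) = 0 := by
  have : m / s ≤ 0 := div_nonpos_of_nonpos_of_nonneg h hs.le
  exact ⟨cl_of_le (by linarith), cl_of_le (by linarith)⟩

theorem small (c : ℝ) {d : ℝ} (hd : 0 < d) : ∀ᶠ r in 𝓝[>] (0:ℝ), r * c ≤ d := by
  have h : Tendsto (fun r : ℝ => r * c) (𝓝 0) (𝓝 (0 * c)) :=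
    (continuous_id.mul continuous_const).tendsto 0
  rw [zero_mul] at h
  exact nhdsWithin_le_nhds ((h.eventually (gt_mem_nhds hd)).mono fun _ => le_of_lt)

variable {Y : Type*} [TopologicalSpace Y] {g gp : ℝ → ℝ} {A : Matrix (Fin 2) (Fin 2) ℝ} {α : ℝ}
variable {W : ℝ → ℝ → ℝ} (hW : IsW g gp W) (D : Dat Y g gp A α)
include hW

theorem g_bd (K : ℝ) : ∃ M, 0 ≤ M ∧ ∀ x, |x| ≤ K → |g x| ≤ M ∧ |gp x| ≤ M := by
  obtain ⟨a, ha⟩ := isCompact_Icc.exists_bound_of_continuousOn (s := Icc (-K) K)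
    hW.hg.continuousOn
  obtain ⟨b, hb⟩ := isCompact_Icc.exists_bound_of_continuousOn (s := Icc (-K) K)
    hW.hgp.continuousOn
  refine ⟨|a| + |b|, by positivity, fun x hx => ?_⟩
  have h1 := ha x (abs_le.1 hx)
  have h2 := hb x (abs_le.1 hx)
  rw [Real.norm_eq_abs] at h1 h2
  exact ⟨by linarith [le_abs_self a, abs_nonneg b], by linarith [le_abs_self b, abs_nonneg a]⟩

/-- averaging estimates -/
theorem avg_est (y0 : Y) {ε : ℝ} (hε : 0 < ε) : ∀ᶠ r in 𝓝[>] (0:ℝ), ∀ᶠ y in 𝓝 y0,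
    ∀ s, 0 < s → s ≤ r → ∀ t ∈ Icc 0 (2 * π),
      |∫ x in (0:ℝ)..t, (g (X0 W D y s x) - D.q y x)| ≤ ε ∧
      ∀ l, |∫ x in (0:ℝ)..t, (gp (X0 W D y s x) * VV W D l y s x - D.η y x * D.G l y x)| ≤ ε := by
  obtain ⟨K, hK1, eK⟩ := bounds hW D y0
  obtain ⟨M, hM, hMg⟩ := g_bd hW K
  have hT : (0:ℝ) ≤ 2 * π := by positivity
  have hqc : Continuous fun z : Y × ℝ × ℝ => D.q z.1 z.2.1 :=
    D.q_cont.comp (by fun_prop : Continuous fun z : Y × ℝ × ℝ => (z.1, z.2.1))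
  have hwc : Continuous fun z : Y × ℝ × ℝ => W (D.q z.1 z.2.1) z.2.2 :=
    hW.cont.comp (hqc.prodMk (by fun_prop))
  have hNc : Continuous fun z : Y × ℝ × ℝ => NN gp W (D.q z.1 z.2.1) := (NN_cont hW).comp hqc
  have hηG : ∀ l, Continuous fun z : Y × ℝ × ℝ => D.η z.1 z.2.1 * D.G l z.1 z.2.1 := fun l =>
    (D.η_cont.comp (by fun_prop : Continuous fun z : Y × ℝ × ℝ => (z.1, z.2.1))).mul
      ((D.G_cont l).comp (by fun_prop : Continuous fun z : Y × ℝ × ℝ => (z.1, z.2.1)))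
  have hWl : ∀ l, Continuous (W l) := fun l =>
    hW.cont.comp (by fun_prop : Continuous fun w : ℝ => (l, w))
  obtain ⟨r1, hr1, e1⟩ := averaging (fun y t x => g (W (D.q y t) x) - D.q y t)
    ((hW.hg.comp hwc).sub hqc) (fun y t x => by simp only [hW.per])
    (fun y t => by
      have hi : IntervalIntegrable (fun x => g (W (D.q y t) x)) volume 0 1 :=
        (hW.hg.comp (hWl _)).intervalIntegrable _ _
      rw [intervalIntegral.integral_sub hi
        (by simp), hW.avg]
      simp) hT y0 (half_pos hε)
  have e2' := fun l => averaging
    (fun y t x => (gp (W (D.q y t) x) ^ 2 / NN gp W (D.q y t) - 1) * (D.η y t * D.G l y t))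
    (((((hW.hgp.comp hwc).pow 2).div hNc fun x => (NN_pos hW _).ne').sub continuous_const).mul
      (hηG l)) (fun y t x => by simp only [hW.per])
    (fun y t => by
      have hi : IntervalIntegrable (fun x => gp (W (D.q y t) x) ^ 2 / NN gp W (D.q y t))
          volume 0 1 :=
        (((hW.hgp.comp (hWl _)).pow 2).div_const _).intervalIntegrable _ _
      rw [intervalIntegral.integral_mul_const, intervalIntegral.integral_sub hi
        (by simp), intervalIntegral.integral_div]
      have := (NN_pos hW (D.q y t)).ne'
      change (NN gp W (D.q y t) / _ - _) * _ = _
      rw [div_self this]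
      simp) hT y0 (half_pos hε)
  choose r2 hr2 e2 using e2'
  have hr2' : ∀ᶠ r in 𝓝[>] (0:ℝ), ∀ l, r ≤ r2 l := eventually_all.2 fun l => by
    simpa using small 1 (hr2 l)
  have hr1' : ∀ᶠ r in 𝓝[>] (0:ℝ), r ≤ r1 := by simpa using small 1 hr1
  filter_upwards [hr1', hr2', small (6 * (M + M * K + K)) (half_pos hε)] with r c1 c2 c3
  filter_upwards [eK, e1, eventually_all.2 e2] with y yK y1 y2 s hs hsr
  have hMK : 0 ≤ M * K := by positivity
  have hs6 : (M + M * K + K) * (3 * (2 * s)) ≤ ε / 2 := by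
    nlinarith
  have cX : Continuous fun t => X0 W D y s t :=
    X0_jc hW D continuous_const continuous_const continuous_id fun _ => hs.ne'
  have cV : ∀ l, Continuous fun t => VV W D l y s t := fun l =>
    VV_jc hW D l continuous_const continuous_const continuous_id fun _ => hs.ne'
  have cq : Continuous (D.q y) := D.q_cont.comp (by fun_prop : Continuous fun t : ℝ => (y, t))
  have cη : Continuous (D.η y) := D.η_cont.comp (by fun_prop : Continuous fun t : ℝ => (y, t))
  have cG : ∀ l, Continuous (D.G l y) := fun l =>
    (D.G_cont l).comp (by fun_prop : Continuous fun t : ℝ => (y, t))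
  have hp1 : ∀ t ∈ Icc 0 (2 * π), D.p y * (2 * π) + 2 * s ≤ t → D.p y < 1 := by
    intro t ht h
    by_contra hc
    push Not at hc
    have := ht.2
    nlinarith
  have hin : ∀ t, 2 * s ≤ t → t ≤ D.p y * (2 * π) - 2 * s → 2 * s ≤ mm (D.p y) t := fun t h1 h2 =>
    le_min h1 (by linarith)
  have hout : ∀ t, D.p y * (2 * π) + 2 * s ≤ t → mm (D.p y) t ≤ -(2 * s) := fun t h1 =>
    (min_le_right _ _).trans (by linarith)
  intro t ht
  constructor
  · have := layer (D := fun x => g (X0 W D y s x) - D.q y x)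
      (E := fun x => g (W (D.q y x) (x / s)) - D.q y x) (T := 2 * π) (C := M + M * K + K)
      (e := ε / 2) (s' := 2 * s) (P := D.p y * (2 * π))
      ((hW.hg.comp cX).sub cq) (by positivity) (by positivity) ?_ (y1 s hs (hsr.trans c1)) ?_ ?_ t ht
    · linarith
    · intro x hx
      obtain ⟨b1, b2, b3, b4⟩ := yK s x hx
      have := (hMg _ b1).1
      have := abs_sub (g (X0 W D y s x)) (D.q y x)
      linarith
    · intro x hx h1 h2
      obtain ⟨k1, k2, k3⟩ := kA hs (hin x h1 h2)
      simp only [X0, k1]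
      simp
    · intro x hx h1
      obtain ⟨k1, k2, k3⟩ := kB hs (hout x h1)
      simp only [X0, k1]
      rw [D.q_eq y (hp1 x hx h1) x hx]
      simp
  · intro l
    have := layer (D := fun x => gp (X0 W D y s x) * VV W D l y s x - D.η y x * D.G l y x)
      (E := fun x => (gp (W (D.q y x) (x / s)) ^ 2 / NN gp W (D.q y x) - 1) *
        (D.η y x * D.G l y x)) (T := 2 * π) (C := M + M * K + K)
      (e := ε / 2) (s' := 2 * s) (P := D.p y * (2 * π))
      (((hW.hgp.comp cX).mul (cV l)).sub (cη.mul (cG l))) (by positivity) (by positivity) ?_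
      (y2 l s hs (hsr.trans (c2 l))) ?_ ?_ t ht
    · linarith
    · intro x hx
      obtain ⟨b1, b2, b3, b4⟩ := yK s x hx
      have h1 := mul_le_mul (hMg _ b1).2 (b2 l) (abs_nonneg _) hM
      rw [← abs_mul] at h1
      have := b4 l
      have := abs_sub (gp (X0 W D y s x) * VV W D l y s x) (D.η y x * D.G l y x)
      linarith
    · intro x hx h1 h2
      obtain ⟨k1, k2, k3⟩ := kA hs (hin x h1 h2)
      have := (NN_pos hW (D.q y x)).ne'
      simp only [X0, VV, k1, k2, k3]
      simp only [sub_self, zero_mul, zero_add, one_mul]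
      ring
    · intro x hx h1
      obtain ⟨k1, k2, k3⟩ := kB hs (hout x h1)
      simp only [X0, VV, k1, k2, k3]
      rw [D.η_eq y (hp1 x hx h1) x hx]
      simp only [sub_zero, zero_mul, add_zero, one_mul]
      ring

theorem est [FirstCountableTopology Y] (y0 : Y) {ε : ℝ} (hε : 0 < ε) :
    ∀ᶠ r in 𝓝[>] (0:ℝ), ∀ᶠ y in 𝓝 y0,
    ∀ s, 0 < s → s ≤ r → ∀ a a' : Fin 3 → ℝ, ‖a‖ ≤ r → ‖a'‖ ≤ r →
      ‖FF A (fun t => g (Xi W D y s a t))‖ ≤ ε ∧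
      ‖FF A (fun t => g (Xi W D y s a t)) - FF A (fun t => g (Xi W D y s a' t)) - (a - a')‖
        ≤ ε * ‖a - a'‖ ∧
      |th (fun t => g (Xi W D y s a t)) (2 * π) - α| ≤ ε := by
  obtain ⟨K, hK1, eK⟩ := bounds hW D y0
  obtain ⟨M, hM, hMg⟩ := g_bd hW (K + 1)
  obtain ⟨k1, hk1, e1⟩ := locb2 (fun y t => v1 (D.q y) t) (v1_cont D.q_cont) (2*π) y0
  obtain ⟨k2, hk2, e2⟩ := locb2 (fun y t => v2 (D.q y) t) (v2_cont D.q_cont) (2*π) y0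
  obtain ⟨k3, hk3, e3⟩ := locb2 (fun y t => d1 (D.q y) t) (d1_cont D.q_cont) (2*π) y0
  obtain ⟨k4, hk4, e4⟩ := locb2 (fun y t => d2 (D.q y) t) (d2_cont D.q_cont) (2*π) y0
  have hMK : 0 ≤ M * K := by positivity
  obtain ⟨C, hC, main⟩ := abs_main (M + M * K + k1 + k2 + k3 + k4) (by positivity)
  have hπ := pi_pos
  set e := min 1 (ε / (C + 1)) with he
  have he0 : 0 < e := by positivity
  have he1 : e ≤ 1 := min_le_left _ _
  have heC : C * e ≤ ε := by
    have : e * (C + 1) ≤ ε := (le_div_iff₀ (by positivity)).1 (min_le_right _ _)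
    nlinarith
  obtain ⟨δ, hδ, hmv⟩ := mv hW K (ε := e / (3 * K)) (by positivity)
  filter_upwards [avg_est hW D y0 (half_pos he0), small (3 * K) hδ, small (3 * K) one_pos,
    small (2 * π * (e + 3 * M * K)) (half_pos he0)] with r ra rδ r1 r2
  filter_upwards [ra, eK, e1, e2, e3, e4] with y ya yK y1 y2 y3 y4 s hs hsr
  have hab : ∀ a : Fin 3 → ℝ, ‖a‖ ≤ r → ∀ t ∈ Icc 0 (2 * π),
      |∑ l, a l * VV W D l y s t| ≤ δ ∧ |∑ l, a l * VV W D l y s t| ≤ 1 := by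
    intro a ha t ht
    have := sum_bd a _ (yK s t ht).2.1
    constructor <;> nlinarith
  have hc4 : ∀ a a' : Fin 3 → ℝ, ‖a‖ ≤ r → ‖a'‖ ≤ r → ∀ t ∈ Icc 0 (2 * π),
      |g (Xi W D y s a t) - g (Xi W D y s a' t) -
        ∑ l, (a - a') l * (gp (X0 W D y s t) * VV W D l y s t)| ≤ e * ‖a - a'‖ := by
    intro a a' ha ha' t ht
    have h1 := hmv (X0 W D y s t) _ _ (yK s t ht).1 (hab a ha t ht).1 (hab a' ha' t ht).1
    have hs1 : ∑ l, a l * VV W D l y s t - ∑ l, a' l * VV W D l y s t =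
        ∑ l, (a - a') l * VV W D l y s t := by
      rw [← Finset.sum_sub_distrib]
      exact Finset.sum_congr rfl fun l _ => by simp only [Pi.sub_apply]; ring
    have hs2 : gp (X0 W D y s t) * ∑ l, (a - a') l * VV W D l y s t =
        ∑ l, (a - a') l * (gp (X0 W D y s t) * VV W D l y s t) := by
      rw [Finset.mul_sum]
      exact Finset.sum_congr rfl fun l _ => by ring
    rw [hs1, hs2] at h1
    have h3 := sum_bd (a - a') _ (yK s t ht).2.1
    refine h1.trans ((mul_le_mul_of_nonneg_left h3 (by positivity)).trans ?_)
    apply le_of_eq; field_simp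
  have cX : Continuous fun t => X0 W D y s t :=
    X0_jc hW D continuous_const continuous_const continuous_id fun _ => hs.ne'
  have cV : ∀ l, Continuous fun t => VV W D l y s t := fun l =>
    VV_jc hW D l continuous_const continuous_const continuous_id fun _ => hs.ne'
  have cq : Continuous (D.q y) := D.q_cont.comp (by fun_prop : Continuous fun t : ℝ => (y, t))
  have cη : Continuous (D.η y) := D.η_cont.comp (by fun_prop : Continuous fun t : ℝ => (y, t))
  have cG : ∀ l, Continuous (D.G l y) := fun l =>
    (D.G_cont l).comp (by fun_prop : Continuous fun t : ℝ => (y, t))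
  have cQ : ∀ a, Continuous fun t => g (Xi W D y s a t) := fun a =>
    hW.hg.comp (Xi_jc hW D continuous_const continuous_const continuous_const continuous_id
      fun _ => hs.ne')
  have cQ0 : Continuous fun t => g (X0 W D y s t) := hW.hg.comp cX
  have hX0 : ∀ t, Xi W D y s 0 t = X0 W D y s t := fun t => by simp [Xi]
  have hξ : ∀ t ∈ Icc 0 (2 * π), ∀ l, |gp (X0 W D y s t) * VV W D l y s t| ≤ M * K := by
    intro t ht l
    rw [abs_mul]
    exact mul_le_mul (hMg _ ((yK s t ht).1.trans (by linarith))).2 ((yK s t ht).2.1 l)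
      (abs_nonneg _) hM
  have hr0 : 0 ≤ r := by linarith
  have hQb : ∀ a : Fin 3 → ℝ, ‖a‖ ≤ r → ∀ t ∈ Icc 0 (2 * π), |g (Xi W D y s a t)| ≤ M := by
    intro a ha t ht
    apply (hMg _ _).1
    have h1 := (hab a ha t ht).2
    have h2 := (yK s t ht).1
    have := abs_add_le (X0 W D y s t) (∑ l, a l * VV W D l y s t)
    unfold Xi
    linarith
  have hP : ∀ a : Fin 3 → ℝ, ‖a‖ ≤ r → ∀ t ∈ Icc 0 (2 * π),
      |∫ x in (0:ℝ)..t, (g (Xi W D y s a x) - D.q y x)| ≤ e := by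
    intro a ha t ht
    have hsp : ∫ x in (0:ℝ)..t, (g (Xi W D y s a x) - D.q y x) =
        (∫ x in (0:ℝ)..t, (g (Xi W D y s a x) - g (X0 W D y s x))) +
          ∫ x in (0:ℝ)..t, (g (X0 W D y s x) - D.q y x) := by
      have i1 : IntervalIntegrable (fun x => g (Xi W D y s a x) - g (X0 W D y s x)) volume 0 t :=
        ((cQ a).sub cQ0).intervalIntegrable _ _
      have i2 : IntervalIntegrable (fun x => g (X0 W D y s x) - D.q y x) volume 0 t :=
        (cQ0.sub cq).intervalIntegrable _ _
      rw [← intervalIntegral.integral_add i1 i2]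
      congr 1; ext x; ring
    have hb1 : |∫ x in (0:ℝ)..t, (g (Xi W D y s a x) - g (X0 W D y s x))| ≤
        (r * (e + 3 * M * K)) * (2 * π) := by
      apply int_le2 ht.1 (by linarith [ht.2]) (by positivity)
      intro x hx
      have hx' : x ∈ Icc 0 (2 * π) := ⟨hx.1.le, hx.2.trans ht.2⟩
      have h1 := hc4 a 0 ha (by simpa using hr0) x hx'
      rw [hX0, sub_zero] at h1
      have h2 := sum_bd a _ (hξ x hx')
      have h3 := abs_add_le (g (Xi W D y s a x) - g (X0 W D y s x) -
        ∑ l, a l * (gp (X0 W D y s x) * VV W D l y s x))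
        (∑ l, a l * (gp (X0 W D y s x) * VV W D l y s x))
      rw [sub_add_cancel] at h3
      have h4 : (e + 3 * M * K) * ‖a‖ ≤ (e + 3 * M * K) * r :=
        mul_le_mul_of_nonneg_left ha (by positivity)
      nlinarith
    rw [hsp]
    have h3 := abs_add_le (∫ x in (0:ℝ)..t, (g (Xi W D y s a x) - g (X0 W D y s x)))
      (∫ x in (0:ℝ)..t, (g (X0 W D y s x) - D.q y x))
    have h4 := (ya s hs hsr t ht).1
    nlinarith
  intro a a' ha ha'
  obtain ⟨f1, f2, f3⟩ := main A (D.q y) (fun t => g (Xi W D y s a t))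
    (fun t => g (Xi W D y s a' t)) (fun l t => gp (X0 W D y s t) * VV W D l y s t)
    (fun l t => D.η y t * D.G l y t) (a - a') e cq (cQ a) (cQ a')
    (fun l => (hW.hgp.comp cX).mul (cV l)) (fun l => cη.mul (cG l)) (D.mono y)
    (fun t ht => by
      have b1 := hQb a ha t ht
      have b2 := hQb a' ha' t ht
      have b3 := y1 t ht
      have b4 := y2 t ht
      have b5 := y3 t ht
      have b6 := y4 t ht
      refine ⟨by linarith, by linarith, by linarith, by linarith, by linarith, by linarith,
        fun l => ?_⟩
      have := hξ t ht l
      linarith) he0.le he1 (hP a ha) (hP a' ha')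
    (fun l t ht => by
      have := (ya s hs hsr t ht).2 l
      linarith) (hc4 a a' ha ha') (fun k l => D.dual y k l)
  rw [D.th_eq] at f3
  exact ⟨f1.trans heC, f2.trans (mul_le_mul_of_nonneg_right heC (norm_nonneg _)), f3.trans heC⟩

theorem nonconst (y0 : Y) : ∀ᶠ r in 𝓝[>] (0:ℝ), ∀ᶠ y in 𝓝 y0,
    ∀ s, 0 < s → s ≤ r → ∀ a : Fin 3 → ℝ, ‖a‖ ≤ r →
      ∃ t1 ∈ Ioo 0 (2 * π), ∃ t2 ∈ Ioo 0 (2 * π), Xi W D y s a t1 ≠ Xi W D y s a t2 := by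
  obtain ⟨K, hK1, eK⟩ := bounds hW D y0
  have hπ := pi_pos
  rcases (D.p_nonneg y0).eq_or_lt with h0 | h0
  · obtain ⟨t1, ht1, t2, ht2, hne⟩ := D.nc y0 h0.symm
    have hch : ∀ t, Continuous fun y => D.h y t := fun t =>
      D.h_cont.comp (by fun_prop : Continuous fun y : Y => (y, t))
    have hc : Continuous fun y => |D.h y t1 - D.h y t2| := ((hch t1).sub (hch t2)).abs
    have hd0 : 0 < |D.h y0 t1 - D.h y0 t2| := abs_pos.2 (sub_ne_zero.2 hne)
    have hd := hc.continuousAt.eventually (lt_mem_nhds (half_lt_self hd0))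
    set d := |D.h y0 t1 - D.h y0 t2|
    have hpc : Continuous fun y => D.p y * (2 * π) := D.p_cont.mul continuous_const
    have hp1 := hpc.continuousAt.eventually (gt_mem_nhds
      (show D.p y0 * (2 * π) < t1 by rw [← h0]; simpa using ht1.1))
    have hp2 := hpc.continuousAt.eventually (gt_mem_nhds
      (show D.p y0 * (2 * π) < t2 by rw [← h0]; simpa using ht2.1))
    filter_upwards [small (3 * K) (d := d / 8) (by positivity)] with r hr
    filter_upwards [eK, hd, hp1, hp2] with y yK yd yp1 yp2 s hs hsr a ha
    refine ⟨t1, ht1, t2, ht2, fun heq => ?_⟩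
    have key : ∀ t ∈ Ioo 0 (2 * π), D.p y * (2 * π) < t → |Xi W D y s a t - D.h y t| ≤ d / 8 := by
      intro t ht hlt
      have hm : mm (D.p y) t ≤ 0 := (min_le_right _ _).trans (by linarith)
      have hb := sum_bd a _ (yK s t ⟨ht.1.le, ht.2.le⟩).2.1
      have : Xi W D y s a t - D.h y t = ∑ l, a l * VV W D l y s t := by
        simp only [Xi, X0, (kC hs hm).1]; ring
      rw [this]
      nlinarith
    have a1 := abs_le.1 (key t1 ht1 yp1)
    have a2 := abs_le.1 (key t2 ht2 yp2)
    rcases lt_abs.1 yd with h | h <;> linarith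
  · have hp := D.p_cont.continuousAt.eventually (lt_mem_nhds (half_lt_self h0))
    filter_upwards [small (3 * K) one_pos, small 5 (d := D.p y0 * π) (by positivity)]
      with r hr hr2
    filter_upwards [eK, hp] with y yK yp s hs hsr a ha
    have hp2 : s * (5 / 2) ≤ D.p y * (2 * π) := by nlinarith
    have hp1 := D.p_le y
    have key : ∀ t ∈ Ioo 0 (2 * π), s ≤ mm (D.p y) t →
        |Xi W D y s a t - W (D.q y t) (t / s)| ≤ 1 := by
      intro t ht hm
      have hb := sum_bd a _ (yK s t ⟨ht.1.le, ht.2.le⟩).2.1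
      have : Xi W D y s a t - W (D.q y t) (t / s) = ∑ l, a l * VV W D l y s t := by
        have h1 : cl (mm (D.p y) t / s) = 1 := cl_of_ge ((le_div_iff₀ hs).2 (by linarith))
        simp only [Xi, X0, h1]; ring
      rw [this]
      nlinarith
    have hT1 : s ∈ Ioo 0 (2 * π) := ⟨hs, by nlinarith⟩
    have hT2 : 3 / 2 * s ∈ Ioo 0 (2 * π) := ⟨by positivity, by nlinarith⟩
    refine ⟨s, hT1, 3 / 2 * s, hT2, fun heq => ?_⟩
    have b1 := abs_le.1 (key s hT1 (le_min le_rfl (by linarith)))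
    have b2 := abs_le.1 (key (3 / 2 * s) hT2 (le_min (by linarith) (by linarith)))
    have w1 : W (D.q y s) (s / s) = W (D.q y s) 0 := by
      rw [div_self hs.ne', ← hW.per _ 0, zero_add]
    have w2 : W (D.q y (3 / 2 * s)) (3 / 2 * s / s) = W (D.q y (3 / 2 * s)) (1 / 2) := by
      rw [mul_div_assoc, div_self hs.ne', ← hW.per _ (1/2)]; norm_num
    rw [w1] at b1
    rw [w2] at b2
    linarith [hW.lo (D.q y s), hW.hi (D.q y (3 / 2 * s))]

end
end Mono

namespace Mono
open Filter Topology MeasureTheory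
noncomputable section

theorem sol_congr {Q q : ℝ → ℝ} (hQ : Continuous Q) (hq : Continuous q)
    (h : ∀ t ∈ Icc 0 (2 * π), Q t = q t) {y y' z z' : ℝ → ℝ} (hy : IsSol Q y y') (hz : IsSol q z z')
    (h0 : y 0 = z 0) (h0' : y' 0 = z' 0) : ∀ t ∈ Icc 0 (2 * π), y t = z t ∧ y' t = z' t := by
  obtain ⟨K, hK⟩ := isCompact_Icc.exists_bound_of_continuousOn (s := Icc 0 (2*π)) hQ.continuousOn
  obtain ⟨C1, hC1⟩ := isCompact_Icc.exists_bound_of_continuousOn (s := Icc 0 (2*π))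
    (continuous_iff_continuousAt.2 fun t => (hz t).1.continuousAt).continuousOn
  obtain ⟨C2, hC2⟩ := isCompact_Icc.exists_bound_of_continuousOn (s := Icc 0 (2*π))
    (continuous_iff_continuousAt.2 fun t => (hz t).2.continuousAt).continuousOn
  obtain ⟨M, hM, H⟩ := gron (2*π) K (max C1 C2)
  intro t ht
  have := H Q q y y' z z' hQ hq hy hz h0 h0' hK (fun t ht =>
    ⟨(hC1 t ht).trans (le_max_left _ _), (hC2 t ht).trans (le_max_right _ _)⟩) 0 (fun t ht => by
      have : ∫ τ in (0:ℝ)..t, (Q τ - q τ) = ∫ τ in (0:ℝ)..t, (0:ℝ) := by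
        apply intervalIntegral.integral_congr
        intro x hx
        rw [uIcc_of_le ht.1] at hx
        simp [h x ⟨hx.1, hx.2.trans ht.2⟩]
      rw [this]; simp) t ht
  rw [mul_zero] at this
  exact ⟨sub_eq_zero.1 (abs_nonpos_iff.1 this.1), sub_eq_zero.1 (abs_nonpos_iff.1 this.2)⟩

theorem mono_congr {Q q : ℝ → ℝ} (hQ : Continuous Q) (hq : Continuous q)
    (h : ∀ t ∈ Icc 0 (2 * π), Q t = q t) {A : Matrix (Fin 2) (Fin 2) ℝ} :
    (MonoEq q A → MonoEq Q A) ∧ th Q (2 * π) = th q (2 * π) := by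
  have s1 := sol_congr hQ hq h (isSol1 hQ) (isSol1 hq) (by simp) (by simp)
  have s2 := sol_congr hQ hq h (isSol2 hQ) (isSol2 hq) (by simp) (by simp)
  have hT : (0:ℝ) ≤ 2 * π := by positivity
  have he : 2 * π ∈ Icc 0 (2 * π) := ⟨hT, le_rfl⟩
  constructor
  · rintro ⟨h1, h2, h3, h4⟩
    exact ⟨(s1 _ he).1.trans h1, (s2 _ he).1.trans h2, (s1 _ he).2.trans h3, (s2 _ he).2.trans h4⟩
  · unfold th
    apply intervalIntegral.integral_congr
    intro x hx
    rw [uIcc_of_le hT] at hx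
    simp only [RR, (s1 x hx).1, (s2 x hx).1]

theorem FF_congr {A : Matrix (Fin 2) (Fin 2) ℝ} {Q q : ℝ → ℝ} (hQ : Continuous Q)
    (hq : Continuous q) (h : ∀ t ∈ Icc 0 (2 * π), Q t = q t) (hm : MonoEq q A) : FF A Q = 0 := by
  have : ∀ F : ℝ → ℝ, ∫ t in (0:ℝ)..(2*π), (Q t - q t) * F t = 0 := by
    intro F
    have : ∫ t in (0:ℝ)..(2*π), (Q t - q t) * F t = ∫ t in (0:ℝ)..(2*π), (0:ℝ) := by
      apply intervalIntegral.integral_congr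
      intro x hx
      rw [uIcc_of_le (by positivity)] at hx
      simp [h x hx]
    rw [this]; simp
  rw [FF_eq hq hQ hm]
  ext i
  fin_cases i <;> simp [this]

theorem FF_cont {X : Type*} [TopologicalSpace X] [FirstCountableTopology X]
    (A : Matrix (Fin 2) (Fin 2) ℝ) {q : X → ℝ → ℝ} (hq : Continuous (Function.uncurry q)) :
    Continuous fun x => FF A (q x) := by
  have e : Continuous fun x : X => (x, 2 * π) := by fun_prop
  have c1 := (v1_cont hq).comp e
  have c2 := (v2_cont hq).comp e
  have c3 := (d1_cont hq).comp e
  have c4 := (d2_cont hq).comp e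
  simp only [Function.comp_def] at c1 c2 c3 c4
  refine continuous_pi fun i => ?_
  fin_cases i <;> simp only [FF] <;> simp <;> fun_prop

theorem th_eq_of_close {Q : ℝ → ℝ} (hQ : Continuous Q) {A : Matrix (Fin 2) (Fin 2) ℝ} {α : ℝ}
    (hrow : ∃ r : ℝ, 0 < r ∧ A 0 0 = r * Real.cos α ∧ A 0 1 = r * Real.sin α)
    (hm : MonoEq Q A) (hc : |th Q (2 * π) - α| ≤ 1) : th Q (2 * π) = α := by
  obtain ⟨r, hr, h0, h1⟩ := hrow
  obtain ⟨p1, p2⟩ := polar hQ (2 * π)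
  rw [hm.1, h0] at p1
  rw [hm.2.1, h1] at p2
  have hR : 0 < √(RR Q (2 * π)) := Real.sqrt_pos.2 (RR_pos hQ _)
  set ρ := √(RR Q (2 * π))
  set θ := th Q (2 * π)
  have e1 := sin_sq_add_cos_sq α
  have e2 := sin_sq_add_cos_sq θ
  have hsq : r ^ 2 = ρ ^ 2 := by
    calc r ^ 2 = (r * cos α) ^ 2 + (r * sin α) ^ 2 := by linear_combination (-r^2) * e1
      _ = (ρ * cos θ) ^ 2 + (ρ * sin θ) ^ 2 := by rw [p1, p2]
      _ = ρ ^ 2 := by linear_combination (ρ^2) * e2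
  have hrr : r = ρ := by
    rcases sq_eq_sq_iff_eq_or_eq_neg.1 hsq with h | h
    · exact h
    · linarith
  rw [hrr] at p1 p2
  have c1 : cos α = cos θ := mul_left_cancel₀ hR.ne' p1
  have c2 : sin α = sin θ := mul_left_cancel₀ hR.ne' p2
  have : cos (θ - α) = 1 := by rw [cos_sub, c1, c2]; linarith
  have hπ := pi_gt_three
  have h3 := abs_le.1 hc
  have := (cos_eq_one_iff_of_lt_of_lt (by linarith) (by linarith)).1 this
  linarith

theorem convex_down {P : ℝ → Prop} (h : ∀ a b, 0 < a → a ≤ b → P b → P a) :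
    Convex ℝ {r : ℝ | 0 < r ∧ P r} := by
  apply Set.OrdConnected.convex
  refine ⟨fun x hx y hy z hz => ⟨lt_of_lt_of_le hx.1 hz.1, ?_⟩⟩
  exact h z y (lt_of_lt_of_le hx.1 hz.1) hz.2 hy.2

theorem per_ext {Y : Type*} [TopologicalSpace Y] {F : Y → ℝ → ℝ}
    (hF : Continuous (Function.uncurry F)) (h : ∀ y, F y 0 = F y (2 * π)) :
    Continuous (Function.uncurry fun y t => F y (2 * π * Int.fract (t / (2 * π)))) := by
  have := ContinuousOn.comp_fract (β := Y × ℝ) (α := ℝ) (γ := ℝ)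
    (s := fun z => z.2 / (2 * π)) (f := fun z x => F z.1 (2 * π * x))
    (by
      apply Continuous.continuousOn
      exact hF.comp (by fun_prop : Continuous fun w : (Y × ℝ) × ℝ => (w.1.1, 2 * π * w.2)))
    (by fun_prop) (fun z => by simpa using h z.1)
  exact this

theorem tau_eq {t : ℝ} (h0 : 0 ≤ t) (h1 : t < 2 * π) : 2 * π * Int.fract (t / (2 * π)) = t := by
  have hπ : 0 < 2 * π := by positivity
  rw [Int.fract_eq_self.2 ⟨by positivity, (div_lt_one hπ).2 h1⟩]
  field_simp

variable {Y : Type*} {g gp : ℝ → ℝ} {A : Matrix (Fin 2) (Fin 2) ℝ} {α : ℝ} {W : ℝ → ℝ → ℝ}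

theorem Xi_ends [TopologicalSpace Y] (D : Dat Y g gp A α) (y : Y) {s : ℝ} (hs : 0 < s)
    (a : Fin 3 → ℝ) :
    Xi W D y s a 0 = D.h y 0 ∧ Xi W D y s a (2 * π) = D.h y 0 := by
  have h0 : mm (D.p y) 0 ≤ 0 := min_le_left _ _
  have h1 : mm (D.p y) (2 * π) ≤ 0 := (min_le_right _ _).trans (by
    nlinarith [D.p_le y, pi_pos])
  constructor
  · simp [Xi, X0, VV, D.G_zero, (kC hs h0).1, (kC hs h0).2]
  · simp [Xi, X0, VV, D.G_end, (kC hs h1).1, (kC hs h1).2, D.h_per]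

set_option maxHeartbeats 1000000 in
theorem core [MetricSpace Y] (hA : A.det = 1)
    (hrow : ∃ r : ℝ, 0 < r ∧ A 0 0 = r * Real.cos α ∧ A 0 1 = r * Real.sin α)
    (hW : IsW g gp W) (D : Dat Y g gp A α) :
    ∃ U : Y → ℝ → ℝ, Continuous (Function.uncurry U) ∧ ∀ y, Function.Periodic (U y) (2 * π) ∧
      (∃ t1 t2, U y t1 ≠ U y t2) ∧ MonoEq (fun t => g (U y t)) A ∧
      th (fun t => g (U y t)) (2 * π) = α ∧
      (D.p y = 0 → ∀ t ∈ Ico 0 (2 * π), U y t = D.h y t) := by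
  set F : Y → ℝ → (Fin 3 → ℝ) → (Fin 3 → ℝ) := fun y s a => FF A (fun t => g (Xi W D y s a t))
    with hF
  set Good : Y → ℝ → Prop := fun y r => ∀ s, 0 < s → s ≤ r → ∀ a a' : Fin 3 → ℝ, ‖a‖ ≤ r →
    ‖a'‖ ≤ r → ‖F y s a - F y s a' - (a - a')‖ ≤ 1 / 2 * ‖a - a'‖ ∧
      |th (fun t => g (Xi W D y s a t)) (2 * π) - α| ≤ 1 ∧
      ∃ t1 ∈ Ioo 0 (2 * π), ∃ t2 ∈ Ioo 0 (2 * π), Xi W D y s a t1 ≠ Xi W D y s a t2 with hGood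
  obtain ⟨r, hr⟩ := exists_continuous_forall_mem_convex_of_local_const
    (t := fun y : Y => {r : ℝ | 0 < r ∧ Good y r})
    (fun y => convex_down fun a b _ hab hb s hs hsa c c' hc hc' =>
      hb s hs (hsa.trans hab) c c' (hc.trans hab) (hc'.trans hab)) (by
    intro y0
    have h1 := est hW D y0 (ε := 1 / 2) (by norm_num)
    have h2 := nonconst hW D y0
    obtain ⟨c, ⟨h1, h2⟩, hc⟩ := ((h1.and h2).and self_mem_nhdsWithin).exists
    refine ⟨c, ?_⟩
    filter_upwards [h1, h2] with y y1 y2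
    refine ⟨hc, fun s hs hsc a a' ha ha' => ?_⟩
    obtain ⟨_, b2, b3⟩ := y1 s hs hsc a a' ha ha'
    exact ⟨b2, by linarith, y2 s hs hsc a ha⟩)
  have hr0 : ∀ y, 0 < r y := fun y => (hr y).1
  have hrG : ∀ y, Good y (r y) := fun y => (hr y).2
  obtain ⟨s, hs⟩ := exists_continuous_forall_mem_convex_of_local_const
    (t := fun y : Y => {s : ℝ | 0 < s ∧ (s ≤ r y ∧ ∀ s', 0 < s' → s' ≤ s → ‖F y s' 0‖ ≤ r y / 4)})
    (fun y => convex_down fun a b _ hab hb =>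
      ⟨hab.trans hb.1, fun s' hs' hs'a => hb.2 s' hs' (hs'a.trans hab)⟩) (by
    intro y0
    have h1 := est hW D y0 (ε := r y0 / 8) (by linarith [hr0 y0])
    have h2 := small 1 (half_pos (hr0 y0))
    obtain ⟨c, ⟨h1, h2⟩, hc⟩ := ((h1.and h2).and self_mem_nhdsWithin).exists
    refine ⟨c, ?_⟩
    have h3 := r.continuous.continuousAt.eventually (lt_mem_nhds (half_lt_self (hr0 y0)))
    filter_upwards [h1, h3] with y y1 y3
    have hc' : 0 < c := hc
    refine ⟨hc', by linarith, fun s' h1 h2 => ?_⟩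
    have := (y1 s' h1 h2 0 0 (by simpa using hc'.le) (by simpa using hc'.le)).1
    change ‖F y s' 0‖ ≤ _ at this
    linarith)
  have hs0 : ∀ y, 0 < s y := fun y => (hs y).1
  have hsr : ∀ y, s y ≤ r y := fun y => (hs y).2.1
  have hF0 : ∀ y, ‖F y (s y) 0‖ ≤ r y / 4 := fun y => (hs y).2.2 _ (hs0 y) le_rfl
  have hcon : ∀ y a a', ‖a‖ ≤ r y → ‖a'‖ ≤ r y →
      ‖F y (s y) a - F y (s y) a' - (a - a')‖ ≤ 1 / 2 * ‖a - a'‖ := fun y a a' h h' =>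
    (hrG y (s y) (hs0 y) (hsr y) a a' h h').1
  have hex : ∀ y, ∃ a : Fin 3 → ℝ, ‖a‖ ≤ r y / 2 ∧ F y (s y) a = 0 := by
    intro y
    set T : (Fin 3 → ℝ) → (Fin 3 → ℝ) := fun a => a - F y (s y) a with hT
    have hry := hr0 y
    have hTd : ∀ a a', ‖a‖ ≤ r y / 2 → ‖a'‖ ≤ r y / 2 → ‖T a - T a'‖ ≤ 1 / 2 * ‖a - a'‖ := by
      intro a a' h h'
      have := hcon y a a' (by linarith) (by linarith)
      rw [← norm_neg] at this
      have e : T a - T a' = -(F y (s y) a - F y (s y) a' - (a - a')) := by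
        change (a - F y (s y) a) - (a' - F y (s y) a') = _
        abel
      rw [e]; exact this
    have hmaps : MapsTo T (Metric.closedBall 0 (r y / 2)) (Metric.closedBall 0 (r y / 2)) := by
      intro a ha
      rw [mem_closedBall_zero_iff] at ha ⊢
      have h1 := hTd a 0 ha (by rw [norm_zero]; linarith)
      have h2 : ‖T 0‖ ≤ r y / 4 := by simpa [hT] using hF0 y
      have h3 := norm_add_le (T a - T 0) (T 0)
      rw [sub_add_cancel] at h3
      rw [sub_zero] at h1
      linarith
    have hctr : ContractingWith (1/2) (hmaps.restrict T _ _) := by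
      refine ⟨by norm_num, ?_⟩
      refine LipschitzWith.of_dist_le_mul fun a b => ?_
      rw [Subtype.dist_eq, Subtype.dist_eq, dist_eq_norm, dist_eq_norm]
      have := hTd a b (mem_closedBall_zero_iff.1 a.2) (mem_closedBall_zero_iff.1 b.2)
      simpa using this
    obtain ⟨a, ha, hfix, -⟩ := hctr.exists_fixedPoint' Metric.isClosed_closedBall.isComplete hmaps
      (x := 0) (by rw [mem_closedBall_zero_iff, norm_zero]; linarith) (edist_ne_top _ _)
    refine ⟨a, mem_closedBall_zero_iff.1 ha, ?_⟩
    have : a - F y (s y) a = a := hfix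
    simpa using this
  choose a ha hFa using hex
  have hac : Continuous a := by
    rw [continuous_iff_continuousAt]
    intro y1
    have hcF : Continuous fun y => ‖F y (s y) (a y1)‖ := by
      apply Continuous.norm
      apply FF_cont A
      exact hW.hg.comp (Xi_jc hW D continuous_fst continuous_const
        (s.continuous.comp continuous_fst) continuous_snd fun z => (hs0 z.1).ne')
    have ht : Tendsto (fun y => 2 * ‖F y (s y) (a y1)‖) (𝓝 y1) (𝓝 0) := by
      have := (hcF.const_mul 2 : Continuous fun y => 2 * ‖F y (s y) (a y1)‖).tendsto y1
      simpa [hFa] using this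
    rw [ContinuousAt, tendsto_iff_norm_sub_tendsto_zero]
    refine squeeze_zero' (Eventually.of_forall fun _ => norm_nonneg _) ?_ ht
    filter_upwards [r.continuous.continuousAt.eventually (lt_mem_nhds (half_lt_self (hr0 y1)))]
      with y hy
    have h1 := hcon y (a y1) (a y) ((ha y1).trans hy.le) ((ha y).trans (by linarith [hr0 y]))
    rw [hFa y, sub_zero] at h1
    have h2 := norm_sub_norm_le (a y1 - a y) (F y (s y) (a y1))
    rw [norm_sub_rev (a y1 - a y), norm_sub_rev (a y1) (a y)] at h2
    rw [norm_sub_rev (a y1) (a y)] at h1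
    linarith
  have hXc : Continuous (Function.uncurry fun y t => Xi W D y (s y) (a y) t) :=
    Xi_jc hW D continuous_fst (hac.comp continuous_fst)
        (s.continuous.comp continuous_fst) continuous_snd fun z => (hs0 z.1).ne'
  have hends : ∀ y, Xi W D y (s y) (a y) 0 = Xi W D y (s y) (a y) (2 * π) := fun y => by
    rw [(Xi_ends D y (hs0 y) (a y)).1, (Xi_ends D y (hs0 y) (a y)).2]
  have hUc := per_ext hXc hends
  have hπ : (0:ℝ) < 2 * π := by positivity
  refine ⟨fun y t => Xi W D y (s y) (a y) (2 * π * Int.fract (t / (2 * π))), hUc, fun y => ?_⟩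
  have hXy : Continuous fun t => Xi W D y (s y) (a y) t :=
    hXc.uncurry_left y
  have hUy : Continuous fun t => Xi W D y (s y) (a y) (2 * π * Int.fract (t / (2 * π))) :=
    hUc.uncurry_left y
  have har : ‖a y‖ ≤ r y := (ha y).trans (by linarith [hr0 y])
  obtain ⟨-, hth, t1, ht1, t2, ht2, hne⟩ := hrG y (s y) (hs0 y) (hsr y) (a y) (a y) har har
  have hUX : ∀ t ∈ Icc 0 (2 * π),
      g (Xi W D y (s y) (a y) (2 * π * Int.fract (t / (2 * π)))) = g (Xi W D y (s y) (a y) t) := by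
    intro t ht
    rcases ht.2.eq_or_lt with h | h
    · rw [h, div_self hπ.ne', ← hends y]; simp
    · rw [tau_eq ht.1 h]
  have hm : MonoEq (fun t => g (Xi W D y (s y) (a y) t)) A := FF_zero hA (hW.hg.comp hXy) (hFa y)
  have hcg := mono_congr (A := A)
    (Q := fun t => g (Xi W D y (s y) (a y) (2 * π * Int.fract (t / (2 * π)))))
    (q := fun t => g (Xi W D y (s y) (a y) t)) (hW.hg.comp hUy) (hW.hg.comp hXy) hUX
  refine ⟨?_, ⟨t1, t2, ?_⟩, hcg.1 hm, ?_, ?_⟩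
  · intro t
    simp only
    rw [add_div, div_self hπ.ne', Int.fract_add_one]
  · simp only
    rwa [tau_eq ht1.1.le ht1.2, tau_eq ht2.1.le ht2.2]
  · exact hcg.2.trans (th_eq_of_close (hW.hg.comp hXy) hrow hm hth)
  · intro hp t ht
    simp only
    rw [tau_eq ht.1 ht.2]
    have hX0 : ∀ t, X0 W D y (s y) t = D.h y t := by
      intro t
      have : mm (D.p y) t ≤ 0 := by
        rw [hp]; unfold mm
        rcases le_total t 0 with h | h
        · exact (min_le_left _ _).trans h
        · exact (min_le_right _ _).trans (by linarith)
      simp [X0, (kC (hs0 y) this).1]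
    have hX00 : ∀ t, Xi W D y (s y) 0 t = D.h y t := fun t => by simp [Xi, hX0]
    have hhc : Continuous (D.h y) := D.h_cont.comp (by fun_prop : Continuous fun t : ℝ => (y, t))
    have hqc : Continuous (D.q y) := D.q_cont.comp (by fun_prop : Continuous fun t : ℝ => (y, t))
    have hz : F y (s y) 0 = 0 := by
      apply FF_congr (q := D.q y) _ hqc _ (D.mono y)
      · simp only [hX00]; exact hW.hg.comp hhc
      · intro t ht
        rw [hX00, D.q_eq y (by rw [hp]; norm_num) t ht]
    have h1 := hcon y (a y) 0 har (by simpa using (hr0 y).le)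
    rw [hFa, hz, sub_zero, sub_zero, zero_sub, norm_neg] at h1
    have h2 : ‖a y‖ = 0 := le_antisymm (by linarith) (norm_nonneg _)
    rw [norm_eq_zero.1 h2, hX00]

end
end Mono

namespace Mono
open Filter Topology MeasureTheory
noncomputable section

lemma ev_deriv_zero {S S' : ℝ → ℝ} (h : ∀ t, HasDerivAt S (S' t) t) {t0 : ℝ}
    (h0 : ∀ᶠ t in 𝓝 t0, S t = 0) : ∀ᶠ t in 𝓝 t0, S' t = 0 := by
  filter_upwards [h0.eventually_nhds] with t ht
  have : HasDerivAt S 0 t := (hasDerivAt_const t (0:ℝ)).congr_of_eventuallyEq ht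
  exact (h t).unique this

lemma quad_zero {q : ℝ → ℝ} (hq : Continuous q) {a b c t0 : ℝ}
    (h0 : ∀ᶠ t in 𝓝 t0, a * v1 q t ^ 2 + b * (v2 q t * v1 q t) + c * v2 q t ^ 2 = 0) :
    a = 0 ∧ b = 0 ∧ c = 0 := by
  have hx := fun t => (isSol1 hq t).1
  have hx' := fun t => (isSol1 hq t).2
  have hy := fun t => (isSol2 hq t).1
  have hy' := fun t => (isSol2 hq t).2
  have k1 : ∀ t, HasDerivAt (fun t => a * v1 q t ^ 2 + b * (v2 q t * v1 q t) + c * v2 q t ^ 2)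
      (2 * a * v1 q t * d1 q t + b * (d2 q t * v1 q t + v2 q t * d1 q t) + 2 * c * v2 q t * d2 q t) t := by
    intro t
    refine (((((hx t).pow 2).const_mul a).add (((hy t).mul (hx t)).const_mul b)).add
      (((hy t).pow 2).const_mul c)).congr_deriv ?_
    push_cast; ring
  have h1 := ev_deriv_zero k1 h0
  have k2 : ∀ t, HasDerivAt (fun t => 2 * a * v1 q t * d1 q t + b * (d2 q t * v1 q t + v2 q t * d1 q t) + 2 * c * v2 q t * d2 q t)
      (2 * (a * d1 q t ^ 2 + b * (d2 q t * d1 q t) + c * d2 q t ^ 2) +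
        2 * q t * (a * v1 q t ^ 2 + b * (v2 q t * v1 q t) + c * v2 q t ^ 2)) t := by
    intro t
    refine (((((hx t).const_mul (2 * a)).mul (hx' t)).add ((((hy' t).mul (hx t)).add
      ((hy t).mul (hx' t))).const_mul b)).add
      (((hy t).const_mul (2*c)).mul (hy' t))).congr_deriv ?_
    ring
  have h2 := ev_deriv_zero k2 h1
  have e0 := h0.self_of_nhds
  have e1 := h1.self_of_nhds
  have e2 := h2.self_of_nhds
  have hd := det_one hq t0
  rw [e0] at e2
  generalize v1 q t0 = x at *
  generalize v2 q t0 = y at *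
  generalize d1 q t0 = x' at *
  generalize d2 q t0 = y' at *
  have e3 : a * x' ^ 2 + b * (y' * x') + c * y' ^ 2 = 0 := by linarith
  have n2 : (x * y' - x' * y) ^ 2 = 1 := by rw [hd]; norm_num
  refine ⟨?_, ?_, ?_⟩
  · have : a * (x * y' - x' * y) ^ 2 = 0 := by
      linear_combination y' ^ 2 * e0 - y * y' * e1 + y ^ 2 * e3
    simpa [n2] using this
  · have : b * (x * y' - x' * y) ^ 2 = 0 := by
      linear_combination (-2 * x' * y') * e0 + (x * y' + x' * y) * e1 - 2 * x * y * e3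
    simpa [n2] using this
  · have : c * (x * y' - x' * y) ^ 2 = 0 := by
      linear_combination x' ^ 2 * e0 - x * x' * e1 + x ^ 2 * e3
    simpa [n2] using this

lemma PP_cont {Y : Type*} [TopologicalSpace Y] [FirstCountableTopology Y] {q : Y → ℝ → ℝ}
    (hq : Continuous (Function.uncurry q)) (k : Fin 3) :
    Continuous fun z : Y × ℝ => PP (q z.1) k z.2 := by
  have h1 := v1_cont hq
  have h2 := v2_cont hq
  fin_cases k <;> simp [PP] <;> fun_prop

def GM (q η : ℝ → ℝ) : Matrix (Fin 3) (Fin 3) ℝ := Matrix.of fun k i =>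
  ∫ t in (0:ℝ)..(2 * π), (η t * (1 - cos t)) * (PP q i t * PP q k t)

lemma PP_cont1 {q : ℝ → ℝ} (hq : Continuous q) (k : Fin 3) : Continuous (PP q k) := by
  have h1 := (isSol1 hq).cont
  have h2 := (isSol2 hq).cont
  change Continuous fun t => PP q k t
  fin_cases k <;> simp only [PP] <;> simp <;> fun_prop

lemma GM_det {q η : ℝ → ℝ} (hq : Continuous q) (hη : Continuous η)
    (h0 : ∀ t ∈ Icc 0 (2 * π), 0 ≤ η t) (h1 : ∃ t ∈ Ioo 0 (2 * π), 0 < η t) :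
    (GM q η).det ≠ 0 := by
  intro hdet
  obtain ⟨v, hv, hM⟩ := Matrix.exists_mulVec_eq_zero_iff.2 hdet
  have hP := PP_cont1 hq
  set S : ℝ → ℝ := fun t => ∑ i, v i * PP q i t with hS
  have hSc : Continuous S := by simp only [hS]; fun_prop
  have hint : ∫ t in (0:ℝ)..(2 * π), (η t * (1 - cos t)) * S t ^ 2 = 0 := by
    have e1 : ∀ t, (η t * (1 - cos t)) * S t ^ 2 =
        ∑ k, ∑ i, v k * v i * ((η t * (1 - cos t)) * (PP q i t * PP q k t)) := by
      intro t
      simp only [hS, Fin.sum_univ_three]; ring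
    simp only [e1]
    rw [intervalIntegral.integral_finsetSum]
    · have e2 : ∀ k, ∫ t in (0:ℝ)..(2 * π), ∑ i, v k * v i * ((η t * (1 - cos t)) * (PP q i t * PP q k t))
          = v k * (GM q η *ᵥ v) k := by
        intro k
        rw [intervalIntegral.integral_finsetSum]
        · simp only [intervalIntegral.integral_const_mul, Matrix.mulVec, dotProduct, GM, Matrix.of_apply,
            Fin.sum_univ_three]
          ring
        · intro i _
          apply Continuous.intervalIntegrable
          have := hP i; have := hP k
          fun_prop
      simp [e2, hM]
    · intro k _
      apply Continuous.intervalIntegrable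
      have := hP k
      fun_prop
  obtain ⟨t0, ht0, hη0⟩ := h1
  have hnn : ∀ t ∈ Icc 0 (2 * π), 0 ≤ (η t * (1 - cos t)) * S t ^ 2 := by
    intro t ht
    have := h0 t ht
    have := cos_le_one t
    have : 0 ≤ 1 - cos t := by linarith
    positivity
  have hz : ∀ t ∈ Ioo 0 (2 * π), (η t * (1 - cos t)) * S t ^ 2 = 0 := by
    intro t ht
    by_contra hne
    have hpos : 0 < ∫ t in (0:ℝ)..(2 * π), (η t * (1 - cos t)) * S t ^ 2 := by
      apply intervalIntegral.integral_pos (by positivity) (by fun_prop)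
      · intro x hx; exact hnn x ⟨hx.1.le, hx.2⟩
      · exact ⟨t, ⟨ht.1.le, ht.2.le⟩, lt_of_le_of_ne (hnn t ⟨ht.1.le, ht.2.le⟩) (Ne.symm hne)⟩
    linarith
  have hev : ∀ᶠ t in 𝓝 t0, S t = 0 := by
    filter_upwards [isOpen_Ioo.mem_nhds ht0, hη.continuousAt.eventually_const_lt hη0] with t ht hp
    have hc : cos t < 1 := by
      refine lt_of_le_of_ne (cos_le_one t) fun h => ?_
      rw [Real.cos_eq_one_iff_of_lt_of_lt (by linarith [ht.1, ht.2]) ht.2] at h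
      exact ht.1.ne' h
    have := hz t ht
    have h3 : η t * (1 - cos t) ≠ 0 := mul_ne_zero hp.ne' (by linarith)
    simpa [h3] using this
  have := quad_zero hq (a := v 0) (b := v 1) (c := v 2) (t0 := t0) (by
    filter_upwards [hev] with t ht
    rw [← ht]; simp [hS, Fin.sum_univ_three, PP]; ring)
  apply hv
  funext i
  fin_cases i
  exacts [this.1, this.2.1, this.2.2]

def GG (q η : ℝ → ℝ) (l : Fin 3) (t : ℝ) : ℝ :=
  (1 - cos t) * ∑ i, ((GM q η).det⁻¹ * (GM q η).adjugate i l) * PP q i t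

lemma GM_cont {Y : Type*} [TopologicalSpace Y] [FirstCountableTopology Y] {q η : Y → ℝ → ℝ}
    (hq : Continuous (Function.uncurry q)) (hη : Continuous (Function.uncurry η)) :
    Continuous fun y => GM (q y) (η y) := by
  apply continuous_matrix
  intro k i
  simp only [GM, Matrix.of_apply]
  apply intervalIntegral.continuous_parametric_intervalIntegral_of_continuous'
  have h1 := PP_cont hq i
  have h2 := PP_cont hq k
  have h3 : Continuous fun z : Y × ℝ => η z.1 z.2 := hη
  unfold Function.uncurry
  fun_prop

lemma GG_cont {Y : Type*} [TopologicalSpace Y] [FirstCountableTopology Y] {q η : Y → ℝ → ℝ}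
    (hq : Continuous (Function.uncurry q)) (hη : Continuous (Function.uncurry η))
    (hd : ∀ y, (GM (q y) (η y)).det ≠ 0) (l : Fin 3) :
    Continuous (Function.uncurry fun y t => GG (q y) (η y) l t) := by
  have hM := GM_cont hq hη
  have hP := PP_cont hq
  have hdet : Continuous fun y => (GM (q y) (η y)).det⁻¹ := (hM.matrix_det).inv₀ hd
  have hadj : ∀ i, Continuous fun y => (GM (q y) (η y)).adjugate i l := fun i =>
    hM.matrix_adjugate.matrix_elem i l
  unfold GG Function.uncurry
  refine Continuous.mul (by fun_prop) (continuous_finsetSum _ fun i _ => ?_)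
  exact ((hdet.comp continuous_fst).mul ((hadj i).comp continuous_fst)).mul (hP i)

lemma GG_dual {q η : ℝ → ℝ} (hq : Continuous q) (hη : Continuous η)
    (hd : (GM q η).det ≠ 0) (k l : Fin 3) :
    ∫ t in (0:ℝ)..(2 * π), (η t * GG q η l t) * PP q k t = if k = l then 1 else 0 := by
  have hP := PP_cont1 hq
  have e1 : ∀ t, (η t * GG q η l t) * PP q k t =
      ∑ i, ((GM q η).det⁻¹ * (GM q η).adjugate i l) * ((η t * (1 - cos t)) * (PP q i t * PP q k t)) := by
    intro t
    simp only [GG, Fin.sum_univ_three]; ring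
  simp only [e1]
  rw [intervalIntegral.integral_finsetSum]
  · simp only [intervalIntegral.integral_const_mul]
    have h2 : ((GM q η) * (GM q η).adjugate) k l = (GM q η).det * (if k = l then 1 else 0) := by
      rw [Matrix.mul_adjugate, Matrix.smul_apply, Matrix.one_apply, smul_eq_mul]
    rw [Matrix.mul_apply] at h2
    calc _ = (GM q η).det⁻¹ * ∑ j, GM q η k j * (GM q η).adjugate j l := by
            rw [Finset.mul_sum]
            refine Finset.sum_congr rfl fun i _ => ?_
            have : GM q η k i = ∫ t in (0:ℝ)..(2 * π), (η t * (1 - cos t)) * (PP q i t * PP q k t) := rfl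
            rw [this]; ring
      _ = _ := by rw [h2]; field_simp
  · intro i _
    apply Continuous.intervalIntegrable
    have := hP i; have := hP k
    fun_prop

end
end Mono

namespace Mono
open Filter Topology MeasureTheory
noncomputable section

lemma flat_aux {g : ℝ → ℝ} (hnf : NowhereFlat g) {a b : ℝ} (hab : a < b) :
    ∃ x ∈ Ioo a b, deriv g x ≠ 0 := by
  by_contra hcon
  push Not at hcon
  obtain ⟨r, _, hr⟩ := hnf
  obtain ⟨r', h0, _, h1⟩ := hr ((a + b) / 2)
  obtain ⟨k, rfl⟩ : ∃ k, r' = k + 1 := ⟨r' - 1, by omega⟩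
  apply h1
  rw [iteratedDeriv_succ']
  have he : deriv g =ᶠ[𝓝 ((a + b) / 2)] fun _ => 0 := by
    filter_upwards [isOpen_Ioo.mem_nhds (show (a + b) / 2 ∈ Ioo a b from
      ⟨by linarith, by linarith⟩)] with x hx using hcon x hx
  rw [(he.iteratedDeriv k).self_of_nhds]
  simp

lemma flat_comp {g u : ℝ → ℝ} (hnf : NowhereFlat g) (hu : Continuous u) {T t1 t2 : ℝ}
    (h1 : t1 ∈ Ioo 0 T) (h2 : t2 ∈ Ioo 0 T) (h : u t1 ≠ u t2) :
    ∃ t ∈ Ioo 0 T, deriv g (u t) ≠ 0 := by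
  obtain ⟨x, hx, hx'⟩ := flat_aux hnf (inf_lt_sup.2 h)
  obtain ⟨t, ht, rfl⟩ := intermediate_value_uIcc hu.continuousOn
    (show x ∈ uIcc (u t1) (u t2) from ⟨hx.1.le, hx.2.le⟩)
  refine ⟨t, ?_, hx'⟩
  have : uIcc t1 t2 ⊆ Ioo 0 T := ordConnected_Ioo.uIcc_subset h1 h2
  exact this ht

lemma nonconst_aux {u : ℝ → ℝ} (hu : Continuous u) (hp : Function.Periodic u (2 * π))
    (h : ¬ ∃ c : ℝ, u = fun _ => c) :
    ∃ t1 ∈ Ioo 0 (2 * π), ∃ t2 ∈ Ioo 0 (2 * π), u t1 ≠ u t2 := by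
  by_contra hcon
  push Not at hcon
  have hπ := pi_pos
  apply h
  refine ⟨u π, funext fun t => ?_⟩
  have hc : EqOn u (fun _ => u π) (closure (Ioo 0 (2 * π))) := by
    apply EqOn.closure _ hu continuous_const
    intro t ht
    exact hcon t ht π ⟨hπ, by linarith⟩
  rw [closure_Ioo (by positivity)] at hc
  obtain ⟨s, hs, hs'⟩ := hp.exists_mem_Ico₀ (by positivity) t
  rw [hs']
  exact hc ⟨hs.1, hs.2.le⟩

lemma to_bcf {Y : Type*} [TopologicalSpace Y] {U : Y → ℝ → ℝ} (hU : Continuous (Function.uncurry U))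
    (hp : ∀ y, Function.Periodic (U y) (2 * π)) :
    ∃ F : Y → BoundedContinuousFunction ℝ ℝ, Continuous F ∧ ∀ y t, F y t = U y t := by
  have hπ : (0:ℝ) < 2 * π := by positivity
  have hUy : ∀ y, Continuous (U y) := fun y => hU.comp (by fun_prop : Continuous fun t : ℝ => (y, t))
  have hb : ∀ y, ∃ C, ∀ t, ‖U y t‖ ≤ C := by
    intro y
    obtain ⟨C, hC⟩ := (isCompact_Icc (a := (0:ℝ)) (b := 2 * π)).exists_bound_of_continuousOn
      (hUy y).continuousOn
    refine ⟨C, fun t => ?_⟩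
    obtain ⟨s, hs, hs'⟩ := (hp y).exists_mem_Ico₀ hπ t
    rw [hs']; exact hC s ⟨hs.1, hs.2.le⟩
  choose C hC using hb
  refine ⟨fun y => BoundedContinuousFunction.ofNormedAddCommGroup (U y) (hUy y) (C y) (hC y), ?_,
    fun y t => rfl⟩
  let K : C(Y, C(Icc (0:ℝ) (2 * π), ℝ)) := ContinuousMap.curry
    ⟨fun z => U z.1 z.2, hU.comp (by fun_prop : Continuous fun z : Y × Icc (0:ℝ) (2 * π) => (z.1, (z.2:ℝ)))⟩
  rw [Metric.continuous_iff'] 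
  intro y0 ε hε
  have hK := Metric.continuous_iff'.1 K.continuous y0 (ε / 2) (by positivity)
  filter_upwards [hK] with y hy
  refine lt_of_le_of_lt ?_ (half_lt_self hε)
  rw [BoundedContinuousFunction.dist_le (by positivity)]
  intro t
  obtain ⟨n, hn⟩ : ∃ s ∈ Ico 0 (2 * π), ∃ n : ℤ, t = s + n * (2 * π) := by
    refine ⟨2 * π * Int.fract (t / (2 * π)), ⟨by positivity, ?_⟩, ⌊t / (2 * π)⌋, ?_⟩
    · nlinarith [Int.fract_lt_one (t / (2 * π))]
    · have := Int.self_sub_floor (t / (2 * π))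
      rw [← this]; field_simp; ring
  obtain ⟨hs, m, rfl⟩ := hn
  simp only [BoundedContinuousFunction.coe_ofNormedAddCommGroup]
  rw [(hp y).int_mul m, (hp y0).int_mul m]
  have h2 := ContinuousMap.dist_apply_le_dist (f := K y) (g := K y0) ⟨n, hs.1, hs.2.le⟩
  exact h2.trans hy.le

/-- admissible data -/
def Adm (g gp : ℝ → ℝ) (A : Matrix (Fin 2) (Fin 2) ℝ) (α : ℝ) :
    Set (ℝ × C(ℝ, ℝ) × C(ℝ, ℝ) × C(ℝ, ℝ)) :=
  {z | (0 ≤ z.1 ∧ z.1 ≤ 1) ∧ z.2.1 (2 * π) = z.2.1 0 ∧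
    (z.1 < 1 → ∀ t ∈ Icc 0 (2 * π), z.2.2.1 t = g (z.2.1 t)) ∧
    (z.1 < 1 → ∀ t ∈ Icc 0 (2 * π), z.2.2.2 t = gp (z.2.1 t) ^ 2) ∧
    (z.1 = 0 → ∃ t1 ∈ Ioo 0 (2 * π), ∃ t2 ∈ Ioo 0 (2 * π), z.2.1 t1 ≠ z.2.1 t2) ∧
    MonoEq z.2.2.1 A ∧ th z.2.2.1 (2 * π) = α ∧
    (∀ t ∈ Icc 0 (2 * π), 0 ≤ z.2.2.2 t) ∧ ∃ t ∈ Ioo 0 (2 * π), 0 < z.2.2.2 t}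

lemma Adm_det {g gp : ℝ → ℝ} {A : Matrix (Fin 2) (Fin 2) ℝ} {α : ℝ} (y : Adm g gp A α) :
    (GM y.1.2.2.1 y.1.2.2.2).det ≠ 0 :=
  GM_det y.1.2.2.1.continuous y.1.2.2.2.continuous y.2.2.2.2.2.2.2.2.1 y.2.2.2.2.2.2.2.2.2

def AdmDat (g gp : ℝ → ℝ) (A : Matrix (Fin 2) (Fin 2) ℝ) (α : ℝ) : Dat (Adm g gp A α) g gp A α where
  p y := y.1.1
  h y := y.1.2.1
  q y := y.1.2.2.1
  η y := y.1.2.2.2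
  G l y := GG y.1.2.2.1 y.1.2.2.2 l
  p_cont := by fun_prop
  h_cont := by unfold Function.uncurry; fun_prop
  q_cont := by unfold Function.uncurry; fun_prop
  η_cont := by unfold Function.uncurry; fun_prop
  G_cont l := GG_cont (q := fun y : Adm g gp A α => (y.1.2.2.1 : ℝ → ℝ))
    (η := fun y : Adm g gp A α => (y.1.2.2.2 : ℝ → ℝ)) (by unfold Function.uncurry; fun_prop)
    (by unfold Function.uncurry; fun_prop) Adm_det l
  p_nonneg y := y.2.1.1
  p_le y := y.2.1.2
  h_per y := y.2.2.1
  G_zero l y := by simp [GG]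
  G_end l y := by simp [GG]
  q_eq y := y.2.2.2.1
  η_eq y := y.2.2.2.2.1
  nc y := y.2.2.2.2.2.1
  mono y := y.2.2.2.2.2.2.1
  th_eq y := y.2.2.2.2.2.2.2.1
  dual y k l := GG_dual y.1.2.2.1.continuous y.1.2.2.2.continuous (Adm_det y) k l

theorem core_top {Y : Type*} [TopologicalSpace Y] [TopologicalSpace.MetrizableSpace Y]
    {g gp : ℝ → ℝ} {W : ℝ → ℝ → ℝ} {A : Matrix (Fin 2) (Fin 2) ℝ} {α : ℝ} (hA : A.det = 1)
    (hrow : ∃ r : ℝ, 0 < r ∧ A 0 0 = r * Real.cos α ∧ A 0 1 = r * Real.sin α)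
    (hW : IsW g gp W) (D : Dat Y g gp A α) :
    ∃ U : Y → ℝ → ℝ, Continuous (Function.uncurry U) ∧ ∀ y, Function.Periodic (U y) (2 * π) ∧
      (∃ t1 t2, U y t1 ≠ U y t2) ∧ MonoEq (fun t => g (U y t)) A ∧
      th (fun t => g (U y t)) (2 * π) = α ∧
      (D.p y = 0 → ∀ t ∈ Ico 0 (2 * π), U y t = D.h y t) := by
  let := TopologicalSpace.metrizableSpaceMetric Y
  exact core hA hrow hW D

section homotopy
variable {Y : Type*} [TopologicalSpace Y] [FirstCountableTopology Y] {q : Y → ℝ → ℝ}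

lemma RR_cont2 (hq : Continuous (Function.uncurry q)) :
    Continuous fun z : Y × ℝ => RR (q z.1) z.2 := by
  have h1 := v1_cont hq
  have h2 := v2_cont hq
  unfold RR; fun_prop

lemma SS_cont2 (hq : Continuous (Function.uncurry q)) :
    Continuous fun z : Y × ℝ => SS (q z.1) z.2 := by
  have h1 := v1_cont hq
  have h2 := v2_cont hq
  have h3 := d1_cont hq
  have h4 := d2_cont hq
  unfold SS; fun_prop

lemma f_cont2 (hq : Continuous (Function.uncurry q)) :
    Continuous (fun z : Y × ℝ => f0 (q z.1) z.2) ∧ Continuous (fun z : Y × ℝ => f1 (q z.1) z.2) ∧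
    Continuous (fun z : Y × ℝ => f2 (q z.1) z.2) := by
  have h1 := RR_cont2 hq
  have h2 := SS_cont2 hq
  have h3 := d1_cont hq
  have h4 := d2_cont hq
  have h5 : Continuous fun z : Y × ℝ => q z.1 z.2 := hq
  have hp : ∀ z : Y × ℝ, RR (q z.1) z.2 ≠ 0 := fun z => (RR_pos
    (hq.comp (by fun_prop : Continuous fun t : ℝ => (z.1, t))) z.2).ne'
  have hp2 : ∀ z : Y × ℝ, RR (q z.1) z.2 ^ 2 ≠ 0 := fun z => pow_ne_zero _ (hp z)
  have hp3 : ∀ z : Y × ℝ, RR (q z.1) z.2 ^ 3 ≠ 0 := fun z => pow_ne_zero _ (hp z)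
  refine ⟨?_, ?_, ?_⟩
  · unfold f0; fun_prop (disch := assumption)
  · unfold f1; fun_prop (disch := assumption)
  · unfold f2; fun_prop (disch := assumption)

end homotopy

theorem homo {g gp : ℝ → ℝ} (hgc : Continuous g) (hgpc : Continuous gp) (hgp : gp = deriv g)
    (hnf' : NowhereFlat g) {A : Matrix (Fin 2) (Fin 2) ℝ} (hA : A.det = 1) {α : ℝ}
    (hrow : ∃ r : ℝ, 0 < r ∧ A 0 0 = r * Real.cos α ∧ A 0 1 = r * Real.sin α)
    (L : Set (BoundedContinuousFunction ℝ ℝ))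
    (hmem : ∀ u ∈ L, Function.Periodic ⇑u (2 * π) ∧ (¬ ∃ c : ℝ, ⇑u = fun _ => c) ∧
      MonoEq (fun t => g (u t)) A ∧ th (fun t => g (u t)) (2*π) = α)
    {φ φ' φ'' : ℝ → ℝ} (hφ : IsPhi A α φ φ' φ'') :
    ∃ H : unitInterval × L → Adm g gp A α, Continuous H ∧
      (∀ u, (H (0, u)).1.1 = 0 ∧ ∀ t, (H (0, u)).1.2.1 t = u.1 t) ∧
      ∀ u, (H (1, u)).1 = ((1:ℝ), (0 : C(ℝ, ℝ)), (⟨_, hφ.qcont⟩ : C(ℝ, ℝ)), (1 : C(ℝ, ℝ))) := by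
  let qq : L → ℝ → ℝ := fun u t => g (u.1 t)
  have hqq : Continuous (Function.uncurry qq) := by
    simp only [qq]; unfold Function.uncurry; fun_prop
  have hqu : ∀ u : L, Continuous (qq u) := fun u => hgc.comp u.1.continuous
  have hphi : ∀ u : L, IsPhi A α (f0 (qq u)) (f1 (qq u)) (f2 (qq u)) := by
    intro u
    have := hmem u.1 u.2
    exact f_isPhi (hqu u) this.2.2.1 this.2.2.2
  let sg : unitInterval → ℝ := fun τ => max 0 (2 * (τ:ℝ) - 1)
  have hsg : Continuous sg := by simp only [sg]; fun_prop
  have sg0 : ∀ τ, 0 ≤ sg τ := fun τ => le_max_left _ _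
  have sg1 : ∀ τ, sg τ ≤ 1 := fun τ => max_le zero_le_one (by linarith [τ.2.2])
  have hmix : ∀ (u : L) (τ : unitInterval), IsPhi A α (fun t => (1 - sg τ) * f0 (qq u) t + sg τ * φ t)
      (fun t => (1 - sg τ) * f1 (qq u) t + sg τ * φ' t)
      (fun t => (1 - sg τ) * f2 (qq u) t + sg τ * φ'' t) := fun u τ => (hphi u).mix hφ (sg0 τ) (sg1 τ)
  obtain ⟨k0, k1, k2⟩ := f_cont2 (Y := unitInterval × L) (q := fun y => qq y.2)
    (by simp only [qq]; unfold Function.uncurry; fun_prop)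
  have hφ0 := hφ.cc.1
  have hφ1 := hφ.cc.2
  have hφ2 := hφ.c2
  have hev : Continuous fun z : (unitInterval × L) × ℝ => z.1.2.1 z.2 := by fun_prop
  let hh : C(unitInterval × L, C(ℝ, ℝ)) := ContinuousMap.curry
    ⟨fun z => (1 - sg z.1.1) * z.1.2.1 z.2, by fun_prop⟩
  let ηη : C(unitInterval × L, C(ℝ, ℝ)) := ContinuousMap.curry
    ⟨fun z => (1 - sg z.1.1) * gp (z.1.2.1 z.2) ^ 2 + sg z.1.1, by fun_prop⟩
  let qs : C(unitInterval × L, C(ℝ, ℝ)) := ContinuousMap.curry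
    ⟨fun z => Qf ((1 - sg z.1.1) * f0 (qq z.1.2) z.2 + sg z.1.1 * φ z.2)
      ((1 - sg z.1.1) * f1 (qq z.1.2) z.2 + sg z.1.1 * φ' z.2)
      ((1 - sg z.1.1) * f2 (qq z.1.2) z.2 + sg z.1.1 * φ'' z.2), by
      have hp : ∀ z : (unitInterval × L) × ℝ,
          (1 - sg z.1.1) * f0 (qq z.1.2) z.2 + sg z.1.1 * φ z.2 ≠ 0 := fun z =>
        ((hmix z.1.2 z.1.1).pos z.2).ne'
      unfold Qf
      fun_prop (disch := assumption)⟩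
  let pp : unitInterval × L → ℝ := fun z => min 1 (2 * (z.1:ℝ))
  have hpp : Continuous pp := by simp only [pp]; fun_prop
  have hsg0 : ∀ z : unitInterval × L, pp z < 1 → sg z.1 = 0 := by
    intro z hz
    have : 2 * (z.1:ℝ) < 1 := by
      rcases min_lt_iff.1 hz with h | h
      · exact absurd h (lt_irrefl _)
      · exact h
    exact max_eq_left (by linarith)
  have hadm : ∀ z : unitInterval × L, (pp z, hh z, qs z, ηη z) ∈ Adm g gp A α := by
    intro z
    have hz := hmem z.2.1 z.2.2
    have hnc := nonconst_aux z.2.1.continuous hz.1 hz.2.1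
    have hpath := phi_path hA hrow (hmix z.2 z.1)
    have s0 := sg0 z.1
    have s1 : 0 ≤ 1 - sg z.1 := by linarith [sg1 z.1]
    refine ⟨⟨le_min zero_le_one (by have := z.1.2.1; positivity), min_le_left _ _⟩, ?_, ?_, ?_, ?_,
      hpath.1, hpath.2, ?_, ?_⟩
    · change (1 - sg z.1) * z.2.1 (2 * π) = (1 - sg z.1) * z.2.1 0
      rw [hz.1.eq]
    · intro h t _
      change Qf ((1 - sg z.1) * f0 (qq z.2) t + sg z.1 * φ t)
        ((1 - sg z.1) * f1 (qq z.2) t + sg z.1 * φ' t)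
        ((1 - sg z.1) * f2 (qq z.2) t + sg z.1 * φ'' t) = g ((1 - sg z.1) * z.2.1 t)
      rw [hsg0 z h]
      simp only [sub_zero, one_mul, zero_mul, add_zero]
      exact f_Qf (hqu z.2) t
    · intro h t _
      change (1 - sg z.1) * gp (z.2.1 t) ^ 2 + sg z.1 = gp ((1 - sg z.1) * z.2.1 t) ^ 2
      rw [hsg0 z h]
      simp
    · intro h
      obtain ⟨t1, h1, t2, h2, h3⟩ := hnc
      refine ⟨t1, h1, t2, h2, ?_⟩
      change (1 - sg z.1) * z.2.1 t1 ≠ (1 - sg z.1) * z.2.1 t2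
      rw [hsg0 z (by change pp z = 0 at h; rw [h]; exact zero_lt_one)]
      simpa using h3
    · intro t _
      change 0 ≤ (1 - sg z.1) * gp (z.2.1 t) ^ 2 + sg z.1
      positivity
    · obtain ⟨t1, h1, t2, h2, h3⟩ := hnc
      obtain ⟨t, ht, ht'⟩ := flat_comp hnf' z.2.1.continuous h1 h2 h3
      rw [← hgp] at ht'
      refine ⟨t, ht, ?_⟩
      change 0 < (1 - sg z.1) * gp (z.2.1 t) ^ 2 + sg z.1
      have hpos : 0 < gp (z.2.1 t) ^ 2 := by positivity
      rcases eq_or_lt_of_le s0 with h | h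
      · rw [← h]; simpa using hpos
      · positivity
  let H : unitInterval × L → Adm g gp A α := fun z => ⟨(pp z, hh z, qs z, ηη z), hadm z⟩
  have hH : Continuous H := by
    refine Continuous.subtype_mk ?_ _
    exact hpp.prodMk (hh.continuous.prodMk (qs.continuous.prodMk ηη.continuous))
  refine ⟨H, hH, fun u => ?_, fun u => ?_⟩
  · have e0 : pp (0, u) = 0 := by simp [pp]
    refine ⟨e0, fun t => ?_⟩
    change (1 - sg 0) * u.1 t = u.1 t
    rw [hsg0 (0, u) (by rw [e0]; exact zero_lt_one)]
    simp
  · have e1 : sg 1 = 1 := by simp only [sg]; norm_num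
    have a1 : pp (1, u) = 1 := by simp only [pp]; norm_num
    have a2 : hh (1, u) = 0 := by
      ext t
      change (1 - sg 1) * u.1 t = 0
      rw [e1]; simp
    have a3 : qs (1, u) = ⟨_, hφ.qcont⟩ := by
      ext t
      change Qf ((1 - sg 1) * f0 (qq u) t + sg 1 * φ t)
        ((1 - sg 1) * f1 (qq u) t + sg 1 * φ' t)
        ((1 - sg 1) * f2 (qq u) t + sg 1 * φ'' t) = Qf (φ t) (φ' t) (φ'' t)
      rw [e1]; simp
    have a4 : ηη (1, u) = 1 := by
      ext t
      change (1 - sg 1) * gp (u.1 t) ^ 2 + sg 1 = 1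
      rw [e1]; simp
    change (pp (1, u), hh (1, u), qs (1, u), ηη (1, u)) = _
    rw [a1, a2, a3, a4]

theorem main (f : ℝ → ℝ) (hf : ContDiff ℝ (⊤ : ℕ∞) f)
    (hsurj : Function.Surjective (deriv f)) (hnf : NowhereFlat (deriv f))
    (A : Matrix (Fin 2) (Fin 2) ℝ) (hA : A.det = 1)
    (α : ℝ) (hα : 0 < α)
    (hrow : ∃ r : ℝ, 0 < r ∧ A 0 0 = r * Real.cos α ∧ A 0 1 = r * Real.sin α) :
    (levelSet f A α).Nonempty ∧ ContractibleSpace (levelSet f A α) := by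
  have hf1 : ContDiff ℝ (⊤ : ℕ∞) (deriv f) := hf.deriv' 
  have hf2 : ContDiff ℝ (⊤ : ℕ∞) (deriv (deriv f)) := hf1.deriv'
  obtain ⟨g, hg⟩ : ∃ g, g = deriv f := ⟨_, rfl⟩
  obtain ⟨gp, hgp⟩ : ∃ gp, gp = deriv g := ⟨_, rfl⟩
  have hgc : Continuous g := hg ▸ hf1.continuous
  have hgpc : Continuous gp := hgp ▸ hg ▸ hf2.continuous
  have hd : ∀ x, HasDerivAt g (gp x) x := fun x => by
    rw [hgp]
    exact ((hg ▸ hf1.differentiable (by simp) : Differentiable ℝ g) x).hasDerivAt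
  have hnf' : NowhereFlat g := hg ▸ hnf
  have hx : ∃ x, gp x ≠ 0 := by
    obtain ⟨x, _, hx⟩ := flat_aux hnf' (zero_lt_one)
    exact ⟨x, hgp ▸ hx⟩
  obtain ⟨W, w1, w2, w3, w4⟩ := exists_W g gp hgc (hg ▸ hsurj) hgpc hx
  have hW : IsW g gp W := ⟨hgc, hgpc, hd, w1, w2, w3, fun l => (w4 l).1, fun l => (w4 l).2.1,
    fun l => (w4 l).2.2⟩
  have hmem : ∀ u : BoundedContinuousFunction ℝ ℝ, u ∈ levelSet f A α ↔ Function.Periodic ⇑u (2 * π) ∧ (¬ ∃ c : ℝ, ⇑u = fun _ => c) ∧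
      MonoEq (fun t => g (u t)) A ∧ th (fun t => g (u t)) (2*π) = α := by
    subst hg; exact mem_level_iff hgc
  obtain ⟨U, hU, hUp⟩ := core_top hA hrow hW (AdmDat g gp A α)
  obtain ⟨F, hF, hFU⟩ := to_bcf hU fun y => (hUp y).1
  have hFL : ∀ y, F y ∈ levelSet f A α := by
    intro y
    have e : (F y : ℝ → ℝ) = U y := funext (hFU y)
    rw [hmem, e]
    obtain ⟨a, ⟨t1, t2, ht⟩, c, d, _⟩ := hUp y
    refine ⟨a, ?_, c, d⟩
    rintro ⟨k, hk⟩
    exact ht (by rw [hk])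
  have hF0 : ∀ (y : Adm g gp A α) (u : levelSet f A α), y.1.1 = 0 → (∀ t, y.1.2.1 t = u.1 t) → F y = u.1 := by
    intro y u h0 h1
    ext t
    obtain ⟨a, _, _, _, b⟩ := hUp y
    have hup := ((hmem u.1).1 u.2).1
    have hper : Function.Periodic (fun t => F y t - u.1 t) (2 * π) := by
      intro t
      simp only [hFU]
      rw [a t, hup t]
    obtain ⟨s, hs, hs'⟩ := hper.exists_mem_Ico₀ (by positivity) t
    have h2 : F y s = u.1 s := by rw [hFU, b h0 s hs]; exact h1 s
    rw [h2, sub_self] at hs'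
    linarith
  obtain ⟨φ, φ', φ'', hφ⟩ := exists_phi hα hrow
  -- the end point
  have hstar := phi_path hA hrow hφ
  have hzs : ((1:ℝ), (0 : C(ℝ, ℝ)), (⟨_, hφ.qcont⟩ : C(ℝ, ℝ)), (1 : C(ℝ, ℝ))) ∈ Adm g gp A α := by
    refine ⟨⟨by norm_num, le_rfl⟩, rfl, ?_, ?_, ?_, hstar.1, hstar.2, ?_, π, ⟨pi_pos, ?_⟩, ?_⟩
    · intro h; exact absurd h (lt_irrefl _)
    · intro h; exact absurd h (lt_irrefl _)
    · intro h; exact absurd h one_ne_zero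
    · intro t _; simp
    · linarith [pi_pos]
    · simp
  refine ⟨⟨_, hFL ⟨_, hzs⟩⟩, ?_⟩
  obtain ⟨H, hH, H0, H1⟩ := homo hgc hgpc hgp hnf' hA hrow (levelSet f A α)
    (fun u hu => (hmem u).1 hu) hφ
  rw [contractible_iff_id_nullhomotopic]
  refine ⟨⟨_, hFL ⟨_, hzs⟩⟩, ⟨⟨⟨fun z => ⟨F (H z), hFL _⟩, (hF.comp hH).subtype_mk _⟩, ?_, ?_⟩⟩⟩
  · intro u
    apply Subtype.ext
    exact hF0 _ _ (H0 u).1 (H0 u).2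
  · intro u
    apply Subtype.ext
    exact congrArg F (Subtype.ext (H1 u))

end
end Mono

/-- Theorem 4.1. For `f` smooth with `f'` surjective and nowhere
flat, the level set of the nonlinear monodromy map over any element of `G₀` — encoded by
`A ∈ SL(2,ℝ)` and a compatible winding `α > 0` — inside the nonconstant continuous
`2π`-periodic functions with the sup-norm topology, is nonempty and contractible. -/
theorem stmt_15 (f : ℝ → ℝ) (hf : ContDiff ℝ (⊤ : ℕ∞) f)
    (hsurj : Function.Surjective (deriv f)) (hnf : NowhereFlat (deriv f))
    (A : Matrix (Fin 2) (Fin 2) ℝ) (hA : A.det = 1)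
    (α : ℝ) (hα : 0 < α)
    (hrow : ∃ r : ℝ, 0 < r ∧ A 0 0 = r * Real.cos α ∧ A 0 1 = r * Real.sin α) :
    (levelSet f A α).Nonempty ∧ ContractibleSpace (levelSet f A α) := by
  exact Mono.main f hf hsurj hnf A hA α hα hrow
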